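/- arXiv:2306.03720 — 2 statements merged into one kernel-verified Lean document; each statement's English description precedes it below -/
import Mathlib

section
/- Assume d ≥ 2, 2 < p < 2_s^⋆, and let (g_ε) be (s,γ)-admissible for some s > d/(d+1) and γ > 1. Let (δ_ε)_{ε>0} be positive numbers with δ_ε → 0 as ε → 0⁺. For each ε ∈ (0,1) let u_ε ∈ H^s(ℝ^d) be nonzero with q_ε(u_ε)/‖u_ε‖_{L^p}² = R^∘_ε(p), and decompose u_ε = v_ε + w_ε where v̂_ε = 1_{A_{ε,δ_ε}} û_ε and ŵ_ε = (1 − 1_{A_{ε,δ_ε}}) û_ε. Then, as ε → 0⁺, ‖w_ε‖_{L^p}/‖v_ε‖_{L^p} → 0 and q_ε(w_ε)/q_ε(v_ε) → 0 (in particular v_ε ≠ 0 for all sufficiently small ε). -/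
open MeasureTheory Real Filter
open scoped ENNReal FourierTransform RealInnerProductSpace Topology

noncomputable section

/-- Euclidean space `ℝ^d`. -/
abbrev Rd (d : ℕ) : Type := EuclideanSpace ℝ (Fin d)

/-- `U` is the (distributional, hence `L²`-) Fourier transform of `u`:
it pairs against Schwartz functions the way the Fourier transform of `u` must. -/
def IsFT {d : ℕ} (U u : Rd d → ℂ) : Prop :=
  ∀ φ : SchwartzMap (Rd d) ℂ, ∫ ξ, U ξ * φ ξ = ∫ x, u x * 𝓕 (⇑φ) x

/-- An element of `H^s(ℝ^d)`: an `L²` function `toFun` together with its Fourier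
transform `ft`, satisfying the `H^s` integrability condition. -/
structure HsFn (d : ℕ) (s : ℝ) where
  toFun : Rd d → ℂ
  ft : Rd d → ℂ
  memL2 : MemLp toFun 2 volume
  ft_memL2 : MemLp ft 2 volume
  isFT : IsFT ft toFun
  memHs : Integrable (fun ξ : Rd d => ‖ft ξ‖ ^ 2 * (1 + ‖ξ‖ ^ 2) ^ s) volume

/-- The quadratic form `q_ε(u) = ∫ |û(ξ)|² g(|ξ|) dξ` (for a fixed symbol `g`). -/
def qeps {d : ℕ} {s : ℝ} (g : ℝ → ℝ) (u : HsFn d s) : ℝ :=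
  ∫ ξ : Rd d, ‖u.ft ξ‖ ^ 2 * g ‖ξ‖

/-- The `L^p` norm (as a real number). -/
def LpN {d : ℕ} (p : ℝ) (f : Rd d → ℂ) : ℝ :=
  (eLpNorm f (ENNReal.ofReal p) volume).toReal

/-- The set of values of the Rayleigh quotient `q_ε(u)/‖u‖_p²` over nonzero
`u ∈ H^s` satisfying the symmetry constraint `P`. -/
def RayleighSet (d : ℕ) (s p : ℝ) (g : ℝ → ℝ) (P : (Rd d → ℂ) → Prop) : Set ℝ :=
  {t | ∃ u : HsFn d s, P u.toFun ∧ ¬ u.toFun =ᵐ[volume] (fun _ => (0 : ℂ)) ∧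
      MemLp u.toFun (ENNReal.ofReal p) volume ∧
      t = qeps g u / LpN p u.toFun ^ 2}

/-- The Rayleigh quotient infimum. -/
def Rayleigh (d : ℕ) (s p : ℝ) (g : ℝ → ℝ) (P : (Rd d → ℂ) → Prop) : ℝ :=
  sInf (RayleighSet d s p g P)

/-- The Rayleigh quotient infimum is attained. -/
def Attained (d : ℕ) (s p : ℝ) (g : ℝ → ℝ) (P : (Rd d → ℂ) → Prop) : Prop :=
  ∃ u : HsFn d s, P u.toFun ∧ ¬ u.toFun =ᵐ[volume] (fun _ => (0 : ℂ)) ∧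
      MemLp u.toFun (ENNReal.ofReal p) volume ∧
      qeps g u / LpN p u.toFun ^ 2 = Rayleigh d s p g P

/-- A radial function. -/
def Radial {d : ℕ} (f : Rd d → ℂ) : Prop := ∀ x y : Rd d, ‖x‖ = ‖y‖ → f x = f y

/-- The squared norm of the first block of coordinates (the first `d - k` ones),
under the identification `ℝ^d = ℝ^{d-k} × ℝ^k`. -/
def blockSq (d k : ℕ) (x : Rd d) : ℝ := ∑ i : Fin d, if (i : ℕ) < d - k then x i ^ 2 else 0

/-- A `G_k = O(d-k) × O(k)`-symmetric function: it depends only on the norms of the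
two blocks of coordinates. -/
def GkSymmetric (d k : ℕ) (f : Rd d → ℂ) : Prop :=
  ∀ x y : Rd d, blockSq d k x = blockSq d k y → ‖x‖ = ‖y‖ → f x = f y

/-- An `(s,γ)`-admissible family of symbols, with admissibility constants `c, C`. -/
def IsAdmissible (s γ c C : ℝ) (g : ℝ → ℝ → ℝ) : Prop :=
  (∀ ε ∈ Set.Ioo (0:ℝ) 1, Measurable (g ε)) ∧
  (∀ ε ∈ Set.Ioo (0:ℝ) 1, ∀ r : ℝ, 0 < g ε r) ∧
  (∀ ε ∈ Set.Ioo (0:ℝ) 1, ∀ r : ℝ, 1/2 ≤ |r - 1| →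
      c * (1 + |r| ^ (2*s)) ≤ g ε r ∧ g ε r ≤ C * (1 + |r| ^ (2*s))) ∧
  (∀ ε ∈ Set.Ioo (0:ℝ) 1, ∀ r : ℝ, |r - 1| ≤ 1/2 →
      c * (ε + |r - 1| ^ γ) ≤ g ε r ∧ g ε r ≤ C * (ε + |r - 1| ^ γ))

/-- The `G_k`-symmetric Stein–Tomas exponent `2_⋆^k`. -/
def twoStarK (d k : ℕ) : ℝ :=
  2 * ((d : ℝ) + (min k (d - k) : ℕ)) / ((d : ℝ) - 2 + (min k (d - k) : ℕ))

/-- The interpolation parameter `α_k`. -/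
def alphaK (d k : ℕ) (p : ℝ) : ℝ := (1/2 - 1/p) / (1/2 - 1/twoStarK d k)

/-- The spherical shell `A_{ε,δ}` around the unit sphere (with `I_{ε,δ}` scale `ε^{1/γ}`). -/
def Aset (d : ℕ) (γ ε δ : ℝ) : Set (Rd d) :=
  {ξ | δ * ε ^ (1/γ) ≤ |‖ξ‖ - 1| ∧ |‖ξ‖ - 1| ≤ δ⁻¹ * ε ^ (1/γ)}

namespace S6

open scoped SchwartzMap ContDiff

variable {d : ℕ}

/-- Uniqueness: equal distributional pairings imply a.e. equality. -/
lemma ae_eq_of_pairing {f g : Rd d → ℂ} (hf : LocallyIntegrable f volume)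
    (hg : LocallyIntegrable g volume)
    (h : ∀ φ : SchwartzMap (Rd d) ℂ, ∫ x, f x * 𝓕 (⇑φ) x = ∫ x, g x * 𝓕 (⇑φ) x) :
    f =ᵐ[volume] g := by
  apply ae_eq_of_integral_contDiff_smul_eq hf hg
  intro k k_smooth k_cpt
  have hg₁ : HasCompactSupport (Complex.ofRealCLM ∘ k) := k_cpt.comp_left rfl
  have hg₂ : ContDiff ℝ ∞ (Complex.ofRealCLM ∘ k) := by fun_prop
  have h1 := h (𝓕⁻ (hg₁.toSchwartzMap hg₂))
  rw [← SchwartzMap.fourier_coe, FourierTransform.fourier_fourierInv_eq] at h1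
  simpa [mul_comm] using h1

lemma isFT_fourierInv_L1 {U : Rd d → ℂ} (hU : Integrable U volume) :
    IsFT U (𝓕⁻ U) := by
  intro φ
  have key := VectorFourier.integral_fourierIntegral_smul_eq_flip (L := innerₗ (Rd d)) (μ := volume)
    (ν := volume) (f := fun ξ => U (-ξ)) (g := fun ξ => 𝓕 (⇑φ) ξ)
    continuous_fourierChar continuous_inner hU.comp_neg (𝓕 φ).integrable
  have e1 : ∀ x, 𝓕⁻ U x = VectorFourier.fourierIntegral 𝐞 volume (innerₗ (Rd d)) (fun ξ => U (-ξ)) x := by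
    intro x
    rw [Real.fourierInv_eq_fourier_comp_neg]; rfl
  have e2 : ∀ x, VectorFourier.fourierIntegral 𝐞 volume (innerₗ (Rd d)).flip (fun ξ => 𝓕 (⇑φ) ξ) x
      = φ (-x) := by
    intro x
    have : 𝓕⁻ (𝓕 φ) (-x) = φ (-x) := by rw [FourierTransform.fourierInv_fourier_eq]
    rw [← this, SchwartzMap.fourierInv_coe, Real.fourierInv_eq_fourier_neg, neg_neg]
    simp; rfl
  simp only [← e1, e2, smul_eq_mul] at key
  rw [key]
  exact (integral_neg_eq_self (fun x => U x * φ x) volume).symm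

lemma isFT_L2 (U : Lp (α := Rd d) ℂ 2 volume) :
    IsFT (⇑U) (⇑(𝓕⁻ U : Lp (α := Rd d) ℂ 2 volume)) := by
  intro φ
  have h := MeasureTheory.Lp.fourier_toTemperedDistribution_eq (𝓕⁻ U : Lp (α := Rd d) ℂ 2 volume)
  rw [FourierTransform.fourier_fourierInv_eq] at h
  have h2 := congrArg (fun T => T φ) h
  simp only [TemperedDistribution.fourier_apply, Lp.toTemperedDistribution_apply] at h2
  rw [SchwartzMap.fourier_coe] at h2
  simpa [mul_comm] using h2.symm

lemma isFT_congr_left {U V u : Rd d → ℂ} (h : U =ᵐ[volume] V) (hU : IsFT U u) : IsFT V u := by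
  intro φ
  rw [← hU φ]
  apply integral_congr_ae
  filter_upwards [h] with x hx
  rw [hx]

lemma isFT_congr_right {U u w : Rd d → ℂ} (h : u =ᵐ[volume] w) (hU : IsFT U u) : IsFT U w := by
  intro φ
  rw [hU φ]
  apply integral_congr_ae
  filter_upwards [h] with x hx
  rw [hx]

lemma isFT_unique {U u w : Rd d → ℂ} (hu : LocallyIntegrable u volume)
    (hw : LocallyIntegrable w volume) (h1 : IsFT U u) (h2 : IsFT U w) : u =ᵐ[volume] w :=
  ae_eq_of_pairing hu hw fun φ => by rw [← h1 φ, ← h2 φ]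

lemma MemLp.locInt {u : Rd d → ℂ} (hu : MemLp u 2 volume) : LocallyIntegrable u volume :=
  hu.locallyIntegrable (by norm_num)

/-- Plancherel for pairs. -/
lemma plancherel {U u : Rd d → ℂ} (hU : MemLp U 2 volume) (hu : LocallyIntegrable u volume)
    (h : IsFT U u) : MemLp u 2 volume ∧ eLpNorm u 2 volume = eLpNorm U 2 volume := by
  set T := hU.toLp U
  have hT : IsFT U (⇑(𝓕⁻ T : Lp (α := Rd d) ℂ 2 volume)) :=
    isFT_congr_left hU.coeFn_toLp (isFT_L2 T)
  have hm : MemLp (⇑(𝓕⁻ T : Lp (α := Rd d) ℂ 2 volume)) 2 volume := Lp.memLp _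
  have hae := isFT_unique (MemLp.locInt hm) hu hT h
  refine ⟨(memLp_congr_ae hae).1 hm, ?_⟩
  rw [← eLpNorm_congr_ae hae]
  have hn : ‖(𝓕⁻ T : Lp (α := Rd d) ℂ 2 volume)‖ = ‖T‖ := by
    rw [← Lp.norm_fourier_eq (𝓕⁻ T), FourierTransform.fourier_fourierInv_eq]
  rw [Lp.norm_def, Lp.norm_def, ENNReal.toReal_eq_toReal_iff' (Lp.eLpNorm_ne_top _) (Lp.eLpNorm_ne_top _)] at hn
  rw [hn]
  exact eLpNorm_congr_ae hU.coeFn_toLp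

lemma continuous_fourierInv {U : Rd d → ℂ} (hU : Integrable U volume) : Continuous (𝓕⁻ U) := by
  rw [Real.fourierInv_eq_fourier_comp_neg]
  exact VectorFourier.fourierIntegral_continuous continuous_fourierChar continuous_inner hU.comp_neg

lemma norm_fourierInv_le (U : Rd d → ℂ) (x : Rd d) : ‖𝓕⁻ U x‖ ≤ ∫ ξ, ‖U ξ‖ := by
  rw [Real.fourierInv_eq']
  refine (norm_integral_le_integral_norm _).trans (le_of_eq ?_)
  congr 1; ext ξ
  rw [norm_smul]
  have : ‖Complex.exp (↑(2 * π * ⟪ξ, x⟫) * Complex.I)‖ = 1 := Complex.norm_exp_ofReal_mul_I _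
  rw [this, one_mul]

lemma fourierInv_L2 {U : Rd d → ℂ} (h1 : Integrable U volume) (h2 : MemLp U 2 volume) :
    MemLp (𝓕⁻ U) 2 volume ∧ eLpNorm (𝓕⁻ U) 2 volume = eLpNorm U 2 volume :=
  plancherel h2 (continuous_fourierInv h1).locallyIntegrable (isFT_fourierInv_L1 h1)

end S6

namespace S6

variable {d : ℕ}

/-- `L²` functions with bounded support. -/
def BL (U : Rd d → ℂ) : Prop := MemLp U 2 volume ∧ ∃ ρ : ℝ, ∀ ξ, ρ < ‖ξ‖ → U ξ = 0

/-- squared `L²` norm. -/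
def Q (U : Rd d → ℂ) : ℝ := ∫ ξ, ‖U ξ‖ ^ 2

/-- `L^p` norm of the inverse Fourier transform. -/
def P (p : ℝ) (U : Rd d → ℂ) : ℝ := LpN p (𝓕⁻ U)

lemma Q_nonneg (U : Rd d → ℂ) : 0 ≤ Q U := integral_nonneg fun _ => by positivity

lemma P_nonneg (p : ℝ) (U : Rd d → ℂ) : 0 ≤ P p U := ENNReal.toReal_nonneg

lemma sq_integrable {U : Rd d → ℂ} (h : MemLp U 2 volume) :
    Integrable (fun ξ => ‖U ξ‖ ^ 2) volume := by
  simpa using h.integrable_norm_rpow (by norm_num) (by norm_num)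

lemma BL.integrable {U : Rd d → ℂ} (h : BL U) : Integrable U volume := by
  obtain ⟨h2, ρ, hρ⟩ := h
  have hs : Function.support U ⊆ Metric.closedBall 0 ρ := by
    intro ξ hξ
    by_contra hc
    apply hξ
    apply hρ
    simpa using hc
  rw [← integrableOn_iff_integrable_of_support_subset hs]
  have h3 : MemLp U 2 (volume.restrict (Metric.closedBall (0 : Rd d) ρ)) := h2.restrict _
  have : IsFiniteMeasure (volume.restrict (Metric.closedBall (0 : Rd d) ρ)) :=
    ⟨by simpa using measure_closedBall_lt_top⟩
  exact h3.integrable (by norm_num)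

lemma BL.add {U V : Rd d → ℂ} (hU : BL U) (hV : BL V) : BL (fun ξ => U ξ + V ξ) := by
  obtain ⟨h2, ρ, hρ⟩ := hU
  obtain ⟨h2', ρ', hρ'⟩ := hV
  refine ⟨h2.add h2', max ρ ρ', fun ξ hξ => ?_⟩
  show U ξ + V ξ = 0
  rw [hρ ξ (lt_of_le_of_lt (le_max_left _ _) hξ), hρ' ξ (lt_of_le_of_lt (le_max_right _ _) hξ), add_zero]

lemma BL.zero : BL (fun _ : Rd d => (0:ℂ)) := ⟨MemLp.zero, 0, fun _ _ => rfl⟩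

lemma BL.sum {ι : Type*} (J : Finset ι) {U : ι → Rd d → ℂ} (hU : ∀ i ∈ J, BL (U i)) :
    BL (fun ξ => ∑ i ∈ J, U i ξ) := by
  classical
  induction J using Finset.induction_on with
  | empty => simpa using BL.zero
  | insert a s ha ih =>
    simp only [Finset.sum_insert ha]
    exact (hU a (Finset.mem_insert_self _ _)).add (ih fun i hi => hU i (Finset.mem_insert_of_mem hi))

lemma BL.const_mul {U : Rd d → ℂ} (hU : BL U) (a : ℂ) : BL (fun ξ => a * U ξ) := by
  obtain ⟨h2, ρ, hρ⟩ := hU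
  exact ⟨h2.const_mul a, ρ, fun ξ hξ => by simp [hρ ξ hξ]⟩

lemma BL.indicator {U : Rd d → ℂ} (hU : BL U) {A : Set (Rd d)} (hA : MeasurableSet A) :
    BL (A.indicator U) := by
  obtain ⟨h2, ρ, hρ⟩ := hU
  refine ⟨h2.indicator hA, ρ, fun ξ hξ => ?_⟩
  by_cases h : ξ ∈ A <;> simp [h, hρ ξ hξ]

lemma BL.shift {U : Rd d → ℂ} (hU : BL U) (a : Rd d) : BL (fun ξ => U (ξ - a)) := by
  obtain ⟨h2, ρ, hρ⟩ := hU
  refine ⟨h2.comp_measurePreserving (measurePreserving_sub_right volume a), ρ + ‖a‖, fun ξ hξ => ?_⟩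
  apply hρ
  have := norm_sub_norm_le ξ a
  linarith

lemma BL.L2 {U : Rd d → ℂ} (hU : BL U) :
    MemLp (𝓕⁻ U) 2 volume ∧ eLpNorm (𝓕⁻ U) 2 volume = eLpNorm U 2 volume :=
  fourierInv_L2 hU.integrable hU.1

lemma Q_eq {U : Rd d → ℂ} (h : MemLp U 2 volume) : Q U = (eLpNorm U 2 volume).toReal ^ 2 := by
  have := h.eLpNorm_eq_integral_rpow_norm (by norm_num) (by norm_num)
  rw [this, ENNReal.toReal_ofReal (by positivity)]
  simp only [ENNReal.toReal_ofNat, Real.rpow_two]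
  rw [← Real.rpow_natCast, ← Real.rpow_mul (integral_nonneg fun _ => by positivity)]
  simp [Q]

lemma BL.plancherel {U : Rd d → ℂ} (hU : BL U) : Q (𝓕⁻ U) = Q U := by
  rw [Q_eq hU.L2.1, Q_eq hU.1, hU.L2.2]

lemma BL.memLp {U : Rd d → ℂ} (hU : BL U) {p : ℝ} (hp : 2 < p) :
    MemLp (𝓕⁻ U) (ENNReal.ofReal p) volume := by
  have hm : AEStronglyMeasurable (𝓕⁻ U) volume := hU.L2.1.1
  rw [← integrable_norm_rpow_iff hm (by simp; linarith) (by simp), ENNReal.toReal_ofReal (by linarith)]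
  refine ((sq_integrable hU.L2.1).const_mul ((∫ ξ, ‖U ξ‖) ^ (p - 2))).mono'
    (hm.norm.aemeasurable.pow_const p).aestronglyMeasurable (Eventually.of_forall fun x => ?_)
  rw [Real.norm_of_nonneg (by positivity)]
  have hx := norm_fourierInv_le U x
  calc ‖𝓕⁻ U x‖ ^ p = ‖𝓕⁻ U x‖ ^ (p - 2) * ‖𝓕⁻ U x‖ ^ 2 := by
        rw [← Real.rpow_two, ← Real.rpow_add_of_nonneg (norm_nonneg _) (by linarith) (by norm_num)]
        congr 1; ring
    _ ≤ _ := by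
        gcongr

lemma BL.P_rpow {U : Rd d → ℂ} (hU : BL U) {p : ℝ} (hp : 2 < p) :
    P p U ^ p = ∫ x, ‖𝓕⁻ U x‖ ^ p := by
  have h := (hU.memLp hp).eLpNorm_eq_integral_rpow_norm (by simp; linarith) (by simp)
  rw [P, LpN, h, ENNReal.toReal_ofReal (by positivity), ENNReal.toReal_ofReal (by linarith),
    ← Real.rpow_mul (integral_nonneg fun _ => by positivity), inv_mul_cancel₀ (by linarith), Real.rpow_one]

lemma fourierInv_add {U V : Rd d → ℂ} (hU : Integrable U volume) (hV : Integrable V volume) :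
    𝓕⁻ (fun ξ => U ξ + V ξ) = fun x => 𝓕⁻ U x + 𝓕⁻ V x := by
  ext x
  simp only [Real.fourierInv_eq]
  rw [← integral_add]
  · simp only [smul_add]
  · have := (Real.fourierIntegral_convergent_iff (μ := volume) (f := U) (-x)).2 hU
    simpa using this
  · have := (Real.fourierIntegral_convergent_iff (μ := volume) (f := V) (-x)).2 hV
    simpa using this

lemma fourierInv_sum {ι : Type*} (J : Finset ι) {U : ι → Rd d → ℂ} (hU : ∀ i ∈ J, BL (U i)) :
    𝓕⁻ (fun ξ => ∑ i ∈ J, U i ξ) = fun x => ∑ i ∈ J, 𝓕⁻ (U i) x := by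
  classical
  induction J using Finset.induction_on with
  | empty => 
    ext x
    simp [Real.fourierInv_eq]
  | insert a s ha ih =>
    simp only [Finset.sum_insert ha]
    have hs : ∀ i ∈ s, BL (U i) := fun i hi => hU i (Finset.mem_insert_of_mem hi)
    rw [fourierInv_add (hU a (Finset.mem_insert_self _ _)).integrable (BL.sum s hs).integrable, ih hs]

lemma fourierInv_const_mul (a : ℂ) (U : Rd d → ℂ) :
    𝓕⁻ (fun ξ => a * U ξ) = fun x => a * 𝓕⁻ U x := by
  ext x
  simp only [Real.fourierInv_eq]
  rw [← integral_const_mul]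
  congr 1; ext ξ
  simp only [Circle.smul_def, smul_eq_mul]; ring

lemma fourierInv_shift (a : Rd d) (U : Rd d → ℂ) (x : Rd d) :
    𝓕⁻ (fun ξ => U (ξ - a)) x = Complex.exp (↑(2 * π * ⟪a, x⟫) * Complex.I) * 𝓕⁻ U x := by
  simp only [Real.fourierInv_eq']
  rw [← integral_const_mul, ← integral_add_right_eq_self _ a]
  congr 1; ext ξ
  simp only [smul_eq_mul, add_sub_cancel_right, inner_add_left]
  rw [← mul_assoc, ← Complex.exp_add]
  congr 2; push_cast; ring

lemma LpN_add_le {p : ℝ} (hp : 1 ≤ p) {f g : Rd d → ℂ} (hf : MemLp f (ENNReal.ofReal p) volume)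
    (hg : MemLp g (ENNReal.ofReal p) volume) :
    LpN p (fun x => f x + g x) ≤ LpN p f + LpN p g := by
  unfold LpN
  rw [← ENNReal.toReal_add hf.eLpNorm_ne_top hg.eLpNorm_ne_top]
  apply ENNReal.toReal_mono
  · exact ENNReal.add_ne_top.2 ⟨hf.eLpNorm_ne_top, hg.eLpNorm_ne_top⟩
  · exact eLpNorm_add_le hf.1 hg.1 (by simpa using ENNReal.ofReal_le_ofReal hp)

lemma P_add_le {p : ℝ} (hp : 2 < p) {U V : Rd d → ℂ} (hU : BL U) (hV : BL V) :
    P p (fun ξ => U ξ + V ξ) ≤ P p U + P p V := by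
  unfold P
  rw [fourierInv_add hU.integrable hV.integrable]
  exact LpN_add_le (by linarith) (hU.memLp hp) (hV.memLp hp)

lemma P_zero (p : ℝ) : P p (fun _ : Rd d => (0:ℂ)) = 0 := by
  unfold P LpN
  have : 𝓕⁻ (fun _ : Rd d => (0:ℂ)) = fun _ => 0 := by ext x; simp [Real.fourierInv_eq]
  rw [this]; simp

lemma P_sum_le {p : ℝ} (hp : 2 < p) {ι : Type*} (J : Finset ι) {U : ι → Rd d → ℂ}
    (hU : ∀ i ∈ J, BL (U i)) : P p (fun ξ => ∑ i ∈ J, U i ξ) ≤ ∑ i ∈ J, P p (U i) := by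
  classical
  induction J using Finset.induction_on with
  | empty => simp [P_zero]
  | insert a s ha ih =>
    simp only [Finset.sum_insert ha]
    have hs : ∀ i ∈ s, BL (U i) := fun i hi => hU i (Finset.mem_insert_of_mem hi)
    exact (P_add_le hp (hU a (Finset.mem_insert_self _ _)) (BL.sum s hs)).trans (by gcongr; exact ih hs)

/-- Bernstein. -/
lemma bernstein {p : ℝ} (hp : 2 < p) {U : Rd d → ℂ} (hU : MemLp U 2 volume) {ρ : ℝ} (hρ : 0 < ρ)
    (h : ∀ ξ, ρ < ‖ξ‖ → U ξ = 0) :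
    P p U ^ 2 ≤ (volume.real (Metric.closedBall (0:Rd d) 1) * ρ ^ d) ^ ((p - 2)/p) * Q U := by
  have hBL : BL U := ⟨hU, ρ, h⟩
  set v := volume.real (Metric.closedBall (0:Rd d) 1) * ρ ^ d with hv
  have hvol : volume.real (Metric.closedBall (0:Rd d) ρ) = v := by
    rw [measureReal_def, Measure.addHaar_closedBall' volume 0 hρ.le, ENNReal.toReal_mul, ENNReal.toReal_ofReal (by positivity)]
    simp [hv, measureReal_def, mul_comm]
  have hv0 : 0 ≤ v := by rw [← hvol]; exact measureReal_nonneg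
  -- L1 bound
  have hL1 : (∫ ξ, ‖U ξ‖) ^ 2 ≤ v * Q U := by
    have hB : MeasurableSet (Metric.closedBall (0:Rd d) ρ) := Metric.isClosed_closedBall.measurableSet
    set k : Rd d → ℂ := (Metric.closedBall (0:Rd d) ρ).indicator (fun _ => (1:ℂ)) with hk
    have hk2 : MemLp k (ENNReal.ofReal 2) volume :=
      memLp_indicator_const _ hB 1 (Or.inr measure_closedBall_lt_top.ne)
    have hH := integral_mul_norm_le_Lp_mul_Lq (f := U) (g := k) (μ := volume)
      (p := 2) (q := 2) Real.HolderConjugate.two_two (by simpa using hU) hk2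
    have e1 : ∀ ξ, ‖U ξ‖ * ‖k ξ‖ = ‖U ξ‖ := by
      intro ξ
      by_cases hξ : ξ ∈ Metric.closedBall (0:Rd d) ρ
      · simp [hk, hξ]
      · rw [h ξ (by simpa using hξ)]; simp
    have e2 : ∫ ξ, ‖k ξ‖ ^ (2:ℝ) = v := by
      have : ∀ ξ, ‖k ξ‖ ^ (2:ℝ) = (Metric.closedBall (0:Rd d) ρ).indicator (fun _ => (1:ℝ)) ξ := by
        intro ξ
        by_cases hξ : ξ ∈ Metric.closedBall (0:Rd d) ρ <;> simp [hk, hξ]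
      simp only [this]
      rw [integral_indicator hB]; simp [hvol]
    simp only [e1, e2] at hH
    have e3 : ∫ ξ, ‖U ξ‖ ^ (2:ℝ) = Q U := by simp [Q]
    rw [e3, ← Real.sqrt_eq_rpow, ← Real.sqrt_eq_rpow] at hH
    calc (∫ ξ, ‖U ξ‖) ^ 2 ≤ (√(Q U) * √v) ^ 2 :=
          pow_le_pow_left₀ (integral_nonneg fun _ => norm_nonneg _) hH 2
      _ = v * Q U := by rw [mul_pow, Real.sq_sqrt (Q_nonneg U), Real.sq_sqrt hv0, mul_comm]
  set M := ∫ ξ, ‖U ξ‖ with hM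
  have hM0 : 0 ≤ M := integral_nonneg fun _ => norm_nonneg _
  have h1 : P p U ^ p ≤ M ^ (p - 2) * Q U := by
    rw [hBL.P_rpow hp, ← hBL.plancherel, Q, ← integral_const_mul]
    apply integral_mono_of_nonneg
    · exact Eventually.of_forall fun x => by positivity
    · exact (sq_integrable hBL.L2.1).const_mul _
    · refine Eventually.of_forall fun x => ?_
      have hx := norm_fourierInv_le U x
      calc ‖𝓕⁻ U x‖ ^ p = ‖𝓕⁻ U x‖ ^ (p - 2) * ‖𝓕⁻ U x‖ ^ 2 := by
            rw [← Real.rpow_two, ← Real.rpow_add_of_nonneg (norm_nonneg _) (by linarith) (by norm_num)]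
            congr 1; ring
        _ ≤ M ^ (p - 2) * ‖𝓕⁻ U x‖ ^ 2 := by
            gcongr
  have hp0 : 0 < p := by linarith
  have hq := Q_nonneg U
  have hMs : M ^ (p-2) ≤ (v * Q U) ^ ((p-2)/2) := by
    have : M ^ (p-2) = (M^2) ^ ((p-2)/2) := by
      rw [← Real.rpow_two, ← Real.rpow_mul hM0]; congr 1; ring
    rw [this]
    exact Real.rpow_le_rpow (by positivity) hL1 (by linarith)
  have h2 : P p U ^ p ≤ (v ^ ((p-2)/p) * Q U) ^ (p/2) := by
    refine (h1.trans (mul_le_mul_of_nonneg_right hMs hq)).trans (le_of_eq ?_)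
    rw [Real.mul_rpow hv0 hq, Real.mul_rpow (by positivity) hq, ← Real.rpow_mul hv0, mul_assoc]
    congr 1
    · congr 1; field_simp
    · nth_rewrite 2 [← Real.rpow_one (Q U)]
      rw [← Real.rpow_add_of_nonneg hq (by linarith) (by norm_num)]
      congr 1; ring
  have h3 : P p U ^ p = (P p U ^ 2) ^ (p/2) := by
    rw [← Real.rpow_two, ← Real.rpow_mul (P_nonneg _ _)]; congr 1; ring
  rw [h3] at h2
  exact (Real.rpow_le_rpow_iff (by positivity [P_nonneg p U]) (by positivity) (by positivity)).1 h2

end S6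

namespace S6

variable {d : ℕ}

/-- The `L² → L^p` bound for functions with frequencies in `A`. -/
def Bnd (p : ℝ) (A : Set (Rd d)) (N : ℝ) : Prop :=
  ∀ U : Rd d → ℂ, BL U → (∀ ξ, ξ ∉ A → U ξ = 0) → P p U ^ 2 ≤ N * Q U

lemma Bnd.mono {p N : ℝ} {A B : Set (Rd d)} (h : Bnd p A N) (hBA : B ⊆ A) : Bnd p B N :=
  fun U hU hB => h U hU fun ξ hξ => hB ξ fun h' => hξ (hBA h')

lemma Bnd.mono_right {p N N' : ℝ} {A : Set (Rd d)} (h : Bnd p A N) (hN : N ≤ N') : Bnd p A N' :=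
  fun U hU hB => (h U hU hB).trans (mul_le_mul_of_nonneg_right hN (Q_nonneg U))

lemma Q_indicator_le {U : Rd d → ℂ} (hU : MemLp U 2 volume) (A : Set (Rd d)) :
    Q (A.indicator U) ≤ Q U := by
  apply integral_mono_of_nonneg
  · exact Eventually.of_forall fun x => by positivity
  · exact sq_integrable hU
  · refine Eventually.of_forall fun ξ => ?_
    by_cases h : ξ ∈ A <;> simp [h]

lemma Bnd.union {p N₁ N₂ : ℝ} (hp : 2 < p) {A B : Set (Rd d)} (hA : Bnd p A N₁) (hB : Bnd p B N₂)
    (h1 : 0 ≤ N₁) (h2 : 0 ≤ N₂) (hm : MeasurableSet A) : Bnd p (A ∪ B) (2 * (N₁ + N₂)) := by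
  intro U hU hs
  have e : U = fun ξ => A.indicator U ξ + Aᶜ.indicator U ξ := by
    ext ξ
    by_cases h : ξ ∈ A <;> simp [h]
  have b1 : BL (A.indicator U) := hU.indicator hm
  have b2 : BL (Aᶜ.indicator U) := hU.indicator hm.compl
  have i1 := hA _ b1 (fun ξ hξ => by simp [hξ])
  have i2 := hB _ b2 (fun ξ hξ => by
    by_cases h : ξ ∈ A
    · simp [h]
    · simp only [Set.mem_compl_iff, h, not_false_eq_true, Set.indicator_of_mem]
      exact hs ξ (by simp [h, hξ]))
  have i3 := P_add_le hp b1 b2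
  rw [← e] at i3
  have q1 := mul_le_mul_of_nonneg_left (Q_indicator_le hU.1 A) h1
  have q2 := mul_le_mul_of_nonneg_left (Q_indicator_le hU.1 Aᶜ) h2
  have := P_nonneg p U
  nlinarith [sq_nonneg (P p (A.indicator U) - P p (Aᶜ.indicator U))]

lemma Bnd.iUnion {p N : ℝ} (hp : 2 < p) {ι : Type*} (J : Finset ι) (A : ι → Set (Rd d))
    (hN : 0 ≤ N) (h : ∀ i ∈ J, Bnd p (A i) N) (hm : ∀ i ∈ J, MeasurableSet (A i)) :
    Bnd p (⋃ i ∈ J, A i) (4 ^ J.card * N) := by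
  classical
  induction J using Finset.induction_on with
  | empty =>
    intro U hU hs
    have : U = fun _ => 0 := by ext ξ; exact hs ξ (by simp)
    rw [this, P_zero]
    have := Q_nonneg (fun _ : Rd d => (0:ℂ))
    simp; positivity
  | insert a s ha ih =>
    rw [Finset.set_biUnion_insert, Finset.card_insert_of_notMem ha]
    refine (Bnd.union hp (h a (Finset.mem_insert_self _ _))
      (ih (fun i hi => h i (Finset.mem_insert_of_mem hi)) (fun i hi => hm i (Finset.mem_insert_of_mem hi)))
      hN (by positivity) (hm a (Finset.mem_insert_self _ _))).mono_right ?_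
    have : (1:ℝ) ≤ 4 ^ s.card := one_le_pow₀ (by norm_num)
    rw [pow_succ]
    nlinarith

/-- Cauchy-Schwarz over a frequency partition. -/
lemma cs_lemma {p : ℝ} (hp : 2 < p) {ι : Type*} [DecidableEq ι] (J : Finset ι) (idx : Rd d → ι)
    (hidx : ∀ j, MeasurableSet {ξ | idx ξ = j}) {U : Rd d → ℂ} (hU : BL U)
    (hJ : ∀ ξ, U ξ ≠ 0 → idx ξ ∈ J) (ω : Rd d → ℝ)
    (hI : Integrable (fun ξ => ‖U ξ‖ ^ 2 * ω ξ) volume) (a : ι → ℝ) (ha : ∀ j ∈ J, 0 ≤ a j)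
    (hω : ∀ ξ, 0 ≤ ω ξ)
    (h : ∀ j ∈ J, P p ({ξ | idx ξ = j}.indicator U) ^ 2 ≤
      a j * ∫ ξ, ‖{ξ | idx ξ = j}.indicator U ξ‖ ^ 2 * ω ξ) :
    P p U ^ 2 ≤ (∑ j ∈ J, a j) * ∫ ξ, ‖U ξ‖ ^ 2 * ω ξ := by
  set V : ι → Rd d → ℂ := fun j => {ξ | idx ξ = j}.indicator U with hV
  have hBL : ∀ j ∈ J, BL (V j) := fun j _ => hU.indicator (hidx j)
  have e : U = fun ξ => ∑ j ∈ J, V j ξ := by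
    ext ξ
    by_cases h0 : U ξ = 0
    · rw [h0]; symm
      apply Finset.sum_eq_zero
      intro j _
      simp [hV, Set.indicator_apply, h0]
    · simp [hV, Set.indicator_apply, hJ ξ h0]
  have h1 : P p U ≤ ∑ j ∈ J, P p (V j) := by
    conv_lhs => rw [e]
    exact P_sum_le hp J hBL
  have hH0 : ∀ j, 0 ≤ ∫ ξ, ‖V j ξ‖ ^ 2 * ω ξ := fun j => integral_nonneg fun ξ => mul_nonneg (by positivity) (hω ξ)
  have h2 : (∑ j ∈ J, P p (V j)) ^ 2 ≤ (∑ j ∈ J, a j) * ∑ j ∈ J, ∫ ξ, ‖V j ξ‖ ^ 2 * ω ξ := by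
    have : ∑ j ∈ J, P p (V j) ≤ ∑ j ∈ J, √(a j) * √(∫ ξ, ‖V j ξ‖ ^ 2 * ω ξ) := by
      apply Finset.sum_le_sum
      intro j hj
      rw [← Real.sqrt_mul (ha j hj)]
      exact Real.le_sqrt_of_sq_le (h j hj)
    refine (pow_le_pow_left₀ (Finset.sum_nonneg fun j _ => P_nonneg _ _) this 2).trans ?_
    refine (Finset.sum_mul_sq_le_sq_mul_sq J _ _).trans (le_of_eq ?_)
    congr 1
    · exact Finset.sum_congr rfl fun j hj => Real.sq_sqrt (ha j hj)
    · exact Finset.sum_congr rfl fun j hj => Real.sq_sqrt (hH0 j)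
  have hIntg : ∀ j ∈ J, Integrable (fun ξ => ‖V j ξ‖ ^ 2 * ω ξ) volume := by
    intro j _
    have : (fun ξ => ‖V j ξ‖ ^ 2 * ω ξ) = {ξ | idx ξ = j}.indicator (fun ξ => ‖U ξ‖ ^ 2 * ω ξ) := by
      ext ξ
      by_cases hh : idx ξ = j <;> simp [hV, Set.indicator_apply, hh]
    rw [this]
    exact hI.indicator (hidx j)
  have h3 : ∑ j ∈ J, ∫ ξ, ‖V j ξ‖ ^ 2 * ω ξ = ∫ ξ, ‖U ξ‖ ^ 2 * ω ξ := by
    rw [← integral_finsetSum J hIntg]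
    congr 1; ext ξ
    by_cases h0 : U ξ = 0
    · simp only [h0, norm_zero]
      rw [Finset.sum_eq_zero]; · simp
      intro j _
      simp [hV, Set.indicator_apply, h0]
    · rw [Finset.sum_eq_single_of_mem (idx ξ) (hJ ξ h0)]
      · simp [hV]
      · intro j _ hj
        simp [hV, Set.indicator_apply, hj.symm]
  rw [h3] at h2
  exact (pow_le_pow_left₀ (P_nonneg _ _) h1 2).trans h2

lemma fourierInv_scale {r : ℝ} (hr : 0 < r) (U : Rd d → ℂ) (x : Rd d) :
    𝓕⁻ (fun ξ => U (r • ξ)) x = ((r ^ d)⁻¹ : ℝ) • 𝓕⁻ U (r⁻¹ • x) := by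
  simp only [Real.fourierInv_eq]
  have := Measure.integral_comp_smul (volume : Measure (Rd d))
    (fun ξ => 𝐞 ⟪ξ, r⁻¹ • x⟫ • U ξ) r
  rw [finrank_euclideanSpace_fin, abs_of_pos (by positivity)] at this
  rw [← this]
  congr 1; ext ξ
  congr 2
  rw [inner_smul_left, inner_smul_right]
  simp; field_simp

lemma BL.scale {U : Rd d → ℂ} (hU : BL U) {r : ℝ} (hr : 0 < r) : BL (fun ξ => U (r • ξ)) := by
  obtain ⟨h2, ρ, hρ⟩ := hU
  refine ⟨?_, ρ / r, fun ξ hξ => ?_⟩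
  · have hm : AEStronglyMeasurable (fun ξ => U (r • ξ)) volume := by
      exact h2.1.comp_quasiMeasurePreserving (Measure.quasiMeasurePreserving_smul _ hr.ne')
    rw [← integrable_norm_rpow_iff hm (by simp) (by simp)]
    have := h2.integrable_norm_rpow (by norm_num) (by norm_num)
    exact this.comp_smul hr.ne'
  · apply hρ
    rw [norm_smul, Real.norm_of_nonneg hr.le]
    rwa [div_lt_iff₀' hr] at hξ

lemma Bnd.scale {p N : ℝ} (hp : 2 < p) {A B : Set (Rd d)} (hA : Bnd p A N) (hN : 0 ≤ N) {r : ℝ} (hr : 0 < r)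
    (hr2 : r ≤ 2) (hAB : ∀ ξ, r • ξ ∈ B → ξ ∈ A) : Bnd p B (2 ^ d * N) := by
  intro U hU hs
  have hV := hU.scale hr
  have h1 := hA _ hV (fun ξ hξ => hs _ fun h' => hξ (hAB ξ h'))
  have hQ : Q (fun ξ => U (r • ξ)) = (r ^ d)⁻¹ * Q U := by
    unfold Q
    have := Measure.integral_comp_smul (volume : Measure (Rd d)) (fun ξ => ‖U ξ‖ ^ 2) r
    rw [finrank_euclideanSpace_fin, abs_of_pos (by positivity)] at this
    exact this
  have hp0 : 0 < p := by linarith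
  have hP : P p (fun ξ => U (r • ξ)) ^ p = ((r ^ d)⁻¹) ^ p * r ^ d * P p U ^ p := by
    rw [hV.P_rpow hp, hU.P_rpow hp]
    have := Measure.integral_comp_smul (volume : Measure (Rd d)) (fun x => ‖𝓕⁻ U x‖ ^ p) r⁻¹
    rw [finrank_euclideanSpace_fin, abs_of_pos (by positivity)] at this
    simp only [fourierInv_scale hr, norm_smul]
    simp only [Real.mul_rpow (norm_nonneg _) (norm_nonneg _)]
    rw [integral_const_mul, this]
    rw [Real.norm_of_nonneg (by positivity)]
    simp; ring
  have h2 : (P p (fun ξ => U (r • ξ)) ^ 2) = ((r ^ d)⁻¹) ^ 2 * (r ^ d) ^ (2/p) * P p U ^ 2 := by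
    have e : ∀ x : ℝ, 0 ≤ x → x ^ 2 = (x ^ p) ^ (2/p) := by
      intro x hx
      rw [← Real.rpow_mul hx, ← Real.rpow_two]; congr 1; field_simp
    rw [e _ (P_nonneg _ _), hP, Real.mul_rpow (by positivity) (Real.rpow_nonneg (P_nonneg _ _) _),
      Real.mul_rpow (by positivity) (by positivity), ← e _ (P_nonneg _ _), ← e _ (by positivity)]
  rw [h2, hQ] at h1
  set y := r ^ d with hy
  have hy0 : 0 < y := by positivity
  have h3 : P p U ^ 2 ≤ N * (y ^ (1 - 2/p) * Q U) := by
    have : y ^ (1 - 2/p) = y / y ^ (2/p) := by rw [Real.rpow_sub hy0, Real.rpow_one]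
    rw [this]
    have hz : 0 < y ^ (2/p) := by positivity
    field_simp
    field_simp at h1
    linarith
  refine h3.trans ?_
  have h4 : y ^ (1 - 2/p) ≤ 2 ^ d := by
    have hle : y ≤ 2 ^ d := pow_le_pow_left₀ hr.le hr2 d
    have h5 : 0 ≤ 1 - 2/p := by rw [sub_nonneg, div_le_one hp0]; exact hp.le
    have h6 : 1 - 2/p ≤ 1 := by have : 0 ≤ 2/p := by positivity
                                linarith
    calc y ^ (1 - 2/p) ≤ ((2:ℝ)^d) ^ (1 - 2/p) := Real.rpow_le_rpow hy0.le hle h5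
      _ ≤ ((2:ℝ)^d) ^ (1:ℝ) := Real.rpow_le_rpow_of_exponent_le (one_le_pow₀ (by norm_num)) h6
      _ = _ := Real.rpow_one _
  have := Q_nonneg U
  calc N * (y ^ (1 - 2/p) * Q U) ≤ N * (2 ^ d * Q U) := by gcongr
    _ = _ := by ring

end S6

namespace S6

variable {d : ℕ}

/-- The shell of half-width `h` about the unit sphere. -/
def Sh (d : ℕ) (h : ℝ) : Set (Rd d) := {ξ | |‖ξ‖ - 1| ≤ h}

lemma dirichlet (K : ℕ) (hK : 1 ≤ K) (θ : ℝ) : ∃ m ∈ Finset.range (3 * K),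
    (K:ℝ) / 2 ≤ ‖∑ k ∈ Finset.range K,
      Complex.exp (↑(2 * π * (k * (θ - m / (3 * K : ℕ)))) * Complex.I)‖ := by
  set M : ℕ := 3 * K with hM
  have hM0 : 0 < M := by omega
  have hMr : (0:ℝ) < M := by exact_mod_cast hM0
  set j : ℤ := round (M * θ) with hj
  have h1 : |M * θ - j| ≤ 1/2 := abs_sub_round _
  set m : ℕ := (j % M).toNat with hm
  have hmod0 : 0 ≤ j % M := Int.emod_nonneg _ (by positivity)
  have hmj : (m : ℤ) = j % M := Int.toNat_of_nonneg hmod0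
  have hlt : m < M := by
    have := Int.emod_lt_of_pos j (show (0:ℤ) < M by exact_mod_cast hM0)
    omega
  refine ⟨m, Finset.mem_range.2 hlt, ?_⟩
  set n : ℤ := j / M with hn
  have hdec : (j : ℝ) = m + M * n := by
    have : j = m + M * n := by rw [hmj, hn]; exact (Int.emod_add_mul_ediv j M).symm
    exact_mod_cast this
  set τ : ℝ := θ - j / M with hτ
  have hτs : |τ| ≤ 1 / (2 * M) := by
    have : τ = (M * θ - j) / M := by rw [hτ]; field_simp
    rw [this, abs_div, abs_of_pos hMr, div_le_div_iff₀ hMr (by positivity)]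
    nlinarith
  have hre : ∀ k : ℕ, Complex.exp (↑(2 * π * (k * (θ - m / M))) * Complex.I) =
      Complex.exp (↑(2 * π * (k * τ)) * Complex.I) := by
    intro k
    rw [Complex.exp_eq_exp_iff_exists_int]
    refine ⟨k * n, ?_⟩
    have : θ - m / M = τ + n := by rw [hτ, hdec]; field_simp; ring
    rw [this]; push_cast; ring
  simp only [hre]
  refine le_trans ?_ (Complex.re_le_norm _)
  rw [Complex.re_sum]
  have : (K:ℝ)/2 = ∑ k ∈ Finset.range K, (1/2:ℝ) := by simp; ring
  rw [this]
  apply Finset.sum_le_sum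
  intro k hk
  rw [Complex.exp_ofReal_mul_I_re, ← Real.cos_abs, ← Real.cos_pi_div_three]
  have hkK : (k:ℝ) ≤ K := by exact_mod_cast (Finset.mem_range.1 hk).le
  have hMK : (M:ℝ) = 3 * K := by rw [hM]; push_cast; ring
  have hK0 : (0:ℝ) < K := by exact_mod_cast hK
  have hb : |2 * π * (k * τ)| ≤ π / 3 := by
    rw [abs_mul (2 * π), abs_mul (k:ℝ), abs_of_pos (by positivity : (0:ℝ) < 2 * π), Nat.abs_cast]
    calc 2 * π * (k * |τ|) ≤ 2 * π * (K * (1 / (2 * M))) := by gcongr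
      _ = π / 3 := by rw [hMK]; field_simp
  exact Real.cos_le_cos_of_nonneg_of_le_pi (abs_nonneg _) (by linarith [pi_pos]) hb

lemma card_le_of_diam (s : Finset ℕ) (L : ℝ) (hL : 0 ≤ L)
    (h : ∀ k ∈ s, ∀ l ∈ s, k < l → ((l:ℝ) - k) ≤ L) : (s.card : ℝ) ≤ L + 1 := by
  rcases s.eq_empty_or_nonempty with rfl | hne
  · simp; linarith
  · have hsub : s ⊆ Finset.Icc (s.min' hne) (s.max' hne) := fun x hx =>
      Finset.mem_Icc.2 ⟨Finset.min'_le _ _ hx, Finset.le_max' _ _ hx⟩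
    have hc := Finset.card_le_card hsub
    rw [Nat.card_Icc] at hc
    have hmm : s.min' hne ≤ s.max' hne := Finset.min'_le_max' _ _
    have h2 : ((s.max' hne : ℕ) : ℝ) - (s.min' hne : ℕ) ≤ L := by
      rcases hmm.lt_or_eq with hlt | heq
      · exact h _ (Finset.min'_mem _ _) _ (Finset.max'_mem _ _) hlt
      · rw [heq]; simpa using hL
    have h3 : (s.card : ℝ) ≤ ((s.max' hne + 1 - s.min' hne : ℕ) : ℝ) := by exact_mod_cast hc
    rw [Nat.cast_sub (by omega)] at h3
    push_cast at h3
    linarith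

lemma overlap {t c : ℝ} (ht : 0 < t) (ht1 : t ≤ 1) (hc : 0 < c) (e : Rd d) (he : ‖e‖ = 1) (ξ : Rd d)
    {k l : ℕ} (hkl : k < l)
    (hk1 : |‖ξ - (k * t) • e‖ - 1| ≤ t)
    (hl1 : |‖ξ - (l * t) • e‖ - 1| ≤ t) (hl2 : c ≤ ⟪ξ - (l * t) • e, e⟫) :
    (l:ℝ) - k ≤ 2 / c := by
  set a := ξ - (l * t) • e with ha
  have hb : ξ - (k * t) • e = a + (((l:ℝ) - k) * t) • e := by
    rw [ha, sub_mul, sub_smul]; abel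
  rw [hb] at hk1
  set b := a + (((l:ℝ) - k) * t) • e with hbdef
  have hlk : (0:ℝ) < (l:ℝ) - k := by
    have : (k:ℝ) < l := by exact_mod_cast hkl
    linarith
  have hn : ‖b‖ ^ 2 = ‖a‖ ^ 2 + 2 * (((l:ℝ) - k) * t * ⟪a, e⟫) + (((l:ℝ) - k) * t) ^ 2 := by
    rw [hbdef, norm_add_sq_real, inner_smul_right, norm_smul, he, mul_one, Real.norm_eq_abs, sq_abs]
  have h1 := abs_le.1 hk1
  have h2 := abs_le.1 hl1
  have hb2 : ‖b‖ ^ 2 ≤ (1 + t) ^ 2 := pow_le_pow_left₀ (norm_nonneg _) (by linarith) 2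
  have ha2 : (1 - t) ^ 2 ≤ ‖a‖ ^ 2 := pow_le_pow_left₀ (by linarith) (by linarith) 2
  have h3 : ((l:ℝ) - k) * t * c ≤ ((l:ℝ) - k) * t * ⟪a, e⟫ := by gcongr
  have h4 : 2 * (((l:ℝ) - k) * t * c) ≤ 4 * t := by nlinarith [sq_nonneg (((l:ℝ) - k) * t)]
  rw [le_div_iff₀ hc]
  have h5 : t * (((l:ℝ) - k) * c) ≤ t * 2 := by nlinarith
  exact le_of_mul_le_mul_left h5 ht

lemma Q_shift (U : Rd d → ℂ) (a : Rd d) : Q (fun ξ => U (ξ - a)) = Q U :=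
  integral_sub_right_eq_self (fun ξ => ‖U ξ‖ ^ 2) a

lemma inner_dir {p N h t c : ℝ} (hp : 2 < p) (hB : Bnd p (Sh d h) N) (hN : 0 ≤ N) (e : Rd d) (he : ‖e‖ = 1)
    (hc : 0 < c) (K : ℕ) (hK : 1 ≤ K) (ht : 0 < t) (ht1 : t ≤ 1) (hKt : K * t ≤ h) (A : Set (Rd d))
    (hA : ∀ ξ ∈ A, |‖ξ‖ - 1| ≤ t ∧ c ≤ ⟪ξ, e⟫) :
    Bnd p A (12 * (2 / c + 1) * (K:ℝ) ^ (2 / p - 1) * N) := by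
  intro U hU hs
  have hK0 : (0:ℝ) < K := by exact_mod_cast hK
  have hp0 : 0 < p := by linarith
  set M : ℕ := 3 * K with hM
  -- the modulated sums
  set co : ℕ → ℕ → ℂ := fun m k => Complex.exp (↑(-(2 * π * (k * (m / M : ℝ)))) * Complex.I) with hco
  have hco1 : ∀ m k, ‖co m k‖ = 1 := fun m k => Complex.norm_exp_ofReal_mul_I _
  set V : ℕ → ℕ → Rd d → ℂ := fun m k ξ => co m k * U (ξ - ((k:ℝ) * t) • e) with hV
  have hVBL : ∀ m k, BL (V m k) := fun m k => (hU.shift _).const_mul _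
  set F : ℕ → Rd d → ℂ := fun m ξ => ∑ k ∈ Finset.range K, V m k ξ with hF
  have hFBL : ∀ m, BL (F m) := fun m => BL.sum _ fun k _ => hVBL m k
  have hFs : ∀ m ξ, ξ ∉ Sh d h → F m ξ = 0 := by
    intro m ξ hξ
    apply Finset.sum_eq_zero
    intro k hk
    have : U (ξ - ((k:ℝ) * t) • e) = 0 := by
      apply hs
      intro hmem
      apply hξ
      have h1 := (hA _ hmem).1
      have hk' : (k:ℝ) + 1 ≤ K := by exact_mod_cast Finset.mem_range.1 hk
      have h2 : |‖ξ‖ - ‖ξ - ((k:ℝ) * t) • e‖| ≤ k * t := by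
        refine (abs_norm_sub_norm_le _ _).trans ?_
        rw [sub_sub_cancel, norm_smul, he, mul_one, Real.norm_of_nonneg (by positivity)]
      show |‖ξ‖ - 1| ≤ h
      have h3 := abs_sub_le ‖ξ‖ ‖ξ - ((k:ℝ) * t) • e‖ 1
      nlinarith
    simp [hV, this]
  have hFQ : ∀ m, Q (F m) ≤ (2 / c + 1) * K * Q U := by
    intro m
    have pw : ∀ ξ, ‖F m ξ‖ ^ 2 ≤ (2 / c + 1) * ∑ k ∈ Finset.range K, ‖U (ξ - ((k:ℝ) * t) • e)‖ ^ 2 := by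
      intro ξ
      classical
      set s := (Finset.range K).filter (fun k : ℕ => U (ξ - ((k:ℝ) * t) • e) ≠ 0) with hsdef
      have hcard : (s.card : ℝ) ≤ 2 / c + 1 := by
        apply card_le_of_diam _ _ (by positivity)
        intro k hk l hl hkl
        have mk : ξ - ((k:ℝ) * t) • e ∈ A := by
          by_contra hh; exact (Finset.mem_filter.1 hk).2 (hs _ hh)
        have ml : ξ - ((l:ℝ) * t) • e ∈ A := by
          by_contra hh; exact (Finset.mem_filter.1 hl).2 (hs _ hh)
        exact overlap ht ht1 hc e he ξ hkl (hA _ mk).1 (hA _ ml).1 (hA _ ml).2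
      have e1 : F m ξ = ∑ k ∈ s, V m k ξ := by
        rw [hF, hsdef, Finset.sum_filter_of_ne]
        intro k _ hne h0
        exact hne (by simp [hV, h0])
      have e2 : ‖F m ξ‖ ≤ ∑ k ∈ s, ‖U (ξ - ((k:ℝ) * t) • e)‖ := by
        rw [e1]
        refine (norm_sum_le _ _).trans (le_of_eq ?_)
        refine Finset.sum_congr rfl fun k _ => ?_
        simp only [hV]
        rw [norm_mul, hco1, one_mul]
      calc ‖F m ξ‖ ^ 2 ≤ (∑ k ∈ s, ‖U (ξ - ((k:ℝ) * t) • e)‖) ^ 2 := pow_le_pow_left₀ (norm_nonneg _) e2 2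
        _ ≤ s.card * ∑ k ∈ s, ‖U (ξ - ((k:ℝ) * t) • e)‖ ^ 2 := sq_sum_le_card_mul_sum_sq
        _ ≤ (2 / c + 1) * ∑ k ∈ Finset.range K, ‖U (ξ - ((k:ℝ) * t) • e)‖ ^ 2 := by
            gcongr
            exact Finset.filter_subset _ _
    have hIntg : ∀ k ∈ Finset.range K, Integrable (fun ξ => ‖U (ξ - ((k:ℝ) * t) • e)‖ ^ 2) volume :=
      fun k _ => sq_integrable (hU.shift _).1
    calc Q (F m) ≤ ∫ ξ, (2 / c + 1) * ∑ k ∈ Finset.range K, ‖U (ξ - ((k:ℝ) * t) • e)‖ ^ 2 := by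
          apply integral_mono (sq_integrable (hFBL m).1) _ pw
          exact (integrable_finsetSum _ hIntg).const_mul _
      _ = (2 / c + 1) * ∑ k ∈ Finset.range K, Q (fun ξ => U (ξ - ((k:ℝ) * t) • e)) := by
          rw [integral_const_mul, integral_finsetSum _ hIntg]; rfl
      _ = (2 / c + 1) * K * Q U := by
          simp only [Q_shift]; simp; ring
  have hFP : ∀ m, P p (F m) ^ p ≤ (N * ((2 / c + 1) * K * Q U)) ^ (p / 2) := by
    intro m
    have h1 := hB (F m) (hFBL m) (hFs m)
    have h2 : P p (F m) ^ 2 ≤ N * ((2 / c + 1) * K * Q U) := h1.trans (by gcongr; exact hFQ m)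
    have h3 : P p (F m) ^ p = (P p (F m) ^ 2) ^ (p / 2) := by
      rw [← Real.rpow_two, ← Real.rpow_mul (P_nonneg _ _)]; congr 1; ring
    rw [h3]
    exact Real.rpow_le_rpow (by positivity) h2 (by positivity)
  -- physical side
  have hFx : ∀ m x, 𝓕⁻ (F m) x = (∑ k ∈ Finset.range K,
      Complex.exp (↑(2 * π * (k * (t * ⟪e, x⟫ - m / (3 * K : ℕ)))) * Complex.I)) * 𝓕⁻ U x := by
    intro m x
    simp only [hF]
    rw [fourierInv_sum _ (fun k _ => hVBL m k), Finset.sum_mul]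
    refine Finset.sum_congr rfl fun k _ => ?_
    simp only [hV]
    rw [fourierInv_const_mul]
    simp only
    rw [fourierInv_shift, ← mul_assoc, hco, ← Complex.exp_add]
    congr 2
    rw [inner_smul_left]
    simp only [conj_trivial, hM]
    push_cast; ring
  have hpt : ∀ x, (K / 2 : ℝ) ^ p * ‖𝓕⁻ U x‖ ^ p ≤ ∑ m ∈ Finset.range M, ‖𝓕⁻ (F m) x‖ ^ p := by
    intro x
    obtain ⟨m, hm, hle⟩ := dirichlet K hK (t * ⟪e, x⟫)
    refine le_trans ?_ (Finset.single_le_sum (f := fun m => ‖𝓕⁻ (F m) x‖ ^ p)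
      (fun i _ => Real.rpow_nonneg (norm_nonneg _) _) hm)
    rw [hFx, norm_mul, Real.mul_rpow (norm_nonneg _) (norm_nonneg _)]
    gcongr
  have hFint : ∀ m ∈ Finset.range M, Integrable (fun x => ‖𝓕⁻ (F m) x‖ ^ p) volume := by
    intro m _
    have := ((hFBL m).memLp hp).integrable_norm_rpow (by simp; linarith) (by simp)
    rwa [ENNReal.toReal_ofReal hp0.le] at this
  have hUint : Integrable (fun x => ‖𝓕⁻ U x‖ ^ p) volume := by
    have := (hU.memLp hp).integrable_norm_rpow (by simp; linarith) (by simp)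
    rwa [ENNReal.toReal_ofReal hp0.le] at this
  have hmain : (K / 2 : ℝ) ^ p * P p U ^ p ≤ 3 * K * (N * ((2 / c + 1) * K * Q U)) ^ (p / 2) := by
    calc (K / 2 : ℝ) ^ p * P p U ^ p = ∫ x, (K / 2 : ℝ) ^ p * ‖𝓕⁻ U x‖ ^ p := by
          rw [integral_const_mul, hU.P_rpow hp]
      _ ≤ ∫ x, ∑ m ∈ Finset.range M, ‖𝓕⁻ (F m) x‖ ^ p :=
          integral_mono (hUint.const_mul _) (integrable_finsetSum _ hFint) hpt
      _ = ∑ m ∈ Finset.range M, P p (F m) ^ p := by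
          rw [integral_finsetSum _ hFint]
          exact Finset.sum_congr rfl fun m _ => ((hFBL m).P_rpow hp).symm
      _ ≤ ∑ m ∈ Finset.range M, (N * ((2 / c + 1) * K * Q U)) ^ (p / 2) :=
          Finset.sum_le_sum fun m _ => hFP m
      _ = _ := by simp [hM]
  -- take the power 2/p
  set X := N * ((2 / c + 1) * K * Q U) with hX
  have hq := Q_nonneg U
  have hX0 : 0 ≤ X := by positivity
  have hPn := P_nonneg p U
  have h4 := Real.rpow_le_rpow (by positivity) hmain (show 0 ≤ 2 / p by positivity)
  have e0 : ∀ x : ℝ, 0 ≤ x → (x ^ p) ^ (2/p) = x ^ 2 := by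
    intro x hx
    rw [← Real.rpow_mul hx, ← Real.rpow_two]; congr 1; field_simp
  rw [Real.mul_rpow (by positivity) (by positivity), e0 _ (by positivity), e0 _ hPn,
    Real.mul_rpow (by positivity) (by positivity), ← Real.rpow_mul hX0,
    show p / 2 * (2 / p) = 1 by field_simp, Real.rpow_one, Real.mul_rpow (by norm_num) hK0.le] at h4
  have h3 : (3:ℝ) ^ (2/p) ≤ 3 := by
    calc (3:ℝ) ^ (2/p) ≤ 3 ^ (1:ℝ) := by
          apply Real.rpow_le_rpow_of_exponent_le (by norm_num)
          rw [div_le_one hp0]; exact hp.le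
      _ = 3 := Real.rpow_one _
  have hKp : (K:ℝ) ^ (2 / p - 1) = K ^ (2/p) / K := by rw [Real.rpow_sub hK0, Real.rpow_one]
  rw [hKp]
  have hz : 0 < (K:ℝ) ^ (2/p) := by positivity
  have h5 : (K / 2 : ℝ) ^ 2 * P p U ^ 2 ≤ 3 * (K:ℝ) ^ (2/p) * X := h4.trans (by gcongr)
  have h6 : (K:ℝ) ^ 2 * P p U ^ 2 ≤ K ^ 2 * (12 * (2 / c + 1) * (K ^ (2/p) / K) * N * Q U) := by
    have : (K:ℝ) ^ 2 * (12 * (2 / c + 1) * (K ^ (2/p) / K) * N * Q U) = 4 * (3 * (K:ℝ) ^ (2/p) * X) := by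
      rw [hX]; field_simp; ring
    rw [this]; nlinarith
  exact le_of_mul_le_mul_left h6 (by positivity)

end S6

namespace S6

variable {d : ℕ}

lemma measurableSet_Sh (h : ℝ) : MeasurableSet (Sh d h) :=
  (isClosed_le (by fun_prop) continuous_const).measurableSet

lemma inner_full {p N h t : ℝ} (hd : 2 ≤ d) (hp : 2 < p) (hB : Bnd p (Sh d h) N) (hN : 0 ≤ N)
    (K : ℕ) (hK : 1 ≤ K) (ht : 0 < t) (ht1 : t ≤ 1/2) (hKt : K * t ≤ h) :
    Bnd p (Sh d t) (4 ^ (d * 2) * (12 * (4 * d + 1) * (K:ℝ) ^ (2 / p - 1) * N)) := by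
  have hd0 : (0:ℝ) < d := by positivity
  set c : ℝ := 1 / (2 * d) with hc
  have hc0 : 0 < c := by positivity
  have hcc : 2 / c = 4 * d := by rw [hc]; field_simp; ring
  set σ : Bool → ℝ := fun b => if b then 1 else -1 with hσ
  set e : Fin d × Bool → Rd d := fun i => EuclideanSpace.single i.1 (σ i.2) with he
  have hen : ∀ i, ‖e i‖ = 1 := by
    rintro ⟨i, b⟩
    simp only [he, EuclideanSpace.norm_single, hσ]
    cases b <;> simp
  have hin : ∀ i (ξ : Rd d), ⟪ξ, e i⟫ = σ i.2 * ξ i.1 := by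
    rintro ⟨i, b⟩ ξ
    simp [he, EuclideanSpace.inner_single_right]
  set A : Fin d × Bool → Set (Rd d) := fun i => {ξ | |‖ξ‖ - 1| ≤ t ∧ c ≤ ⟪ξ, e i⟫} with hA
  have hAm : ∀ i ∈ (Finset.univ : Finset (Fin d × Bool)), MeasurableSet (A i) := by
    intro i _
    exact (measurableSet_Sh t).inter (isClosed_le (f := fun _ : Rd d => c) (g := fun ξ : Rd d => ⟪ξ, e i⟫)
      continuous_const (continuous_id.inner continuous_const)).measurableSet
  have hb : ∀ i ∈ (Finset.univ : Finset (Fin d × Bool)), Bnd p (A i)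
      (12 * (4 * d + 1) * (K:ℝ) ^ (2 / p - 1) * N) := by
    intro i _
    have := inner_dir hp hB hN (e i) (hen i) hc0 K hK ht (by linarith) hKt (A i) (fun ξ hξ => hξ)
    rwa [hcc] at this
  have := Bnd.iUnion hp Finset.univ A (by positivity) hb hAm
  rw [Finset.card_univ, Fintype.card_prod, Fintype.card_fin, Fintype.card_bool] at this
  refine this.mono ?_
  intro ξ hξ
  have hξ' : |‖ξ‖ - 1| ≤ t := hξ
  have hn : 1/2 ≤ ‖ξ‖ := by have := (abs_le.1 hξ').1; linarith
  have hex : ∃ i : Fin d, c ≤ |ξ i| := by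
    by_contra hcon
    push Not at hcon
    have h1 : ‖ξ‖ ^ 2 ≤ d * c ^ 2 := by
      rw [EuclideanSpace.real_norm_sq_eq]
      calc ∑ i, (ξ i) ^ 2 ≤ ∑ i : Fin d, c ^ 2 := by
            apply Finset.sum_le_sum
            intro i _
            rw [← sq_abs]
            exact pow_le_pow_left₀ (abs_nonneg _) (hcon i).le 2
        _ = _ := by simp
    have h2 : (d:ℝ) * c ^ 2 = 1 / (4 * d) := by rw [hc]; field_simp; norm_num
    have hd2 : (2:ℝ) ≤ d := by exact_mod_cast hd
    have h3 : (1:ℝ) / (4 * d) ≤ 1 / 8 := by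
      apply one_div_le_one_div_of_le <;> linarith
    nlinarith
  obtain ⟨i, hi⟩ := hex
  simp only [Finset.mem_univ, Set.iUnion_true, Set.mem_iUnion]
  rcases le_total 0 (ξ i) with h0 | h0
  · refine ⟨(i, true), hξ', ?_⟩
    rw [hin]
    rw [abs_of_nonneg h0] at hi
    simpa [hσ] using hi
  · refine ⟨(i, false), hξ', ?_⟩
    rw [hin]
    rw [abs_of_nonpos h0] at hi
    simpa [hσ] using hi

/-- The constant in the outer estimate. -/
def Cout (d : ℕ) (γ : ℝ) : ℝ := 2 ^ d * 8 ^ γ * ∑' k : ℤ, |(k:ℝ)| ^ (-((γ + 1) / 2))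

lemma Cout_nonneg (d : ℕ) (γ : ℝ) : 0 ≤ Cout d γ := by
  have : 0 ≤ ∑' k : ℤ, |(k:ℝ)| ^ (-((γ + 1) / 2)) := tsum_nonneg fun k => by positivity
  unfold Cout; positivity

lemma outer {p N h γ L : ℝ} (hp : 2 < p) (hB : Bnd p (Sh d h) N) (hN : 0 ≤ N) (hh : 0 < h) (hh1 : h ≤ 1)
    (hγ : 1 < γ) (hL : 2 ≤ L) {U : Rd d → ℂ} (hU : BL U)
    (hs : ∀ ξ, U ξ ≠ 0 → L * h < |‖ξ‖ - 1| ∧ |‖ξ‖ - 1| ≤ 1/2) 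
    (hI : Integrable (fun ξ => ‖U ξ‖ ^ 2 * |‖ξ‖ - 1| ^ γ) volume) :
    P p U ^ 2 ≤ (Cout d γ * L ^ (-((γ - 1)/2)) * N * h ^ (-γ)) * ∫ ξ, ‖U ξ‖ ^ 2 * |‖ξ‖ - 1| ^ γ := by
  set b := h / 4 with hb
  have hb0 : 0 < b := by positivity
  set idx : Rd d → ℤ := fun ξ => ⌊(‖ξ‖ - 1) / b⌋ with hidx
  have hidxm : ∀ j, MeasurableSet {ξ | idx ξ = j} := by
    intro j
    have : Measurable idx := by
      apply Int.measurable_floor.comp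
      fun_prop
    exact this (measurableSet_singleton j)
  set n : ℤ := ⌈1 / (2 * b)⌉ + 1 with hn
  classical
  set J := (Finset.Icc (-n) n).filter (fun k : ℤ => L ≤ |(k:ℝ)|) with hJ
  have hfl : ∀ ξ, (idx ξ : ℝ) * b ≤ ‖ξ‖ - 1 ∧ ‖ξ‖ - 1 < (idx ξ + 1) * b := by
    intro ξ
    constructor
    · rw [← le_div_iff₀ hb0]; exact Int.floor_le _
    · rw [← div_lt_iff₀ hb0]; exact Int.lt_floor_add_one _
  have hJm : ∀ ξ, U ξ ≠ 0 → idx ξ ∈ J := by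
    intro ξ hξ
    obtain ⟨h1, h2⟩ := hs ξ hξ
    obtain ⟨f1, f2⟩ := hfl ξ
    have hbig : L ≤ |(idx ξ : ℝ)| := by
      have : |‖ξ‖ - 1| ≤ (|(idx ξ : ℝ)| + 1) * b := by
        rw [abs_le]
        constructor
        · have := neg_abs_le (idx ξ : ℝ); nlinarith
        · have := le_abs_self (idx ξ : ℝ); nlinarith
      have h4 : L * (4 * b) < (|(idx ξ : ℝ)| + 1) * b := by
        have : 4 * b = h := by rw [hb]; ring
        rw [this]; linarith
      have h5 : 4 * L < |(idx ξ : ℝ)| + 1 := by nlinarith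
      linarith
    rw [hJ, Finset.mem_filter, Finset.mem_Icc]
    have h6 := abs_le.1 h2
    have hc := Int.le_ceil (1 / (2 * b))
    have hcb : 1/2 ≤ (⌈1 / (2 * b)⌉ : ℝ) * b := by
      rw [div_le_iff₀ (by positivity)] at hc; nlinarith
    refine ⟨⟨?_, ?_⟩, hbig⟩
    · have : (-n : ℝ) ≤ idx ξ := by
        rw [hn]; push_cast
        by_contra hcon
        push Not at hcon
        nlinarith
      exact_mod_cast this
    · have : (idx ξ : ℝ) ≤ n := by
        rw [hn]; push_cast
        by_contra hcon
        push Not at hcon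
        nlinarith
      exact_mod_cast this
  set a : ℤ → ℝ := fun k => 2 ^ d * N * (2 / (|(k:ℝ)| * b)) ^ γ with ha
  have hmain := cs_lemma hp J idx hidxm hU hJm (fun ξ => |‖ξ‖ - 1| ^ γ) hI a
    (fun j _ => by simp only [ha]; positivity) (fun ξ => by positivity) (by
      intro k hk
      set V := {ξ | idx ξ = k}.indicator U with hV
      have hVBL : BL V := hU.indicator (hidxm k)
      have hkL : L ≤ |(k:ℝ)| := (Finset.mem_filter.1 hk).2
      have hVne : ∀ ξ, V ξ ≠ 0 → idx ξ = k ∧ U ξ ≠ 0 := by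
        intro ξ hξ
        rw [hV, Set.indicator_apply] at hξ
        by_cases h' : idx ξ = k
        · exact ⟨h', by simpa [h'] using hξ⟩
        · simp [h'] at hξ
      by_cases hex : ∃ ξ₀, V ξ₀ ≠ 0
      · obtain ⟨ξ₀, h0⟩ := hex
        obtain ⟨hk0, hU0⟩ := hVne ξ₀ h0
        have f0 := hfl ξ₀
        rw [hk0] at f0
        have s0 := abs_le.1 (hs ξ₀ hU0).2
        have hb4 : b ≤ 1/4 := by rw [hb]; linarith
        set r := 1 + k * b with hr
        have hr1 : 1/4 ≤ r := by nlinarith [f0.1, f0.2]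
        have hr2 : r ≤ 2 := by linarith [f0.1]
        have hBk : Bnd p {ξ | idx ξ = k} (2 ^ d * N) := by
          apply Bnd.scale hp hB hN (by linarith : 0 < r) hr2
          intro ξ hξ
          have f := hfl (r • ξ)
          rw [show idx (r • ξ) = k from hξ, norm_smul, Real.norm_of_nonneg (by linarith : 0 ≤ r)] at f
          show |‖ξ‖ - 1| ≤ h
          have g1 : 0 ≤ r * (‖ξ‖ - 1) := by nlinarith [f.1]
          have g2 : r * (‖ξ‖ - 1) < b := by nlinarith [f.2]
          have g3 : 0 ≤ ‖ξ‖ - 1 := by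
            by_contra hcon
            push Not at hcon
            nlinarith
          rw [abs_of_nonneg g3]
          have : 4 * b = h := by rw [hb]; ring
          nlinarith
        have h1 := hBk V hVBL (fun ξ hξ => by rw [hV]; exact Set.indicator_of_notMem hξ _)
        refine h1.trans ?_
        simp only [ha]
        rw [mul_assoc (2 ^ d * N)]
        gcongr
        rw [← integral_const_mul]
        have hVI : Integrable (fun ξ => ‖V ξ‖ ^ 2 * |‖ξ‖ - 1| ^ γ) volume := by
          have : (fun ξ => ‖V ξ‖ ^ 2 * |‖ξ‖ - 1| ^ γ) =
              {ξ | idx ξ = k}.indicator (fun ξ => ‖U ξ‖ ^ 2 * |‖ξ‖ - 1| ^ γ) := by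
            ext ξ
            by_cases hh : idx ξ = k <;> simp [hV, hh]
          rw [this]
          exact hI.indicator (hidxm k)
        apply integral_mono (sq_integrable hVBL.1) (hVI.const_mul _)
        intro ξ
        by_cases hz : V ξ = 0
        · simp [hz]
        · obtain ⟨hkξ, hUξ⟩ := hVne ξ hz
          have f := hfl ξ
          rw [hkξ] at f
          have hk2 : 2 ≤ |(k:ℝ)| := hL.trans hkL
          have hlow : |(k:ℝ)| * b / 2 ≤ |‖ξ‖ - 1| := by
            rcases le_total 0 (k:ℝ) with h0 | h0
            · rw [abs_of_nonneg h0] at hk2 ⊢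
              have := le_abs_self (‖ξ‖ - 1)
              nlinarith [f.1]
            · rw [abs_of_nonpos h0] at hk2 ⊢
              have := neg_le_abs (‖ξ‖ - 1)
              nlinarith [f.2]
          have hkb : 0 < |(k:ℝ)| * b := by positivity
          have h1 : 1 ≤ (2 / (|(k:ℝ)| * b)) ^ γ * |‖ξ‖ - 1| ^ γ := by
            rw [← Real.mul_rpow (by positivity) (abs_nonneg _)]
            apply Real.one_le_rpow _ (by linarith)
            rw [div_mul_eq_mul_div, le_div_iff₀ hkb]
            linarith
          calc ‖V ξ‖ ^ 2 = ‖V ξ‖ ^ 2 * 1 := (mul_one _).symm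
            _ ≤ ‖V ξ‖ ^ 2 * ((2 / (|(k:ℝ)| * b)) ^ γ * |‖ξ‖ - 1| ^ γ) := by gcongr
            _ = _ := by ring
      · push Not at hex
        have : V = fun _ => 0 := by ext ξ; exact hex ξ
        rw [this, P_zero]; simp)
  refine hmain.trans ?_
  apply mul_le_mul_of_nonneg_right _ (integral_nonneg fun ξ => by positivity)
  have hsum := Real.summable_abs_int_rpow (show 1 < (γ+1)/2 by linarith)
  calc ∑ k ∈ J, a k ≤ ∑ k ∈ J, 2 ^ d * N * 8 ^ γ * h ^ (-γ) * L ^ (-((γ - 1)/2)) * |(k:ℝ)| ^ (-((γ + 1) / 2)) := by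
        apply Finset.sum_le_sum
        intro k hk
        have hkL : L ≤ |(k:ℝ)| := (Finset.mem_filter.1 hk).2
        have hk0 : 0 < |(k:ℝ)| := by linarith
        have e1 : (2 / (|(k:ℝ)| * b)) ^ γ = 8 ^ γ * h ^ (-γ) * (|(k:ℝ)| ^ (-((γ-1)/2)) * |(k:ℝ)| ^ (-((γ + 1) / 2))) := by
          rw [← Real.rpow_add hk0, show -((γ-1)/2) + -((γ + 1) / 2) = -γ by ring,
            Real.rpow_neg hh.le, Real.rpow_neg hk0.le, ← Real.inv_rpow hh.le, ← Real.inv_rpow hk0.le,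
            ← Real.mul_rpow (by norm_num) (by positivity), ← Real.mul_rpow (by positivity) (by positivity)]
          congr 1; rw [hb]; field_simp; norm_num
        have e2 : |(k:ℝ)| ^ (-((γ-1)/2)) ≤ L ^ (-((γ - 1)/2)) :=
          Real.rpow_le_rpow_of_nonpos (by linarith) hkL (by linarith)
        simp only [ha]
        rw [e1]
        calc _ = 2 ^ d * N * 8 ^ γ * h ^ (-γ) * |(k:ℝ)| ^ (-((γ-1)/2)) * |(k:ℝ)| ^ (-((γ + 1) / 2)) := by ring
          _ ≤ _ := by gcongr
    _ = 2 ^ d * N * 8 ^ γ * h ^ (-γ) * L ^ (-((γ - 1)/2)) * ∑ k ∈ J, |(k:ℝ)| ^ (-((γ + 1) / 2)) := by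
        rw [Finset.mul_sum]
    _ ≤ 2 ^ d * N * 8 ^ γ * h ^ (-γ) * L ^ (-((γ - 1)/2)) * ∑' k : ℤ, |(k:ℝ)| ^ (-((γ + 1) / 2)) := by
        gcongr
        exact hsum.sum_le_tsum _ (fun k _ => by positivity)
    _ = _ := by unfold Cout; ring

end S6

namespace S6

variable {d : ℕ}

lemma theta_lt {s p : ℝ} (hd : 2 ≤ d) (hp : 2 < p)
    (hps : s < (d : ℝ) / 2 → p < 2 * (d : ℝ) / ((d : ℝ) - 2 * s)) :
    (d:ℝ) * ((p - 2) / p) < 2 * s := by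
  have hd2 : (2:ℝ) ≤ d := by exact_mod_cast hd
  have hp0 : 0 < p := by linarith
  rw [← mul_div_assoc, div_lt_iff₀ hp0]
  rcases lt_or_ge s ((d:ℝ)/2) with h | h
  · have := hps h
    rw [lt_div_iff₀ (by linarith)] at this
    nlinarith
  · nlinarith

lemma sobolev_BL {s p : ℝ} (hs : 0 < s) (hp : 2 < p) (hθ : (d:ℝ) * ((p - 2) / p) < 2 * s) :
    ∃ Cs : ℝ, 0 ≤ Cs ∧ ∀ U : Rd d → ℂ, BL U →
      Integrable (fun ξ => ‖U ξ‖ ^ 2 * (1 + ‖ξ‖ ^ (2 * s))) volume →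
      P p U ^ 2 ≤ Cs * ∫ ξ, ‖U ξ‖ ^ 2 * (1 + ‖ξ‖ ^ (2 * s)) := by
  set vv := volume.real (Metric.closedBall (0:Rd d) 1) with hvv
  have hvv0 : 0 ≤ vv := measureReal_nonneg
  set θ := (d:ℝ) * ((p - 2) / p) with hθd
  set a : ℕ → ℝ := fun j => vv ^ ((p-2)/p) * 2 ^ (2 * s) * ((2:ℝ) ^ (θ - 2 * s)) ^ j with ha
  have hr1 : (2:ℝ) ^ (θ - 2 * s) < 1 :=
    Real.rpow_lt_one_of_one_lt_of_neg (by norm_num) (by linarith)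
  have hr0 : 0 ≤ (2:ℝ) ^ (θ - 2 * s) := by positivity
  have ha0 : ∀ j, 0 ≤ a j := fun j => by simp only [ha]; positivity
  have hasum : Summable a := (summable_geometric_of_lt_one hr0 hr1).mul_left _
  refine ⟨∑' j, a j, tsum_nonneg ha0, fun U hU hI => ?_⟩
  set idx : Rd d → ℕ := fun ξ => ⌈Real.logb 2 ‖ξ‖⌉₊ with hidx
  have hidxM : Measurable idx := by
    apply Nat.measurable_ceil.comp
    unfold Real.logb
    fun_prop
  have hidxm : ∀ j, MeasurableSet {ξ | idx ξ = j} := fun j => hidxM (measurableSet_singleton j)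
  obtain ⟨ρ, hρ⟩ := hU.2
  have hup : ∀ ξ : Rd d, ‖ξ‖ ≤ 2 ^ (idx ξ) := by
    intro ξ
    rcases eq_or_lt_of_le (norm_nonneg ξ) with h | h
    · rw [← h]; positivity
    · have := Nat.le_ceil (Real.logb 2 ‖ξ‖)
      rw [Real.logb_le_iff_le_rpow (by norm_num) h, Real.rpow_natCast] at this
      exact this
  have hlow : ∀ ξ : Rd d, ((2:ℝ) ^ (idx ξ)) ^ (2 * s) ≤ 2 ^ (2*s) * (1 + ‖ξ‖ ^ (2 * s)) := by
    intro ξ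
    have hx : 0 ≤ ‖ξ‖ ^ (2 * s) := by positivity
    have h2 : 1 ≤ (2:ℝ) ^ (2 * s) := Real.one_le_rpow (by norm_num) (by linarith)
    rcases Nat.eq_zero_or_pos (idx ξ) with h | h
    · rw [h]; simp; nlinarith
    · have h3 : idx ξ - 1 < ⌈Real.logb 2 ‖ξ‖⌉₊ := Nat.sub_lt h one_pos
      rw [Nat.lt_ceil] at h3
      have hpos : 0 < ‖ξ‖ := by
        rcases eq_or_lt_of_le (norm_nonneg ξ) with h4 | h4
        · rw [← h4] at h3; simp at h3
          exact absurd h3 (not_lt.2 (Nat.cast_nonneg _))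
        · exact h4
      rw [Real.lt_logb_iff_rpow_lt (by norm_num) hpos, Real.rpow_natCast] at h3
      have h5 : (2:ℝ) ^ (idx ξ) ≤ 2 * ‖ξ‖ := by
        have : idx ξ = (idx ξ - 1) + 1 := by omega
        rw [this, pow_succ]; linarith
      calc ((2:ℝ) ^ (idx ξ)) ^ (2 * s) ≤ (2 * ‖ξ‖) ^ (2 * s) :=
            Real.rpow_le_rpow (by positivity) h5 (by linarith)
        _ = 2 ^ (2 * s) * ‖ξ‖ ^ (2 * s) := Real.mul_rpow (by norm_num) (norm_nonneg _)
        _ ≤ _ := by gcongr; linarith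
  set n : ℕ := ⌈Real.logb 2 (max ρ 1)⌉₊ with hn
  have hJ : ∀ ξ, U ξ ≠ 0 → idx ξ ∈ Finset.range (n + 1) := by
    intro ξ hξ
    rw [Finset.mem_range, Nat.lt_succ_iff]
    have h1 : ‖ξ‖ ≤ max ρ 1 := by
      by_contra hc
      exact hξ (hρ ξ (lt_of_le_of_lt (le_max_left _ _) (not_le.1 hc)))
    rcases eq_or_lt_of_le (norm_nonneg ξ) with h | h
    · simp [hidx, ← h]
    · exact Nat.ceil_mono (Real.logb_le_logb_of_le (by norm_num) h h1)
  have hω : ∀ ξ : Rd d, 0 ≤ 1 + ‖ξ‖ ^ (2 * s) := fun ξ => by positivity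
  have key := cs_lemma hp (Finset.range (n+1)) idx hidxm hU hJ (fun ξ => 1 + ‖ξ‖ ^ (2 * s)) hI a
    (fun j _ => ha0 j) hω ?_
  · refine key.trans (mul_le_mul_of_nonneg_right (hasum.sum_le_tsum _ fun j _ => ha0 j) ?_)
    exact integral_nonneg fun ξ => mul_nonneg (by positivity) (hω ξ)
  intro j _
  set V := {ξ | idx ξ = j}.indicator U with hV
  have hVB : BL V := hU.indicator (hidxm j)
  have hb := bernstein hp hVB.1 (ρ := 2 ^ j) (by positivity) (by
    intro ξ hξ
    apply Set.indicator_of_notMem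
    intro h
    have h' : idx ξ = j := h
    have := hup ξ
    rw [h'] at this
    linarith)
  refine hb.trans ?_
  have hIV : Integrable (fun ξ => ‖V ξ‖ ^ 2 * (1 + ‖ξ‖ ^ (2 * s))) volume := by
    refine (hI.indicator (hidxm j)).congr (Eventually.of_forall fun ξ => ?_)
    by_cases h : idx ξ = j <;> simp [hV, h]
  have hQ : Q V ≤ (2 ^ (2*s) * ((2:ℝ) ^ j) ^ (-(2*s))) * ∫ ξ, ‖V ξ‖ ^ 2 * (1 + ‖ξ‖ ^ (2 * s)) := by
    rw [← integral_const_mul]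
    apply integral_mono (sq_integrable hVB.1) (hIV.const_mul _)
    intro ξ
    by_cases h : idx ξ = j
    · have := hlow ξ
      rw [h] at this
      have hpj : 0 < ((2:ℝ) ^ j) ^ (2 * s) := by positivity
      simp only
      rw [Real.rpow_neg (by positivity)]
      have h1 : 1 ≤ 2 ^ (2*s) * (((2:ℝ) ^ j) ^ (2*s))⁻¹ * (1 + ‖ξ‖ ^ (2 * s)) := by
        rw [mul_right_comm, ← div_eq_mul_inv, le_div_iff₀ hpj, one_mul]; exact this
      calc ‖V ξ‖ ^ 2 = ‖V ξ‖ ^ 2 * 1 := by ring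
        _ ≤ ‖V ξ‖ ^ 2 * (2 ^ (2*s) * (((2:ℝ) ^ j) ^ (2*s))⁻¹ * (1 + ‖ξ‖ ^ (2 * s))) := by gcongr
        _ = _ := by ring
    · have : V ξ = 0 := Set.indicator_of_notMem (s := {ξ | idx ξ = j}) h _
      simp [this]
  have hIn : 0 ≤ ∫ ξ, ‖V ξ‖ ^ 2 * (1 + ‖ξ‖ ^ (2 * s)) :=
    integral_nonneg fun ξ => mul_nonneg (by positivity) (hω ξ)
  have haj : a j = (vv * ((2:ℝ) ^ j) ^ d) ^ ((p - 2)/p) * (2 ^ (2*s) * ((2:ℝ) ^ j) ^ (-(2*s))) := by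
    simp only [ha]
    rw [Real.mul_rpow hvv0 (by positivity), ← Real.rpow_natCast (((2:ℝ) ^ (θ - 2 * s))) j,
      ← Real.rpow_natCast (2:ℝ) j, ← Real.rpow_natCast (((2:ℝ) ^ (j:ℝ))) d,
      ← Real.rpow_mul (by norm_num), ← Real.rpow_mul (by norm_num), ← Real.rpow_mul (by norm_num),
      ← Real.rpow_mul (by norm_num), sub_mul θ, sub_eq_add_neg (θ * (j:ℝ)), Real.rpow_add (by norm_num)]
    have e1 : θ * (j:ℝ) = (j:ℝ) * d * ((p-2)/p) := by rw [hθd]; ring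
    have e2 : -(2 * s * (j:ℝ)) = (j:ℝ) * -(2 * s) := by ring
    rw [e1, e2, mul_assoc (j:ℝ)]; ring
  rw [haj, mul_assoc]
  exact mul_le_mul_of_nonneg_left hQ (by positivity)

lemma integrable_mul_schwartz {U : Rd d → ℂ} (hU : MemLp U 2 volume) (φ : SchwartzMap (Rd d) ℂ) :
    Integrable (fun ξ => U ξ * φ ξ) volume :=
  hU.integrable_mul (φ.memLp 2 volume)

lemma IsFT_sub {U V u w : Rd d → ℂ} (hU : MemLp U 2 volume) (hV : MemLp V 2 volume)
    (hu : MemLp u 2 volume) (hw : MemLp w 2 volume) (h1 : IsFT U u) (h2 : IsFT V w) :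
    IsFT (fun ξ => U ξ - V ξ) (fun x => u x - w x) := by
  intro φ
  simp only [sub_mul]
  have e : ⇑(𝓕 φ : SchwartzMap (Rd d) ℂ) = 𝓕 (⇑φ) := SchwartzMap.fourier_coe φ
  rw [integral_sub (integrable_mul_schwartz hU φ) (integrable_mul_schwartz hV φ), ← e,
    integral_sub (integrable_mul_schwartz hu (𝓕 φ)) (integrable_mul_schwartz hw (𝓕 φ)), e,
    h1 φ, h2 φ]

lemma sobolev {s p : ℝ} (hs : 0 < s) (hp : 2 < p) (hθ : (d:ℝ) * ((p - 2) / p) < 2 * s) :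
    ∃ Cs : ℝ, 0 ≤ Cs ∧ ∀ U u : Rd d → ℂ, MemLp U 2 volume → MemLp u 2 volume → IsFT U u →
      Integrable (fun ξ => ‖U ξ‖ ^ 2 * (1 + ‖ξ‖ ^ (2 * s))) volume →
      LpN p u ^ 2 ≤ Cs * ∫ ξ, ‖U ξ‖ ^ 2 * (1 + ‖ξ‖ ^ (2 * s)) := by
  obtain ⟨Cs, hCs, hB⟩ := sobolev_BL (d := d) hs hp hθ
  refine ⟨Cs, hCs, fun U u hU hu hF hI => ?_⟩
  set I := ∫ ξ, ‖U ξ‖ ^ 2 * (1 + ‖ξ‖ ^ (2 * s)) with hId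
  have hI0 : 0 ≤ I := integral_nonneg fun ξ => by positivity
  set Un : ℕ → Rd d → ℂ := fun n => (Metric.closedBall (0:Rd d) n).indicator U with hUn
  have hm : ∀ n : ℕ, MeasurableSet (Metric.closedBall (0:Rd d) (n:ℝ)) :=
    fun n => Metric.isClosed_closedBall.measurableSet
  have hBL : ∀ n, BL (Un n) := fun n => ⟨hU.indicator (hm n), n, fun ξ hξ =>
    Set.indicator_of_notMem (by simpa using hξ) _⟩
  have hPn : ∀ n, P p (Un n) ^ 2 ≤ Cs * I := by
    intro n
    have hIn : Integrable (fun ξ => ‖Un n ξ‖ ^ 2 * (1 + ‖ξ‖ ^ (2 * s))) volume := by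
      refine (hI.indicator (hm n)).congr (Eventually.of_forall fun ξ => ?_)
      by_cases h : ξ ∈ Metric.closedBall (0:Rd d) (n:ℝ)
      · simp only [hUn, Set.indicator_of_mem h]
      · simp [hUn, Set.indicator_of_notMem h]
    refine (hB _ (hBL n) hIn).trans (mul_le_mul_of_nonneg_left ?_ hCs)
    apply integral_mono hIn hI
    intro ξ
    have : ‖Un n ξ‖ ≤ ‖U ξ‖ := norm_indicator_le_norm_self _ _
    simp only
    gcongr
  have hdiff : ∀ n, eLpNorm (𝓕⁻ (Un n) - u) 2 volume = eLpNorm (fun ξ => Un n ξ - U ξ) 2 volume := by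
    intro n
    have h2 : MemLp (fun ξ => Un n ξ - U ξ) 2 volume := (hBL n).1.sub hU
    have h3 : MemLp (fun ξ => 𝓕⁻ (Un n) ξ - u ξ) 2 volume := (hBL n).L2.1.sub hu
    exact (plancherel h2 (S6.MemLp.locInt h3) (IsFT_sub (hBL n).1 hU (hBL n).L2.1 hu
      (isFT_fourierInv_L1 (hBL n).integrable) hF)).2
  have hlim : Tendsto (fun n => eLpNorm (𝓕⁻ (Un n) - u) 2 volume) atTop (𝓝 0) := by
    simp only [hdiff]
    have hmem : ∀ n, MemLp (fun ξ => Un n ξ - U ξ) 2 volume := fun n => (hBL n).1.sub hU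
    have hQ : Tendsto (fun n => Q (fun ξ => Un n ξ - U ξ)) atTop (𝓝 0) := by
      have : (0:ℝ) = ∫ ξ : Rd d, (0:ℝ) := by simp
      rw [this]
      apply tendsto_integral_of_dominated_convergence (fun ξ => ‖U ξ‖ ^ 2)
      · intro n; exact (sq_integrable (hmem n)).1
      · exact sq_integrable hU
      · intro n
        refine Eventually.of_forall fun ξ => ?_
        by_cases h : ξ ∈ Metric.closedBall (0:Rd d) (n:ℝ)
        · simp only [hUn, Set.indicator_of_mem h]; simp
        · simp [hUn, Set.indicator_of_notMem h]
      · refine Eventually.of_forall fun ξ => ?_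
        apply tendsto_const_nhds.congr'
        filter_upwards [eventually_ge_atTop ⌈‖ξ‖⌉₊] with n hn
        have h : ξ ∈ Metric.closedBall (0:Rd d) (n:ℝ) := by
          simpa using Nat.ceil_le.1 hn
        simp only [hUn, Set.indicator_of_mem h]; simp
    have h2 : Tendsto (fun n => ENNReal.ofReal (√(Q (fun ξ => Un n ξ - U ξ)))) atTop (𝓝 0) := by
      have := ENNReal.tendsto_ofReal ((Real.continuous_sqrt.tendsto 0).comp hQ)
      simpa using this
    refine h2.congr fun n => ?_
    rw [Q_eq (hmem n), Real.sqrt_sq ENNReal.toReal_nonneg, ENNReal.ofReal_toReal (hmem n).eLpNorm_ne_top]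
  have him : TendstoInMeasure volume (fun n => 𝓕⁻ (Un n)) atTop u :=
    tendstoInMeasure_of_tendsto_eLpNorm (by norm_num) (fun n => (hBL n).L2.1.1) hu.1 hlim
  obtain ⟨ns, _, hns⟩ := him.exists_seq_tendsto_ae
  have hle := Lp.eLpNorm_lim_le_liminf_eLpNorm (p := ENNReal.ofReal p) (f := fun k => 𝓕⁻ (Un (ns k)))
    (fun k => (hBL _).L2.1.1) u hns
  have hbd : ∀ k, eLpNorm (𝓕⁻ (Un (ns k))) (ENNReal.ofReal p) volume ≤ ENNReal.ofReal (√(Cs * I)) := by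
    intro k
    rw [← ENNReal.ofReal_toReal ((hBL (ns k)).memLp hp).eLpNorm_ne_top]
    apply ENNReal.ofReal_le_ofReal
    apply Real.le_sqrt_of_sq_le
    exact hPn _
  have hfin : eLpNorm u (ENNReal.ofReal p) volume ≤ ENNReal.ofReal (√(Cs * I)) := by
    refine hle.trans ?_
    refine (liminf_le_liminf (Eventually.of_forall hbd)).trans ?_
    simp
  have : LpN p u ≤ √(Cs * I) := by
    unfold LpN
    exact ENNReal.toReal_le_of_le_ofReal (Real.sqrt_nonneg _) hfin
  calc LpN p u ^ 2 ≤ (√(Cs * I)) ^ 2 := pow_le_pow_left₀ ENNReal.toReal_nonneg this 2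
    _ = _ := Real.sq_sqrt (by positivity)

end S6

namespace S6

variable {d : ℕ}

/-- Admissibility at a fixed parameter. -/
structure Adm (s γ c C ε : ℝ) (g : ℝ → ℝ) : Prop where
  meas : Measurable g
  pos : ∀ r, 0 < g r
  far : ∀ r : ℝ, 1/2 ≤ |r - 1| → c * (1 + |r| ^ (2*s)) ≤ g r ∧ g r ≤ C * (1 + |r| ^ (2*s))
  near : ∀ r : ℝ, |r - 1| ≤ 1/2 → c * (ε + |r - 1| ^ γ) ≤ g r ∧ g r ≤ C * (ε + |r - 1| ^ γ)
  hε : 0 < ε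
  hε1 : ε < 1
  hc : 0 < c
  hcC : c ≤ C
  hγ : 1 < γ
  hs : 0 < s

lemma Adm.le {s γ c C ε : ℝ} {g : ℝ → ℝ} (h : Adm s γ c C ε g) (ξ : Rd d) :
    g ‖ξ‖ ≤ 2 * C * (1 + ‖ξ‖ ^ 2) ^ s := by
  have hC : 0 < C := h.hc.trans_le h.hcC
  have hs := h.hs
  have h1 : 1 ≤ (1 + ‖ξ‖ ^ 2) ^ s := Real.one_le_rpow (by nlinarith [norm_nonneg ξ]) hs.le
  rcases le_total (1/2) |‖ξ‖ - 1| with hf | hf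
  · refine (h.far _ hf).2.trans ?_
    rw [abs_of_nonneg (norm_nonneg ξ)]
    have h2 : ‖ξ‖ ^ (2 * s) ≤ (1 + ‖ξ‖ ^ 2) ^ s := by
      rw [Real.rpow_mul (norm_nonneg _)]
      apply Real.rpow_le_rpow (by positivity) _ hs.le
      rw [Real.rpow_two]; linarith
    nlinarith
  · refine (h.near _ hf).2.trans ?_
    have h2 : |‖ξ‖ - 1| ^ γ ≤ 1 :=
      Real.rpow_le_one (abs_nonneg _) (by linarith) (by linarith [h.hγ])
    nlinarith [h.hε1]

lemma Adm.integrable {s γ c C ε : ℝ} {g : ℝ → ℝ} (h : Adm s γ c C ε g) (u : HsFn d s) :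
    Integrable (fun ξ : Rd d => ‖u.ft ξ‖ ^ 2 * g ‖ξ‖) volume := by
  refine (u.memHs.const_mul (2 * C)).mono' ?_ (Eventually.of_forall fun ξ => ?_)
  · have h1 : AEStronglyMeasurable (fun ξ : Rd d => ‖u.ft ξ‖ ^ 2) volume := (sq_integrable u.ft_memL2).1
    exact h1.mul (h.meas.comp measurable_norm).aestronglyMeasurable
  · rw [Real.norm_of_nonneg (mul_nonneg (by positivity) (h.pos _).le)]
    have := h.le ξ
    calc ‖u.ft ξ‖ ^ 2 * g ‖ξ‖ ≤ ‖u.ft ξ‖ ^ 2 * (2 * C * (1 + ‖ξ‖ ^ 2) ^ s) := by gcongr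
      _ = _ := by ring

lemma Adm.q_nonneg {s γ c C ε : ℝ} {g : ℝ → ℝ} (h : Adm s γ c C ε g) (u : HsFn d s) :
    0 ≤ qeps g u := integral_nonneg fun ξ => mul_nonneg (by positivity) (h.pos _).le

/-- Element of `H^s` from a band-limited function. -/
def mkHs {s : ℝ} (hs : 0 < s) (U : Rd d → ℂ) (hU : BL U) : HsFn d s where
  toFun := 𝓕⁻ U
  ft := U
  memL2 := hU.L2.1
  ft_memL2 := hU.1
  isFT := isFT_fourierInv_L1 hU.integrable
  memHs := by
    obtain ⟨ρ, hρ⟩ := hU.2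
    refine ((sq_integrable hU.1).mul_const ((1 + (max ρ 0) ^ 2) ^ s)).mono' ?_
      (Eventually.of_forall fun ξ => ?_)
    · refine (sq_integrable hU.1).1.mul (Measurable.aestronglyMeasurable ?_)
      fun_prop
    · rw [Real.norm_of_nonneg (by positivity)]
      by_cases hc : ‖ξ‖ ≤ ρ
      · have : ‖ξ‖ ≤ max ρ 0 := hc.trans (le_max_left _ _)
        gcongr
      · rw [hρ ξ (not_le.1 hc)]; simp

lemma LpN_pos {p : ℝ} (hp : 2 < p) {f : Rd d → ℂ} (hf : MemLp f (ENNReal.ofReal p) volume)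
    (h0 : ¬ f =ᵐ[volume] (fun _ => (0:ℂ))) : 0 < LpN p f := by
  apply ENNReal.toReal_pos _ hf.eLpNorm_ne_top
  intro h
  rw [eLpNorm_eq_zero_iff hf.1 (by simp; linarith)] at h
  exact h0 h

lemma Rayleigh_mul_le {s γ c C ε p : ℝ} {g : ℝ → ℝ} (h : Adm s γ c C ε g) (hp : 2 < p) (u : HsFn d s)
    (hu : MemLp u.toFun (ENNReal.ofReal p) volume) :
    Rayleigh d s p g (fun _ => True) * LpN p u.toFun ^ 2 ≤ qeps g u := by
  by_cases h0 : u.toFun =ᵐ[volume] (fun _ => (0:ℂ))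
  · have : LpN p u.toFun = 0 := by
      unfold LpN
      rw [eLpNorm_congr_ae h0]; simp
    rw [this]; simpa using h.q_nonneg u
  · have hpos := LpN_pos hp hu h0
    rw [← le_div_iff₀ (by positivity)]
    apply csInf_le
    · refine ⟨0, ?_⟩
      rintro _ ⟨v, -, -, -, rfl⟩
      exact div_nonneg (h.q_nonneg v) (by positivity)
    · exact ⟨u, trivial, h0, hu, rfl⟩

lemma q_pos {s γ c C ε : ℝ} {g : ℝ → ℝ} (h : Adm s γ c C ε g) (u : HsFn d s)
    (h0 : ¬ u.toFun =ᵐ[volume] (fun _ => (0:ℂ))) : 0 < qeps g u := by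
  refine lt_of_le_of_ne (h.q_nonneg u) fun hz => h0 ?_
  have h1 := (integral_eq_zero_iff_of_nonneg (μ := volume) (fun ξ => mul_nonneg (by positivity) (h.pos _).le)
    (h.integrable u)).1 hz.symm
  have h2 : u.ft =ᵐ[volume] 0 := by
    filter_upwards [h1] with ξ hξ
    have h3 : ‖u.ft ξ‖ ^ 2 * g ‖ξ‖ = 0 := hξ
    rcases mul_eq_zero.1 h3 with h4 | h4
    · simpa using h4
    · exact absurd h4 (h.pos _).ne'
  have h5 := (plancherel u.ft_memL2 (S6.MemLp.locInt u.memL2) u.isFT).2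
  rw [eLpNorm_congr_ae h2, eLpNorm_zero, eLpNorm_eq_zero_iff u.memL2.1 (by norm_num)] at h5
  exact h5

lemma Adm.near_le {s γ c C ε : ℝ} {g : ℝ → ℝ} (h : Adm s γ c C ε g) {t : ℝ} (ht : t ≤ 1/2) (htg : t ^ γ = ε)
    {ξ : Rd d} (hξ : ξ ∈ Sh d t) : g ‖ξ‖ ≤ 2 * C * ε := by
  have h' : |‖ξ‖ - 1| ≤ t := hξ
  have hC : 0 < C := h.hc.trans_le h.hcC
  refine (h.near _ (h'.trans ht)).2.trans ?_
  have : |‖ξ‖ - 1| ^ γ ≤ ε := htg ▸ Real.rpow_le_rpow (abs_nonneg _) h' (by linarith [h.hγ])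
  nlinarith

lemma q_mk_le {s γ c C ε : ℝ} {g : ℝ → ℝ} (h : Adm s γ c C ε g) {t : ℝ} (ht : t ≤ 1/2) (htg : t ^ γ = ε)
    {U : Rd d → ℂ} (hU : BL U) (hsupp : ∀ ξ, ξ ∉ Sh d t → U ξ = 0) :
    qeps g (mkHs h.hs U hU) ≤ 2 * C * ε * Q U := by
  unfold Q
  rw [← integral_const_mul]
  apply integral_mono (h.integrable (mkHs h.hs U hU)) ((sq_integrable hU.1).const_mul _)
  intro ξ
  show ‖U ξ‖ ^ 2 * g ‖ξ‖ ≤ 2 * C * ε * ‖U ξ‖ ^ 2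
  by_cases hξ : ξ ∈ Sh d t
  · have := h.near_le ht htg hξ
    rw [mul_comm]; gcongr
  · rw [hsupp ξ hξ]; simp

lemma bnd_H {s γ c C ε p : ℝ} {g : ℝ → ℝ} (h : Adm s γ c C ε g) (hp : 2 < p) {t : ℝ} (ht : t ≤ 1/2)
    (htg : t ^ γ = ε) (hR : 0 < Rayleigh d s p g (fun _ => True)) :
    Bnd p (Sh d t) (2 * C * ε / Rayleigh d s p g (fun _ => True)) := by
  intro U hU hsupp
  rw [div_mul_eq_mul_div, le_div_iff₀ hR, mul_comm]
  exact (Rayleigh_mul_le h hp (mkHs h.hs U hU) (hU.memLp hp)).trans (q_mk_le h ht htg hU hsupp)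

lemma vol_Sh (hd : 2 ≤ d) {t : ℝ} (ht : 0 < t) :
    volume.real (Metric.closedBall (0:Rd d) 1) * t ≤ volume.real (Sh d t) := by
  have hsub : Metric.closedBall (0:Rd d) (1 + t) ⊆ Sh d t ∪ Metric.closedBall (0:Rd d) 1 := by
    intro ξ hξ
    rw [mem_closedBall_zero_iff] at hξ
    rcases le_total ‖ξ‖ 1 with h | h
    · right; simpa using h
    · left
      show |‖ξ‖ - 1| ≤ t
      rw [abs_of_nonneg (by linarith)]; linarith
  have hfin : volume (Sh d t) ≠ ∞ := by
    apply ne_top_of_le_ne_top (measure_closedBall_lt_top (μ := volume) (x := (0:Rd d)) (r := 1 + t)).ne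
    apply measure_mono
    intro ξ hξ
    have h' : |‖ξ‖ - 1| ≤ t := hξ
    rw [mem_closedBall_zero_iff]
    linarith [(abs_le.1 h').2]
  have h1 : volume.real (Metric.closedBall (0:Rd d) (1 + t)) ≤
      volume.real (Sh d t) + volume.real (Metric.closedBall (0:Rd d) 1) :=
    (measureReal_mono hsub (measure_union_ne_top hfin measure_closedBall_lt_top.ne)).trans
      (measureReal_union_le _ _)
  have h2 : volume.real (Metric.closedBall (0:Rd d) (1 + t)) =
      (1 + t) ^ d * volume.real (Metric.closedBall (0:Rd d) 1) := by
    have := Measure.addHaar_real_closedBall' (volume : Measure (Rd d)) 0 (r := 1 + t) (by linarith)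
    rw [this]; simp
  have h3 : 1 + t ≤ (1 + t) ^ d := le_self_pow₀ (by linarith) (by omega)
  have h4 : 0 ≤ volume.real (Metric.closedBall (0:Rd d) 1) := measureReal_nonneg
  nlinarith

lemma vol_Sh_lt (t : ℝ) : volume (Sh d t) < ∞ := by
  apply lt_of_le_of_lt _ (measure_closedBall_lt_top (μ := volume) (x := (0:Rd d)) (r := 1 + t))
  apply measure_mono
  intro ξ hξ
  have h' : |‖ξ‖ - 1| ≤ t := hξ
  rw [mem_closedBall_zero_iff]
  linarith [(abs_le.1 h').2]

lemma test_lower {p : ℝ} (hp : 2 < p) : ∃ κ : ℝ, 0 < κ ∧ ∀ t : ℝ, t ≤ 1/2 →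
    ∃ U : Rd d → ℂ, BL U ∧ (∀ ξ, ξ ∉ Sh d t → U ξ = 0) ∧ Q U = volume.real (Sh d t) ∧
      κ * volume.real (Sh d t) ≤ P p U := by
  set b := volume.real (Metric.closedBall (0:Rd d) (1/10)) with hb
  have hb0 : 0 < b := by
    apply ENNReal.toReal_pos _ measure_closedBall_lt_top.ne
    exact (Metric.measure_closedBall_pos _ _ (by norm_num)).ne'
  refine ⟨b ^ (1/p) / 2, by positivity, fun t ht => ?_⟩
  set S := Sh d t with hS
  have hSm : MeasurableSet S := measurableSet_Sh t
  set m := volume.real S with hm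
  have hm0 : 0 ≤ m := measureReal_nonneg
  set U : Rd d → ℂ := S.indicator (fun _ => 1) with hU
  have hUB : BL U := by
    refine ⟨memLp_indicator_const 2 hSm 1 (Or.inr (vol_Sh_lt t).ne), 1 + t, fun ξ hξ => ?_⟩
    apply Set.indicator_of_notMem
    intro h
    have h' : |‖ξ‖ - 1| ≤ t := h
    linarith [(abs_le.1 h').2]
  refine ⟨U, hUB, fun ξ hξ => Set.indicator_of_notMem hξ _, ?_, ?_⟩
  · unfold Q
    have : (fun ξ => ‖U ξ‖ ^ 2) = S.indicator (fun _ => (1:ℝ)) := by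
      ext ξ
      by_cases h : ξ ∈ S <;> simp [hU, h]
    rw [this, integral_indicator hSm]
    simp [hm]
  · have hpt : ∀ x ∈ Metric.closedBall (0:Rd d) (1/10), m / 2 ≤ ‖𝓕⁻ U x‖ := by
      intro x hx
      rw [mem_closedBall_zero_iff] at hx
      have e1 : 𝓕⁻ U x = ∫ ξ in S, Complex.exp (↑(2 * π * ⟪ξ, x⟫) * Complex.I) := by
        rw [Real.fourierInv_eq', ← integral_indicator hSm]
        congr 1; ext ξ
        by_cases h : ξ ∈ S <;> simp [hU, h]
      have hIntg : IntegrableOn (fun ξ : Rd d => Complex.exp (↑(2 * π * ⟪ξ, x⟫) * Complex.I)) S volume := by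
        have : IsFiniteMeasure (volume.restrict S) := ⟨by simpa using vol_Sh_lt t⟩
        refine Integrable.of_bound (C := 1) (Continuous.aestronglyMeasurable (by fun_prop))
          (Eventually.of_forall fun ξ => ?_)
        rw [Complex.norm_exp_ofReal_mul_I]
      have e2 : (𝓕⁻ U x).re = ∫ ξ in S, Real.cos (2 * π * ⟪ξ, x⟫) := by
        rw [e1]
        have := integral_re hIntg
        simp only [RCLike.re_to_complex] at this
        rw [← this]
        congr 1; ext ξ
        rw [Complex.exp_ofReal_mul_I_re]
      refine le_trans ?_ (Complex.re_le_norm _)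
      rw [e2]
      have e3 : m / 2 = ∫ ξ in S, (1/2:ℝ) := by
        simp [hm]; ring
      rw [e3]
      apply setIntegral_mono_on (integrableOn_const (vol_Sh_lt t).ne) _ hSm
      · intro ξ hξ
        have h' : |‖ξ‖ - 1| ≤ t := hξ
        have hξ2 : ‖ξ‖ ≤ 3/2 := by linarith [(abs_le.1 h').2]
        have hin : |⟪ξ, x⟫| ≤ 3/20 := by
          refine (abs_real_inner_le_norm ξ x).trans ?_
          calc ‖ξ‖ * ‖x‖ ≤ 3/2 * (1/10) := by gcongr
            _ = _ := by norm_num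
        have h3 : |2 * π * ⟪ξ, x⟫| ≤ 1 := by
          rw [abs_mul, abs_of_pos (by positivity)]
          calc 2 * π * |⟪ξ, x⟫| ≤ 2 * 3.15 * (3/20) := by
                gcongr; exact Real.pi_lt_d2.le
            _ ≤ 1 := by norm_num
        have h4 := Real.one_sub_sq_div_two_le_cos (x := 2 * π * ⟪ξ, x⟫)
        have h5 : (2 * π * ⟪ξ, x⟫) ^ 2 ≤ 1 := by rw [← sq_abs]; exact pow_le_one₀ (abs_nonneg _) h3
        linarith
      · have := hIntg.re
        simp only [RCLike.re_to_complex, Complex.exp_ofReal_mul_I_re] at this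
        exact this
    have hpw := hUB.P_rpow hp
    have hp0 : 0 < p := by linarith
    have hIntg : Integrable (fun x => ‖𝓕⁻ U x‖ ^ p) volume := by
      have := (hUB.memLp hp).integrable_norm_rpow (by simp; linarith) (by simp)
      rwa [ENNReal.toReal_ofReal hp0.le] at this
    have hlow : b * (m / 2) ^ p ≤ P p U ^ p := by
      rw [hpw]
      calc b * (m/2) ^ p = ∫ x in Metric.closedBall (0:Rd d) (1/10), (m/2) ^ p := by
            simp [hb]
        _ ≤ ∫ x in Metric.closedBall (0:Rd d) (1/10), ‖𝓕⁻ U x‖ ^ p := by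
            apply setIntegral_mono_on (integrableOn_const measure_closedBall_lt_top.ne) hIntg.integrableOn
              Metric.isClosed_closedBall.measurableSet
            intro x hx
            exact Real.rpow_le_rpow (by positivity) (hpt x hx) hp0.le
        _ ≤ _ := setIntegral_le_integral hIntg (Eventually.of_forall fun x => by positivity)
    have h6 : (b ^ (1/p) * (m/2)) ^ p ≤ P p U ^ p := by
      rwa [Real.mul_rpow (by positivity) (by positivity), ← Real.rpow_mul hb0.le,
        one_div_mul_cancel hp0.ne', Real.rpow_one]
    have h7 := (Real.rpow_le_rpow_iff (by positivity) (P_nonneg p U) hp0).1 h6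
    linarith

lemma R_upper {p : ℝ} (hd : 2 ≤ d) (hp : 2 < p) : ∃ D : ℝ, 0 < D ∧ ∀ (s γ c C ε : ℝ) (g : ℝ → ℝ) 
    (_ : Adm s γ c C ε g) (t : ℝ), 0 < t → t ≤ 1/2 → t ^ γ = ε →
    Rayleigh d s p g (fun _ => True) ≤ D * C * (ε / t) := by
  obtain ⟨κ, hκ, H⟩ := test_lower (d := d) hp
  set vv := volume.real (Metric.closedBall (0:Rd d) 1) with hvv
  have hv0 : 0 < vv := by
    apply ENNReal.toReal_pos _ measure_closedBall_lt_top.ne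
    exact (Metric.measure_closedBall_pos _ _ (by norm_num)).ne'
  refine ⟨2 / (κ ^ 2 * vv), by positivity, fun s γ c C ε g h t ht0 ht htg => ?_⟩
  obtain ⟨U, hU, hsupp, hQ, hP⟩ := H t ht
  have hC : 0 < C := h.hc.trans_le h.hcC
  have hε := h.hε
  set R := Rayleigh d s p g (fun _ => True)
  set m := volume.real (Sh d t)
  have hm : vv * t ≤ m := vol_Sh hd ht0
  have hm0 : 0 < m := lt_of_lt_of_le (by positivity) hm
  have h1 : R * P p U ^ 2 ≤ 2 * C * ε * m := by
    rw [← hQ]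
    exact (Rayleigh_mul_le h hp (mkHs h.hs U hU) (hU.memLp hp)).trans (q_mk_le h ht htg hU hsupp)
  rcases le_or_gt R 0 with hR | hR
  · exact hR.trans (by positivity)
  have h2 : R * (κ * m) ^ 2 ≤ 2 * C * ε * m :=
    le_trans (by gcongr) h1
  have h3 : R * κ ^ 2 * m ≤ 2 * C * ε := by
    have : (R * κ ^ 2 * m) * m ≤ (2 * C * ε) * m := by nlinarith
    exact le_of_mul_le_mul_right this hm0
  have h4 : R * (κ ^ 2 * (vv * t)) ≤ 2 * C * ε := by
    refine le_trans ?_ h3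
    rw [← mul_assoc]; gcongr
  have h5 : 2 / (κ ^ 2 * vv) * C * (ε / t) = 2 * C * ε / (κ ^ 2 * (vv * t)) := by
    field_simp
  rw [h5, le_div_iff₀ (by positivity)]
  exact h4

end S6

namespace S6

variable {d : ℕ}

lemma wt {W : Rd d → ℂ} (hW : MemLp W 2 volume) {G φ : Rd d → ℝ} (hG : ∀ ξ, 0 ≤ G ξ)
    (hI : Integrable (fun ξ => ‖W ξ‖ ^ 2 * G ξ) volume) {S : Set (Rd d)} (hS : MeasurableSet S)
    (hφ : Measurable φ) (hφ0 : ∀ ξ, 0 ≤ φ ξ) {k : ℝ} (hk : 0 ≤ k) (hle : ∀ ξ ∈ S, φ ξ ≤ k * G ξ) :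
    Integrable (fun ξ => ‖S.indicator W ξ‖ ^ 2 * φ ξ) volume ∧
    ∫ ξ, ‖S.indicator W ξ‖ ^ 2 * φ ξ ≤ k * ∫ ξ, ‖W ξ‖ ^ 2 * G ξ := by
  have hpt : ∀ ξ, ‖S.indicator W ξ‖ ^ 2 * φ ξ ≤ k * (‖W ξ‖ ^ 2 * G ξ) := by
    intro ξ
    by_cases h : ξ ∈ S
    · rw [Set.indicator_of_mem h]
      calc ‖W ξ‖ ^ 2 * φ ξ ≤ ‖W ξ‖ ^ 2 * (k * G ξ) := by gcongr; exact hle ξ h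
        _ = _ := by ring
    · rw [Set.indicator_of_notMem h]
      have := hG ξ
      simp; positivity
  have h1 : Integrable (fun ξ => ‖S.indicator W ξ‖ ^ 2 * φ ξ) volume := by
    refine (hI.const_mul k).mono' ?_ (Eventually.of_forall fun ξ => ?_)
    · exact (sq_integrable (hW.indicator hS)).1.mul hφ.aestronglyMeasurable
    · rw [Real.norm_of_nonneg (mul_nonneg (by positivity) (hφ0 ξ))]
      exact hpt ξ
  refine ⟨h1, ?_⟩
  rw [← integral_const_mul]
  exact integral_mono h1 (hI.const_mul k) hpt

/-- The small factor. -/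
def eta (d : ℕ) (p γ c C Cs R δ : ℝ) : ℝ :=
  3 * ((4 ^ (d * 2) * (12 * (4 * d + 1) * (⌊δ⁻¹⌋₊:ℝ) ^ (2 / p - 1))) * (2 * C / c)
    + Cout d γ * (δ⁻¹) ^ (-((γ - 1)/2)) * (2 * C / c) + R * (Cs / c))

set_option maxHeartbeats 1000000 in
lemma w_bound {s γ c C ε p δ t Cs : ℝ} {g : ℝ → ℝ} (h : Adm s γ c C ε g) (hd : 2 ≤ d) (hp : 2 < p)
    (hCs : 0 ≤ Cs)
    (hSob : ∀ U u : Rd d → ℂ, MemLp U 2 volume → MemLp u 2 volume → IsFT U u →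
      Integrable (fun ξ => ‖U ξ‖ ^ 2 * (1 + ‖ξ‖ ^ (2 * s))) volume →
      LpN p u ^ 2 ≤ Cs * ∫ ξ, ‖U ξ‖ ^ 2 * (1 + ‖ξ‖ ^ (2 * s)))
    (hδ : 0 < δ) (hδ1 : δ ≤ 1/2) (ht0 : 0 < t) (ht : t ≤ 1/2) (htg : t ^ γ = ε)
    (hR : 0 < Rayleigh d s p g (fun _ => True)) (w : HsFn d s)
    (hwp : MemLp w.toFun (ENNReal.ofReal p) volume)
    (A : Set (Rd d)) (hA : A = {ξ : Rd d | δ * t ≤ |‖ξ‖ - 1| ∧ |‖ξ‖ - 1| ≤ δ⁻¹ * t})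
    (W : Rd d → ℂ) (hWw : w.ft =ᵐ[volume] W) (hWA : ∀ ξ ∈ A, W ξ = 0) :
    Rayleigh d s p g (fun _ => True) * LpN p w.toFun ^ 2 ≤
      eta d p γ c C Cs (Rayleigh d s p g (fun _ => True)) δ * qeps g w := by
  set R := Rayleigh d s p g (fun _ => True) with hRd
  have hC : 0 < C := h.hc.trans_le h.hcC
  have hc := h.hc
  have hε := h.hε
  have hγ := h.hγ
  have hδt : δ * t ≤ 1/2 := by nlinarith
  have hδt0 : 0 < δ * t := by positivity
  have hW2 : MemLp W 2 volume := (memLp_congr_ae hWw).1 w.ft_memL2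
  have hWF : IsFT W w.toFun := isFT_congr_left hWw w.isFT
  have hWI : Integrable (fun ξ => ‖W ξ‖ ^ 2 * g ‖ξ‖) volume := by
    refine (h.integrable w).congr ?_
    filter_upwards [hWw] with ξ hξ
    rw [hξ]
  have hq : qeps g w = ∫ ξ, ‖W ξ‖ ^ 2 * g ‖ξ‖ := by
    apply integral_congr_ae
    filter_upwards [hWw] with ξ hξ
    rw [hξ]
  set q := qeps g w with hqd
  have hq0 : 0 ≤ q := h.q_nonneg w
  have hg0 : ∀ ξ : Rd d, 0 ≤ g ‖ξ‖ := fun ξ => (h.pos _).le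
  have hnm : Measurable (fun ξ : Rd d => |‖ξ‖ - 1|) := by fun_prop
  set S1 : Set (Rd d) := {ξ | |‖ξ‖ - 1| < δ * t} with hS1
  set S2 : Set (Rd d) := {ξ | δ * t ≤ |‖ξ‖ - 1| ∧ |‖ξ‖ - 1| ≤ 1/2} with hS2
  set S3 : Set (Rd d) := {ξ | 1/2 < |‖ξ‖ - 1|} with hS3
  have hS1m : MeasurableSet S1 := measurableSet_lt hnm measurable_const
  have hS2m : MeasurableSet S2 :=
    (measurableSet_le measurable_const hnm).inter (measurableSet_le hnm measurable_const)
  have hS3m : MeasurableSet S3 := measurableSet_lt measurable_const hnm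
  set U1 := S1.indicator W with hU1
  set U2 := S2.indicator W with hU2
  set U3 := S3.indicator W with hU3
  have hB1 : BL U1 := ⟨hW2.indicator hS1m, 2, fun ξ hξ => Set.indicator_of_notMem (fun hx => by
    have hx' : |‖ξ‖ - 1| < δ * t := hx
    linarith [(abs_lt.1 hx').2]) _⟩
  have hB2 : BL U2 := ⟨hW2.indicator hS2m, 2, fun ξ hξ => Set.indicator_of_notMem (fun hx => by
    have hx' : |‖ξ‖ - 1| ≤ 1/2 := hx.2
    linarith [(abs_le.1 hx').2]) _⟩
  have hsum : ∀ ξ, U3 ξ = W ξ - U1 ξ - U2 ξ := by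
    intro ξ
    rcases lt_or_ge |‖ξ‖ - 1| (δ * t) with h1 | h1
    · have m1 : ξ ∈ S1 := h1
      have m2 : ξ ∉ S2 := fun hx => absurd hx.1 (not_le.2 h1)
      have m3 : ξ ∉ S3 := fun hx => by
        have hx' : 1/2 < |‖ξ‖ - 1| := hx
        linarith
      simp [hU1, hU2, hU3, m1, m2, m3]
    · have m1 : ξ ∉ S1 := not_lt.2 h1
      rcases le_or_gt |‖ξ‖ - 1| (1/2) with h2 | h2
      · have m2 : ξ ∈ S2 := ⟨h1, h2⟩
        have m3 : ξ ∉ S3 := not_lt.2 h2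
        simp [hU1, hU2, hU3, m1, m2, m3]
      · have m2 : ξ ∉ S2 := fun hx => absurd hx.2 (not_le.2 h2)
        have m3 : ξ ∈ S3 := h2
        simp [hU1, hU2, hU3, m1, m2, m3]
  set w3 : Rd d → ℂ := fun x => w.toFun x - 𝓕⁻ U1 x - 𝓕⁻ U2 x with hw3
  have hsub1 : IsFT (fun ξ => W ξ - U1 ξ) (fun x => w.toFun x - 𝓕⁻ U1 x) :=
    IsFT_sub hW2 hB1.1 w.memL2 hB1.L2.1 hWF (isFT_fourierInv_L1 hB1.integrable)
  have hF3 : IsFT U3 w3 := by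
    have := IsFT_sub (hW2.sub hB1.1) hB2.1 (w.memL2.sub hB1.L2.1) hB2.L2.1 hsub1
      (isFT_fourierInv_L1 hB2.integrable)
    rw [funext hsum]
    exact this
  have hw32 : MemLp w3 2 volume := (w.memL2.sub hB1.L2.1).sub hB2.L2.1
  have hw3p : MemLp w3 (ENNReal.ofReal p) volume := (hwp.sub (hB1.memLp hp)).sub (hB2.memLp hp)
  -- inner
  set N := 2 * C * ε / R with hN
  have hN0 : 0 ≤ N := by positivity
  have hBnd : Bnd p (Sh d t) N := bnd_H h hp ht htg hR
  set K := ⌊δ⁻¹⌋₊ with hK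
  have hinv : 2 ≤ δ⁻¹ := by rw [le_inv_comm₀ (by norm_num) hδ]; linarith
  have hK1 : 1 ≤ K := Nat.one_le_floor_iff _ |>.2 (by linarith)
  have hKt : (K:ℝ) * (δ * t) ≤ t := by
    have : (K:ℝ) ≤ δ⁻¹ := Nat.floor_le (by positivity)
    calc (K:ℝ) * (δ * t) ≤ δ⁻¹ * (δ * t) := by gcongr
      _ = t := by field_simp
  set X1 := (4 ^ (d * 2) * (12 * (4 * d + 1) * (K:ℝ) ^ (2 / p - 1))) with hX1
  have hX10 : 0 ≤ X1 := by positivity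
  have i1 : P p U1 ^ 2 ≤ X1 * N * Q U1 := by
    have := inner_full hd hp hBnd hN0 K hK1 hδt0 hδt hKt U1 hB1 (fun ξ hξ =>
      Set.indicator_of_notMem (s := S1)
        (fun hx => hξ (show |‖ξ‖ - 1| ≤ δ * t from le_of_lt hx)) _)
    refine this.trans (le_of_eq ?_)
    rw [hX1]; ring
  have j1 : Q U1 ≤ 1 / (c * ε) * q := by
    have := (wt hW2 hg0 hWI hS1m (φ := fun _ => 1) measurable_const (fun _ => by norm_num)
      (k := 1 / (c * ε)) (by positivity) (by
        intro ξ hξ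
        have hξ' : |‖ξ‖ - 1| < δ * t := hξ
        have := (h.near ‖ξ‖ (by linarith)).1
        rw [div_mul_eq_mul_div, le_div_iff₀ (by positivity)]
        have h2 : 0 ≤ |‖ξ‖ - 1| ^ γ := by positivity
        nlinarith)).2
    rw [← hq] at this
    simp only [mul_one] at this
    exact this
  have r1 : R * P p U1 ^ 2 ≤ X1 * (2 * C / c) * q := by
    calc R * P p U1 ^ 2 ≤ R * (X1 * N * (1 / (c * ε) * q)) := by
          gcongr; exact i1.trans (by gcongr)
      _ = _ := by rw [hN]; field_simp
  -- outer
  set X2 := Cout d γ * (δ⁻¹) ^ (-((γ - 1)/2)) with hX2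
  have hX20 : 0 ≤ X2 := mul_nonneg (Cout_nonneg d γ) (by positivity)
  have k2 := wt hW2 hg0 hWI hS2m (φ := fun ξ => |‖ξ‖ - 1| ^ γ) (hnm.pow_const γ)
      (fun _ => by positivity) (k := 1 / c) (by positivity) (by
        intro ξ hξ
        have := (h.near ‖ξ‖ hξ.2).1
        rw [div_mul_eq_mul_div, le_div_iff₀ (by positivity)]
        nlinarith)
  have htγ : t ^ (-γ) = 1 / ε := by rw [Real.rpow_neg ht0.le, htg, one_div]
  have i2 := outer hp hBnd hN0 ht0 (by linarith) hγ hinv hB2 (by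
    intro ξ hξ
    have m2 : ξ ∈ S2 := by
      by_contra hx
      exact hξ (Set.indicator_of_notMem hx _)
    have hWn : W ξ ≠ 0 := by
      rw [hU2, Set.indicator_of_mem m2] at hξ
      exact hξ
    refine ⟨?_, m2.2⟩
    by_contra hx
    exact hWn (hWA ξ (by rw [hA]; exact ⟨m2.1, not_lt.1 hx⟩))) k2.1
  have r2 : R * P p U2 ^ 2 ≤ X2 * (2 * C / c) * q := by
    rw [htγ] at i2
    calc R * P p U2 ^ 2 ≤ R * ((X2 * N * (1 / ε)) * (1 / c * q)) := by
          gcongr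
          refine i2.trans ?_
          have := k2.2
          rw [← hq] at this
          gcongr
      _ = _ := by rw [hN]; field_simp
  -- far
  have k3 := wt hW2 hg0 hWI hS3m (φ := fun ξ => 1 + ‖ξ‖ ^ (2 * s)) (by fun_prop)
      (fun _ => by positivity) (k := 1 / c) (by positivity) (by
        intro ξ hξ
        have hξ' : 1/2 < |‖ξ‖ - 1| := hξ
        have := (h.far ‖ξ‖ hξ'.le).1
        rw [abs_of_nonneg (norm_nonneg ξ)] at this
        rw [div_mul_eq_mul_div, le_div_iff₀ (by positivity)]
        linarith)
  have i3 := hSob U3 w3 (hW2.indicator hS3m) hw32 hF3 k3.1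
  have r3 : R * LpN p w3 ^ 2 ≤ R * (Cs / c) * q := by
    calc R * LpN p w3 ^ 2 ≤ R * (Cs * (1 / c * q)) := by
          gcongr
          refine i3.trans ?_
          have := k3.2
          rw [← hq] at this
          gcongr
      _ = _ := by ring
  -- sum
  have htri : LpN p w.toFun ≤ P p U1 + P p U2 + LpN p w3 := by
    have e : w.toFun = fun x => (𝓕⁻ U1 x + 𝓕⁻ U2 x) + w3 x := by
      ext x; simp only [hw3]; ring
    have h12 : MemLp (fun x => 𝓕⁻ U1 x + 𝓕⁻ U2 x) (ENNReal.ofReal p) volume :=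
      (hB1.memLp hp).add (hB2.memLp hp)
    have t1 := LpN_add_le (by linarith) h12 hw3p
    have t2 := LpN_add_le (p := p) (by linarith) (hB1.memLp hp) (hB2.memLp hp)
    rw [← e] at t1
    unfold P
    linarith
  have hb0 : 0 ≤ LpN p w.toFun := ENNReal.toReal_nonneg
  have hb3 : 0 ≤ LpN p w3 := ENNReal.toReal_nonneg
  have hsq : LpN p w.toFun ^ 2 ≤ 3 * (P p U1 ^ 2 + P p U2 ^ 2 + LpN p w3 ^ 2) := by
    have := pow_le_pow_left₀ hb0 htri 2
    refine this.trans ?_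
    have hgen : ∀ x y z : ℝ, (x + y + z) ^ 2 ≤ 3 * (x ^ 2 + y ^ 2 + z ^ 2) := fun x y z => by
      nlinarith [sq_nonneg (x - y), sq_nonneg (x - z), sq_nonneg (y - z)]
    exact hgen _ _ _
  have := mul_le_mul_of_nonneg_left hsq hR.le
  unfold eta
  rw [← hK, ← hX1, ← hX2]
  refine this.trans ?_
  calc R * (3 * (P p U1 ^ 2 + P p U2 ^ 2 + LpN p w3 ^ 2))
      = 3 * (R * P p U1 ^ 2 + R * P p U2 ^ 2 + R * LpN p w3 ^ 2) := by ring
    _ ≤ 3 * (X1 * (2 * C / c) * q + X2 * (2 * C / c) * q + R * (Cs / c) * q) := by gcongr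
    _ = _ := by ring

lemma conclude {R a b qv qw qu n η : ℝ} (hR : 0 < R) (ha : 0 ≤ a) (hb : 0 ≤ b)
    (h1 : R * b ^ 2 ≤ η * qw) (hη : 0 ≤ η) (hη1 : η ≤ 1/2) (hv : R * a ^ 2 ≤ qv) (hu : qv + qw = qu)
    (hmin : qu = R * n ^ 2) (hn : n ≤ a + b) (hn0 : 0 < n) :
    0 < a ∧ b / a ≤ 4 * η ∧ qw / qv ≤ 8 * η + 16 * η ^ 2 := by
  have hn2 : n ^ 2 ≤ (a + b) ^ 2 := pow_le_pow_left₀ hn0.le hn 2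
  have hw : qw ≤ R * (2 * a * b + b ^ 2) := by nlinarith
  have h2 : R * b ^ 2 ≤ R * (η * (2 * a * b + b ^ 2)) := by nlinarith
  have h3 : b ^ 2 ≤ η * (2 * a * b + b ^ 2) := le_of_mul_le_mul_left h2 hR
  have h4 : b ≤ 4 * η * a := by
    rcases eq_or_lt_of_le hb with h0 | h0
    · rw [← h0]; positivity
    · have : b * b ≤ (4 * η * a) * b := by nlinarith
      exact le_of_mul_le_mul_right this h0
  have ha' : 0 < a := by
    rcases eq_or_lt_of_le ha with h0 | h0
    · rw [← h0] at h4 hn; nlinarith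
    · exact h0
  have hqv : 0 < qv := lt_of_lt_of_le (by positivity) hv
  refine ⟨ha', by rwa [div_le_iff₀ ha'], ?_⟩
  rw [div_le_iff₀ hqv]
  have h5 : 2 * a * b + b ^ 2 ≤ (8 * η + 16 * η ^ 2) * a ^ 2 := by
    have h6 : b ^ 2 ≤ (4 * η * a) ^ 2 := pow_le_pow_left₀ hb h4 2
    nlinarith
  calc qw ≤ R * ((8 * η + 16 * η ^ 2) * a ^ 2) := hw.trans (by gcongr)
    _ = (8 * η + 16 * η ^ 2) * (R * a ^ 2) := by ring
    _ ≤ _ := by gcongr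

end S6

namespace S6

lemma eta_tendsto {d : ℕ} {p γ c C Cs D : ℝ} (hp : 2 < p) (hγ : 1 < γ) {δ : ℝ → ℝ}
    (hδpos : ∀ ε : ℝ, 0 < ε → 0 < δ ε) (hδ0 : Tendsto δ (𝓝[>] (0:ℝ)) (𝓝 0)) :
    Tendsto (fun ε : ℝ => eta d p γ c C Cs (D * (ε / ε ^ (1/γ))) (δ ε)) (𝓝[>] (0:ℝ)) (𝓝 0) := by
  have hδ1 : Tendsto (fun ε => (δ ε)⁻¹) (𝓝[>] (0:ℝ)) atTop := by
    apply Tendsto.comp tendsto_inv_nhdsGT_zero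
    rw [tendsto_nhdsWithin_iff]
    refine ⟨hδ0, ?_⟩
    filter_upwards [self_mem_nhdsWithin] with ε hε
    exact hδpos ε hε
  have hK : Tendsto (fun ε => (⌊(δ ε)⁻¹⌋₊:ℝ)) (𝓝[>] (0:ℝ)) atTop :=
    tendsto_natCast_atTop_atTop.comp (tendsto_nat_floor_atTop.comp hδ1)
  have hexp : 0 < 1 - 2 / p := by
    have : 2 / p < 1 := by rw [div_lt_one (by linarith)]; exact hp
    linarith
  have l1 : Tendsto (fun ε => (⌊(δ ε)⁻¹⌋₊:ℝ) ^ (2 / p - 1)) (𝓝[>] (0:ℝ)) (𝓝 0) := by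
    have := (tendsto_rpow_neg_atTop hexp).comp hK
    rwa [neg_sub] at this
  have l2 : Tendsto (fun ε => ((δ ε)⁻¹) ^ (-((γ - 1)/2))) (𝓝[>] (0:ℝ)) (𝓝 0) :=
    (tendsto_rpow_neg_atTop (by linarith : 0 < (γ - 1)/2)).comp hδ1
  have l3 : Tendsto (fun ε : ℝ => ε / ε ^ (1/γ)) (𝓝[>] (0:ℝ)) (𝓝 0) := by
    have he : 0 < 1 - 1 / γ := by
      have : 1 / γ < 1 := by rw [div_lt_one (by linarith)]; exact hγ
      linarith
    have h1 : Tendsto (fun ε : ℝ => ε ^ (1 - 1/γ)) (𝓝[>] (0:ℝ)) (𝓝 0) := by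
      have := (Real.continuousAt_rpow_const 0 (1 - 1/γ) (Or.inr he.le)).tendsto
      rw [Real.zero_rpow he.ne'] at this
      exact this.mono_left nhdsWithin_le_nhds
    refine h1.congr' ?_
    filter_upwards [self_mem_nhdsWithin] with ε hε
    rw [Real.rpow_sub hε, Real.rpow_one]
  unfold eta
  have := ((((((l1.const_mul (12 * (4 * (d:ℝ) + 1))).const_mul (4 ^ (d * 2))).mul_const (2 * C / c)).add
    ((l2.const_mul (Cout d γ)).mul_const (2 * C / c))).add
    ((l3.const_mul D).mul_const (Cs / c)))).const_mul 3
  simpa using this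

lemma LpN_congr {d : ℕ} {p : ℝ} {f g : Rd d → ℂ} (h : f =ᵐ[volume] g) : LpN p f = LpN p g := by
  unfold LpN; rw [eLpNorm_congr_ae h]

lemma eta_nonneg {d : ℕ} {p γ c C Cs R δ : ℝ} (hc : 0 < c) (hC : 0 < C) (hCs : 0 ≤ Cs) (hR : 0 ≤ R)
    (hδ : 0 < δ) : 0 ≤ eta d p γ c C Cs R δ := by
  have := Cout_nonneg d γ
  unfold eta; positivity

lemma eta_mono {d : ℕ} {p γ c C Cs R R' δ : ℝ} (hc : 0 < c) (hCs : 0 ≤ Cs) (hR : R ≤ R') :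
    eta d p γ c C Cs R δ ≤ eta d p γ c C Cs R' δ := by
  unfold eta; gcongr

lemma q_split {d : ℕ} {s γ c C ε : ℝ} {g : ℝ → ℝ} (h : Adm s γ c C ε g) (u v w : HsFn d s)
    (A : Set (Rd d)) (hv : v.ft =ᵐ[volume] A.indicator u.ft) (hw : w.ft =ᵐ[volume] Aᶜ.indicator u.ft) :
    qeps g v + qeps g w = qeps g u := by
  unfold qeps
  rw [← integral_add (h.integrable v) (h.integrable w)]
  apply integral_congr_ae
  filter_upwards [hv, hw] with ξ h1 h2
  rw [h1, h2]
  by_cases hx : ξ ∈ A <;> simp [hx]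

end S6

/-- Theorem 1.4, non-symmetric case: Fourier concentration of
minimizers of `R^∘_ε(p)` near the unit sphere. -/
theorem stmt6 (d : ℕ) (hd : 2 ≤ d)
    (s γ p c C : ℝ)
    (hs : (d : ℝ) / ((d : ℝ) + 1) < s) (hγ : 1 < γ)
    (hp : 2 < p) (hps : s < (d : ℝ) / 2 → p < 2 * (d : ℝ) / ((d : ℝ) - 2 * s))
    (hc : 0 < c) (hcC : c ≤ C)
    (g : ℝ → ℝ → ℝ) (hg : IsAdmissible s γ c C g)
    (δ : ℝ → ℝ) (hδpos : ∀ ε : ℝ, 0 < ε → 0 < δ ε)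
    (hδ0 : Tendsto δ (𝓝[>] (0:ℝ)) (𝓝 0))
    (u v w : ℝ → HsFn d s)
    (hmin : ∀ ε ∈ Set.Ioo (0:ℝ) 1,
        ¬ (u ε).toFun =ᵐ[volume] (fun _ => (0 : ℂ)) ∧
        MemLp (u ε).toFun (ENNReal.ofReal p) volume ∧
        qeps (g ε) (u ε) / LpN p (u ε).toFun ^ 2
          = Rayleigh d s p (g ε) (fun _ => True))
    (hsplit : ∀ ε ∈ Set.Ioo (0:ℝ) 1,
        (u ε).toFun =ᵐ[volume] (fun x => (v ε).toFun x + (w ε).toFun x) ∧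
        (v ε).ft =ᵐ[volume] (Aset d γ ε (δ ε)).indicator (u ε).ft ∧
        (w ε).ft =ᵐ[volume] ((Aset d γ ε (δ ε))ᶜ).indicator (u ε).ft ∧
        MemLp (v ε).toFun (ENNReal.ofReal p) volume ∧
        MemLp (w ε).toFun (ENNReal.ofReal p) volume) :
    Tendsto (fun ε => LpN p (w ε).toFun / LpN p (v ε).toFun) (𝓝[>] (0:ℝ)) (𝓝 0) ∧
    Tendsto (fun ε => qeps (g ε) (w ε) / qeps (g ε) (v ε)) (𝓝[>] (0:ℝ)) (𝓝 0) ∧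
    (∀ᶠ ε in 𝓝[>] (0:ℝ), ¬ (v ε).toFun =ᵐ[volume] (fun _ => (0 : ℂ))) := by
  have hd2 : (2:ℝ) ≤ d := by exact_mod_cast hd
  have hs0 : 0 < s := lt_of_le_of_lt (by positivity) hs
  have hC : 0 < C := hc.trans_le hcC
  obtain ⟨Cs, hCs, hSob⟩ := S6.sobolev (d := d) hs0 hp (S6.theta_lt hd hp hps)
  obtain ⟨D, hD, hRup⟩ := S6.R_upper (d := d) hd hp
  set η : ℝ → ℝ := fun ε => S6.eta d p γ c C Cs ((D * C) * (ε / ε ^ (1/γ))) (δ ε) with hη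
  have hηt : Tendsto η (𝓝[>] (0:ℝ)) (𝓝 0) := S6.eta_tendsto hp hγ hδpos hδ0
  have e1 : ∀ᶠ ε in 𝓝[>] (0:ℝ), ε ∈ Set.Ioo (0:ℝ) 1 := Ioo_mem_nhdsGT one_pos
  have e2 : ∀ᶠ ε in 𝓝[>] (0:ℝ), δ ε ≤ 1/2 := hδ0.eventually_le_const (by norm_num)
  have e3 : ∀ᶠ ε in 𝓝[>] (0:ℝ), η ε ≤ 1/2 := hηt.eventually_le_const (by norm_num)
  have e4 : ∀ᶠ ε : ℝ in 𝓝[>] (0:ℝ), ε ^ (1/γ) ≤ 1/2 := by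
    have hg0 : 0 < 1 / γ := by positivity
    have := (Real.continuousAt_rpow_const 0 (1/γ) (Or.inr hg0.le)).tendsto
    rw [Real.zero_rpow hg0.ne'] at this
    exact (this.mono_left nhdsWithin_le_nhds).eventually_le_const (by norm_num)
  have main : ∀ᶠ ε in 𝓝[>] (0:ℝ), 0 < LpN p (v ε).toFun ∧
      LpN p (w ε).toFun / LpN p (v ε).toFun ≤ 4 * η ε ∧
      qeps (g ε) (w ε) / qeps (g ε) (v ε) ≤ 8 * η ε + 16 * η ε ^ 2 := by
    filter_upwards [e1, e2, e3, e4] with ε hε hδ1 hη1 ht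
    obtain ⟨hg1, hg2, hg3, hg4⟩ := hg
    have hA : S6.Adm s γ c C ε (g ε) := ⟨hg1 ε hε, hg2 ε hε, hg3 ε hε, hg4 ε hε, hε.1, hε.2, hc, hcC, hγ, hs0⟩
    obtain ⟨hu0, hup, hmin'⟩ := hmin ε hε
    obtain ⟨hs1, hs2, hs3, hvp, hwp⟩ := hsplit ε hε
    have ht0 : 0 < ε ^ (1/γ) := Real.rpow_pos_of_pos hε.1 _
    have htg : (ε ^ (1/γ)) ^ γ = ε := by
      rw [← Real.rpow_mul hε.1.le, one_div_mul_cancel (by linarith), Real.rpow_one]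
    have hn0 := S6.LpN_pos hp hup hu0
    have hq0 := S6.q_pos hA (u ε) hu0
    have hR : 0 < Rayleigh d s p (g ε) (fun _ => True) := by
      rw [← hmin']; positivity
    have hRle := hRup s γ c C ε (g ε) hA _ ht0 ht htg
    have hb := S6.w_bound hA hd hp hCs hSob (hδpos ε hε.1) hδ1 ht0 ht htg hR (w ε) hwp
      (Aset d γ ε (δ ε)) rfl _ hs3 (fun ξ hξ => by simp [hξ])
    have hb2 : Rayleigh d s p (g ε) (fun _ => True) * LpN p (w ε).toFun ^ 2 ≤ η ε * qeps (g ε) (w ε) :=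
      hb.trans (mul_le_mul_of_nonneg_right (S6.eta_mono hc hCs hRle) (hA.q_nonneg _))
    have hη0 : 0 ≤ η ε := S6.eta_nonneg hc hC hCs (hR.le.trans hRle) (hδpos ε hε.1)
    refine S6.conclude hR ENNReal.toReal_nonneg ENNReal.toReal_nonneg hb2 hη0 hη1
      (S6.Rayleigh_mul_le hA hp (v ε) hvp) (S6.q_split hA (u ε) (v ε) (w ε) _ hs2 hs3)
      (n := LpN p (u ε).toFun) ?_ ?_ hn0
    · rw [← hmin']; field_simp
    · rw [S6.LpN_congr hs1]
      exact S6.LpN_add_le (by linarith) hvp hwp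
  refine ⟨?_, ?_, ?_⟩
  · refine squeeze_zero' (Eventually.of_forall fun ε =>
      div_nonneg ENNReal.toReal_nonneg ENNReal.toReal_nonneg) (main.mono fun ε h => h.2.1) ?_
    simpa using hηt.const_mul 4
  · refine squeeze_zero' ?_ (main.mono fun ε h => h.2.2) ?_
    · filter_upwards [e1] with ε hε
      exact div_nonneg (integral_nonneg fun ξ => mul_nonneg (by positivity) (hg.2.1 ε hε _).le)
        (integral_nonneg fun ξ => mul_nonneg (by positivity) (hg.2.1 ε hε _).le)
    · simpa using (hηt.const_mul 8).add ((hηt.pow 2).const_mul 16)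
  · filter_upwards [main] with ε h h0
    have h1 := h.1
    rw [S6.LpN_congr h0] at h1
    simp [LpN] at h1
end
end

section
/- Let d ≥ 2 and k ∈ {1,…,d−1}. There exist constants c₀, c₁, c₂ > 0 with the following property: for every m, δ ∈ (0,1/2) there exist pairwise disjoint measurable sets E_j ⊂ ℝ^d, j ∈ {1,…,⌊c₀/(δ²+m)⌋}, whose Lebesgue measures satisfy |E_j| ≥ c₁ δ^{k−d} j^{k−1}, and such that the real part of ∫_{S^{d−1}} e^{i r x·ω} 1_{C^k_δ}(ω) dσ(ω) is at least c₂ δ^{d−k} j^{(1−k)/2} whenever |r−1| ≤ m and x ∈ E_j. -/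
open MeasureTheory Real Filter
open scoped ENNReal FourierTransform RealInnerProductSpace Topology

noncomputable section

/-- The `G_k`-symmetric pair of spherical caps `C^k_δ ⊆ S^{d-1}`:
points of the unit sphere whose first block of coordinates has norm `< δ`. -/
def sphCap (d k : ℕ) (δ : ℝ) : Set (Rd d) :=
  {ω | ‖ω‖ = 1 ∧ blockSq d k ω < δ ^ 2}


lemma tail_bound {f f' : ℝ → ℝ} {C R : ℝ} (hR : 0 < R)
    (hf : ∀ ρ, R ≤ ρ → HasDerivAt f (f' ρ) ρ) (hb : ∀ ρ, R ≤ ρ → |f' ρ| ≤ C / ρ ^ 2) 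
    (hC : 0 ≤ C) (ρ : ℝ) (hρ : R ≤ ρ) : |f ρ - f R| ≤ C / R := by
  have hinv : ∀ x, R ≤ x → HasDerivAt (fun x : ℝ => C / x) (-(C / x ^ 2)) x := by
    intro x hx
    have hx0 : x ≠ 0 := by linarith
    have := (hasDerivAt_inv hx0).const_mul C
    exact this.congr_deriv (by field_simp)
  have h1 : MonotoneOn (fun x => f x - C / x) (Set.Ici R) := by
    apply monotoneOn_of_hasDerivWithinAt_nonneg (f' := fun x => f' x - -(C / x ^ 2)) (convex_Ici R)
    · intro x hx
      exact ((hf x hx).sub (hinv x hx)).continuousAt.continuousWithinAt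
    · intro x hx
      rw [interior_Ici] at hx
      exact ((hf x hx.le).sub (hinv x hx.le)).hasDerivWithinAt
    · intro x hx
      rw [interior_Ici] at hx
      have := abs_le.1 (hb x hx.le)
      linarith [this.1]
  have h2 : AntitoneOn (fun x => f x + C / x) (Set.Ici R) := by
    apply antitoneOn_of_hasDerivWithinAt_nonpos (f' := fun x => f' x + -(C / x ^ 2)) (convex_Ici R)
    · intro x hx
      exact ((hf x hx).add (hinv x hx)).continuousAt.continuousWithinAt
    · intro x hx
      rw [interior_Ici] at hx
      exact ((hf x hx.le).add (hinv x hx.le)).hasDerivWithinAt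
    · intro x hx
      rw [interior_Ici] at hx
      have := abs_le.1 (hb x hx.le)
      linarith [this.2]
  have e1 := h1 (Set.mem_Ici.2 le_rfl) (Set.mem_Ici.2 hρ) hρ
  have e2 := h2 (Set.mem_Ici.2 le_rfl) (Set.mem_Ici.2 hρ) hρ
  have : 0 ≤ C / ρ := by have : 0 < ρ := by linarith
                         positivity
  simp only at e1 e2
  rw [abs_le]
  constructor <;> linarith

lemma ode_bounds {u v : ℝ → ℝ} {a : ℝ} 
    (hu : ∀ ρ, 0 < ρ → HasDerivAt u (v ρ) ρ)
    (hv : ∀ ρ, 0 < ρ → HasDerivAt v (-(1 - a / ρ ^ 2) * u ρ) ρ)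
    {ρ₀ : ℝ} (h0 : 0 < ρ₀) (hne : u ρ₀ ≠ 0) :
    ∃ m M : ℝ, 0 < m ∧ 0 < M ∧ ∀ ρ, ρ₀ ≤ ρ → m ^ 2 ≤ u ρ ^ 2 + v ρ ^ 2 ∧ 
      u ρ ^ 2 + v ρ ^ 2 ≤ M ^ 2 := by
  set b := |a| with hb
  have hE : ∀ ρ, 0 < ρ → HasDerivAt (fun ρ => u ρ ^ 2 + v ρ ^ 2) (a / ρ ^ 2 * (2 * u ρ * v ρ)) ρ := by
    intro ρ hρ
    exact (((hu ρ hρ).pow 2).add ((hv ρ hρ).pow 2)).congr_deriv (by push_cast; ring)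
  have hEb : ∀ ρ, 0 < ρ → |a / ρ ^ 2 * (2 * u ρ * v ρ)| ≤ b / ρ ^ 2 * (u ρ ^ 2 + v ρ ^ 2) := by
    intro ρ hρ
    rw [abs_mul, abs_div, abs_of_pos (by positivity : 0 < ρ ^ 2)]
    gcongr
    rw [abs_le]
    constructor <;> nlinarith [sq_nonneg (u ρ - v ρ), sq_nonneg (u ρ + v ρ)]
  have hexp : ∀ c x : ℝ, 0 < x → HasDerivAt (fun x : ℝ => Real.exp (c / x)) (Real.exp (c / x) * (-(c / x ^ 2))) x := by
    intro c x hx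
    have hx0 : x ≠ 0 := by linarith
    have := (hasDerivAt_inv hx0).const_mul c
    have h2 : HasDerivAt (fun x : ℝ => c / x) (-(c / x ^ 2)) x := by
      exact this.congr_deriv (by field_simp)
    exact h2.exp
  have h1 : MonotoneOn (fun x => (u x ^ 2 + v x ^ 2) * Real.exp (-b / x)) (Set.Ici ρ₀) := by
    apply monotoneOn_of_hasDerivWithinAt_nonneg (f' := fun x => (a / x ^ 2 * (2 * u x * v x)) * Real.exp (-b / x) + (u x ^ 2 + v x ^ 2) * (Real.exp (-b / x) * (-(-b / x ^ 2)))) (convex_Ici ρ₀)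
    · intro x hx
      have hx0 : 0 < x := lt_of_lt_of_le h0 hx
      exact ((hE x hx0).mul (hexp (-b) x hx0)).continuousAt.continuousWithinAt
    · intro x hx
      rw [interior_Ici] at hx
      have hx0 : 0 < x := lt_trans h0 hx
      exact ((hE x hx0).mul (hexp (-b) x hx0)).hasDerivWithinAt
    · intro x hx
      rw [interior_Ici] at hx
      have hx0 : 0 < x := lt_trans h0 hx
      have := (abs_le.1 (hEb x hx0)).1
      have h3 : 0 ≤ (a / x ^ 2 * (2 * u x * v x) + b / x ^ 2 * (u x ^ 2 + v x ^ 2)) * Real.exp (-b / x) := by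
        apply mul_nonneg _ (Real.exp_pos _).le
        linarith
      convert h3 using 1
      ring
  have h2 : AntitoneOn (fun x => (u x ^ 2 + v x ^ 2) * Real.exp (b / x)) (Set.Ici ρ₀) := by
    apply antitoneOn_of_hasDerivWithinAt_nonpos (f' := fun x => (a / x ^ 2 * (2 * u x * v x)) * Real.exp (b / x) + (u x ^ 2 + v x ^ 2) * (Real.exp (b / x) * (-(b / x ^ 2)))) (convex_Ici ρ₀)
    · intro x hx
      have hx0 : 0 < x := lt_of_lt_of_le h0 hx
      exact ((hE x hx0).mul (hexp b x hx0)).continuousAt.continuousWithinAt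
    · intro x hx
      rw [interior_Ici] at hx
      have hx0 : 0 < x := lt_trans h0 hx
      exact ((hE x hx0).mul (hexp b x hx0)).hasDerivWithinAt
    · intro x hx
      rw [interior_Ici] at hx
      have hx0 : 0 < x := lt_trans h0 hx
      have := (abs_le.1 (hEb x hx0)).2
      have h3 : (a / x ^ 2 * (2 * u x * v x) - b / x ^ 2 * (u x ^ 2 + v x ^ 2)) * Real.exp (b / x) ≤ 0 := by
        apply mul_nonpos_of_nonpos_of_nonneg _ (Real.exp_pos _).le
        linarith
      convert h3 using 1
      ring
  have hE0 : 0 < u ρ₀ ^ 2 + v ρ₀ ^ 2 := by positivity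
  refine ⟨√((u ρ₀ ^ 2 + v ρ₀ ^ 2) * Real.exp (-b / ρ₀)), √((u ρ₀ ^ 2 + v ρ₀ ^ 2) * Real.exp (b / ρ₀)), by positivity, by positivity, ?_⟩
  intro ρ hρ
  rw [Real.sq_sqrt (by positivity), Real.sq_sqrt (by positivity)]
  have hρ0 : 0 < ρ := by linarith
  have e1 := h1 (Set.mem_Ici.2 le_rfl) (Set.mem_Ici.2 hρ) hρ
  have e2 := h2 (Set.mem_Ici.2 le_rfl) (Set.mem_Ici.2 hρ) hρ
  simp only at e1 e2
  have hb0 : 0 ≤ b := abs_nonneg a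
  constructor
  · refine e1.trans (mul_le_of_le_one_right (by positivity) ?_)
    rw [Real.exp_le_one_iff, neg_div]
    have : 0 ≤ b / ρ := by positivity
    linarith
  · refine le_trans (le_mul_of_one_le_right (by positivity) ?_) e2
    exact Real.one_le_exp (by positivity)

lemma ode_asymp {u v : ℝ → ℝ} {a : ℝ} 
    (hu : ∀ ρ, 0 < ρ → HasDerivAt u (v ρ) ρ)
    (hv : ∀ ρ, 0 < ρ → HasDerivAt v (-(1 - a / ρ ^ 2) * u ρ) ρ)
    {ρ₀ : ℝ} (h0 : 0 < ρ₀) (hne : u ρ₀ ≠ 0) :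
    ∃ A R₀ : ℝ, 0 < A ∧ 1 ≤ R₀ ∧ ∀ (j : ℕ) (ρ : ℝ), |ρ - (2 * π * j + R₀)| ≤ 1 / 2 → A ≤ u ρ := by
  obtain ⟨m, M, hm, hM, hB⟩ := ode_bounds hu hv h0 hne
  set b := |a| with hb
  have hb0 : 0 ≤ b := abs_nonneg a
  let p : ℝ → ℝ := fun ρ => u ρ * cos ρ - v ρ * sin ρ
  let q : ℝ → ℝ := fun ρ => u ρ * sin ρ + v ρ * cos ρ
  have hp : ∀ ρ, 0 < ρ → HasDerivAt p (-(a / ρ ^ 2 * u ρ * sin ρ)) ρ := by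
    intro ρ hρ
    exact (((hu ρ hρ).mul (Real.hasDerivAt_cos ρ)).sub
      ((hv ρ hρ).mul (Real.hasDerivAt_sin ρ))).congr_deriv (by ring)
  have hq : ∀ ρ, 0 < ρ → HasDerivAt q (a / ρ ^ 2 * u ρ * cos ρ) ρ := by
    intro ρ hρ
    exact (((hu ρ hρ).mul (Real.hasDerivAt_sin ρ)).add
      ((hv ρ hρ).mul (Real.hasDerivAt_cos ρ))).congr_deriv (by ring)
  have huM : ∀ ρ, ρ₀ ≤ ρ → |u ρ| ≤ M := by
    intro ρ hρ
    apply abs_le_of_sq_le_sq _ hM.le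
    nlinarith [(hB ρ hρ).2, sq_nonneg (v ρ)]
  have hder : ∀ ρ, ρ₀ ≤ ρ → ∀ t : ℝ, |t| ≤ 1 → |a / ρ ^ 2 * u ρ * t| ≤ b * M / ρ ^ 2 := by
    intro ρ hρ t ht
    have hρ0 : 0 < ρ := by linarith
    rw [abs_mul, abs_mul, abs_div, abs_of_pos (by positivity : 0 < ρ ^ 2)]
    calc b / ρ ^ 2 * |u ρ| * |t| ≤ b / ρ ^ 2 * M * 1 := by
          gcongr
          exact huM ρ hρ
      _ = _ := by ring
  set R := max ρ₀ (8 * (b * M) / m) with hR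
  have hRρ : ρ₀ ≤ R := le_max_left _ _
  have hR0 : 0 < R := by linarith
  have hRb : b * M / R ≤ m / 8 := by
    have : 8 * (b * M) / m ≤ R := le_max_right _ _
    rw [div_le_iff₀ hm] at this
    rw [div_le_iff₀ hR0]
    linarith
  have hpt : ∀ ρ, R ≤ ρ → |p ρ - p R| ≤ m / 8 := fun ρ hρ =>
    (tail_bound hR0 (fun x hx => hp x (by linarith)) (fun x hx => by
      rw [abs_neg]; exact hder x (by linarith) _ (Real.abs_sin_le_one x)) (by positivity) ρ hρ).trans hRb
  have hqt : ∀ ρ, R ≤ ρ → |q ρ - q R| ≤ m / 8 := fun ρ hρ =>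
    (tail_bound hR0 (fun x hx => hq x (by linarith)) (fun x hx => hder x (by linarith) _ (Real.abs_cos_le_one x)) (by positivity) ρ hρ).trans hRb
  let z : ℂ := ⟨p R, q R⟩
  have hz1 : ‖z‖ * cos z.arg = p R := Complex.norm_mul_cos_arg z
  have hz2 : ‖z‖ * sin z.arg = q R := Complex.norm_mul_sin_arg z
  have hzm : m ≤ ‖z‖ := by
    apply le_of_sq_le_sq _ (norm_nonneg z)
    have h1 : ‖z‖ ^ 2 = u R ^ 2 + v R ^ 2 := by
      have h3 := Real.sin_sq_add_cos_sq z.arg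
      have h4 := Real.sin_sq_add_cos_sq R
      have : ‖z‖ ^ 2 = p R ^ 2 + q R ^ 2 := by
        rw [← hz1, ← hz2]; linear_combination (-‖z‖ ^ 2) * h3
      rw [this]
      simp only [p, q]
      linear_combination (u R ^ 2 + v R ^ 2) * h4
    rw [h1]
    exact (hB R hRρ).1
  obtain ⟨N, hN⟩ := exists_nat_gt ((max R 1 + 1 - z.arg) / (2 * π))
  rw [div_lt_iff₀ (by positivity)] at hN
  have hN1 := le_max_left R 1
  have hN2 := le_max_right R 1
  refine ⟨m / 2, z.arg + 2 * π * N, by positivity, by linarith, ?_⟩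
  intro j ρ hρ
  have hρ' := abs_le.1 hρ
  have hj : 0 ≤ 2 * π * j := by positivity
  have hρR : R ≤ ρ := by linarith [hρ'.1]
  have hcos : 7 / 8 ≤ cos (ρ - z.arg) := by
    have h1 : cos (ρ - z.arg) = cos (ρ - (2 * π * j + (z.arg + 2 * π * N))) := by
      rw [← Real.cos_add_nat_mul_two_pi (ρ - (2 * π * j + (z.arg + 2 * π * N))) (j + N)]
      congr 1
      push_cast
      ring
    rw [h1]
    have := Real.one_sub_sq_div_two_le_cos (x := ρ - (2 * π * j + (z.arg + 2 * π * N)))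
    have h2 : (ρ - (2 * π * j + (z.arg + 2 * π * N))) ^ 2 ≤ (1 / 2) ^ 2 := by
      rw [← sq_abs]
      gcongr
    linarith
  have hu1 : u ρ = p ρ * cos ρ + q ρ * sin ρ := by
    simp only [p, q]
    linear_combination (-u ρ) * Real.sin_sq_add_cos_sq ρ
  have hu2 : u ρ = ‖z‖ * cos (ρ - z.arg) + (p ρ - p R) * cos ρ + (q ρ - q R) * sin ρ := by
    rw [hu1, Real.cos_sub, ← hz1, ← hz2]
    ring
  have e1 : |(p ρ - p R) * cos ρ| ≤ m / 8 := by
    rw [abs_mul]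
    exact (mul_le_of_le_one_right (abs_nonneg _) (Real.abs_cos_le_one ρ)).trans (hpt ρ hρR)
  have e2 : |(q ρ - q R) * sin ρ| ≤ m / 8 := by
    rw [abs_mul]
    exact (mul_le_of_le_one_right (abs_nonneg _) (Real.abs_sin_le_one ρ)).trans (hqt ρ hρR)
  have e3 : m * (7 / 8) ≤ ‖z‖ * cos (ρ - z.arg) := by gcongr
  rw [hu2]
  linarith [(abs_le.1 e1).1, (abs_le.1 e2).1]

lemma exists_sphere_measure (k : ℕ) (hk : 1 ≤ k) : ∃ ν : Measure (EuclideanSpace ℝ (Fin k)),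
    IsProbabilityMeasure ν ∧ (∀ᵐ θ ∂ν, ‖θ‖ = 1) ∧
    ∀ L : EuclideanSpace ℝ (Fin k) ≃ₗᵢ[ℝ] EuclideanSpace ℝ (Fin k), ν.map L = ν := by
  have : Nonempty (Fin k) := ⟨⟨0, hk⟩⟩
  let N : EuclideanSpace ℝ (Fin k) → EuclideanSpace ℝ (Fin k) := fun x => ‖x‖⁻¹ • x
  have hN : Measurable N := by fun_prop
  let μ : Measure (EuclideanSpace ℝ (Fin k)) := volume.restrict (Metric.ball 0 1)
  have hμ0 : μ Set.univ ≠ 0 := by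
    simp only [μ, Measure.restrict_apply_univ]
    exact (Metric.measure_ball_pos _ _ one_pos).ne'
  have hμt : μ Set.univ ≠ ⊤ := by
    simp only [μ, Measure.restrict_apply_univ]
    exact measure_ball_lt_top.ne
  refine ⟨(μ Set.univ)⁻¹ • μ.map N, ⟨?_⟩, ?_, ?_⟩
  · rw [Measure.smul_apply, Measure.map_apply hN MeasurableSet.univ, Set.preimage_univ, smul_eq_mul,
      ENNReal.inv_mul_cancel hμ0 hμt]
  · apply Measure.ae_smul_measure
    rw [ae_map_iff hN.aemeasurable (by measurability)]
    have : ∀ᵐ x ∂μ, x ≠ 0 := by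
      apply ae_restrict_of_ae
      exact Measure.ae_ne _ _
    filter_upwards [this] with x hx
    simp only [N, norm_smul, norm_inv, norm_norm]
    field_simp
  · intro L
    rw [Measure.map_smul, Measure.map_map L.continuous.measurable hN]
    congr 1
    have h1 : (L ∘ N) = N ∘ L := by
      funext x
      simp [N]
    rw [h1, ← Measure.map_map hN L.continuous.measurable]
    congr 1
    have := (L.measurePreserving.restrict_preimage (s := Metric.ball 0 1) measurableSet_ball).map_eq
    simpa [μ] using this

section
variable {k : ℕ} {ν : Measure (EuclideanSpace ℝ (Fin k))}

lemma deriv_param_cos {X : Type*} [MeasurableSpace X] {ν : Measure X} [IsFiniteMeasure ν] 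
    {a b c : X → ℝ} (ha : Measurable a) (hb : Measurable b)
    (hc : Measurable c) (hb1 : ∀ᵐ x ∂ν, |b x| ≤ 1) (hc1 : ∀ᵐ x ∂ν, |c x| ≤ 1) (s : ℝ) :
    HasDerivAt (fun s : ℝ => ∫ x, c x * cos (a x + s * b x) ∂ν)
      (∫ x, -(c x * b x * sin (a x + s * b x)) ∂ν) s := by
  refine (hasDerivAt_integral_of_dominated_loc_of_deriv_le (s := Set.univ) (bound := fun _ => 1)
    (F := fun s x => c x * cos (a x + s * b x)) (F' := fun s x => -(c x * b x * sin (a x + s * b x)))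
    Filter.univ_mem ?_ ?_ ?_ ?_ ?_ ?_).2
  · exact Eventually.of_forall fun s => (by fun_prop : Measurable _).aestronglyMeasurable
  · refine Integrable.of_bound (by fun_prop : Measurable _).aestronglyMeasurable 1 ?_
    filter_upwards [hc1] with x hx
    rw [Real.norm_eq_abs, abs_mul]
    exact mul_le_one₀ hx (abs_nonneg _) (abs_cos_le_one _)
  · exact (by fun_prop : Measurable _).aestronglyMeasurable
  · filter_upwards [hc1, hb1] with x hx hx' t _
    rw [Real.norm_eq_abs, abs_neg, abs_mul, abs_mul]
    exact mul_le_one₀ (mul_le_one₀ hx (abs_nonneg _) hx') (abs_nonneg _) (abs_sin_le_one _)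
  · exact integrable_const _
  · refine Eventually.of_forall fun x t _ => ?_
    have h1 : HasDerivAt (fun s : ℝ => a x + s * b x) (b x) t := by
      simpa using ((hasDerivAt_id t).mul_const (b x)).const_add (a x)
    exact (h1.cos.const_mul (c x)).congr_deriv (by ring)

lemma deriv_param_sin {X : Type*} [MeasurableSpace X] {ν : Measure X} [IsFiniteMeasure ν] 
    {a b c : X → ℝ} (ha : Measurable a) (hb : Measurable b)
    (hc : Measurable c) (hb1 : ∀ᵐ x ∂ν, |b x| ≤ 1) (hc1 : ∀ᵐ x ∂ν, |c x| ≤ 1) (s : ℝ) :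
    HasDerivAt (fun s : ℝ => ∫ x, c x * sin (a x + s * b x) ∂ν)
      (∫ x, c x * b x * cos (a x + s * b x) ∂ν) s := by
  have := deriv_param_cos (ha.sub_const (π / 2)) hb hc hb1 hc1 s
  have e : ∀ u v : ℝ, u - π / 2 + v = u + v - π / 2 := fun u v => by ring
  simpa only [e, Real.cos_sub_pi_div_two, Real.sin_sub_pi_div_two, mul_neg, neg_neg] using this

lemma sphere_radial (hL : ∀ L : EuclideanSpace ℝ (Fin k) ≃ₗᵢ[ℝ] EuclideanSpace ℝ (Fin k), ν.map L = ν)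
    {w w' : EuclideanSpace ℝ (Fin k)} (h : ‖w‖ = ‖w'‖) :
    ∫ θ, cos ⟪θ, w⟫ ∂ν = ∫ θ, cos ⟪θ, w'⟫ ∂ν := by
  let L := (ℝ ∙ (w - w'))ᗮ.reflection
  have hw : L w = w' := Submodule.reflection_sub h
  conv_rhs => rw [← hL L]
  rw [integral_map L.continuous.measurable.aemeasurable (by fun_prop)]
  rw [← hw]
  simp
  
end

lemma abs_coord_le {k : ℕ} (θ : EuclideanSpace ℝ (Fin k)) (h : ‖θ‖ = 1) (i : Fin k) : |θ i| ≤ 1 := by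
  rw [← h, ← Real.norm_eq_abs]
  exact PiLp.norm_apply_le θ i

lemma bessel_lower (n : ℕ) {ν : Measure (EuclideanSpace ℝ (Fin (n + 1)))} [IsProbabilityMeasure ν]
    (h1 : ∀ᵐ θ ∂ν, ‖θ‖ = 1)
    (hL : ∀ L : EuclideanSpace ℝ (Fin (n + 1)) ≃ₗᵢ[ℝ] EuclideanSpace ℝ (Fin (n + 1)), ν.map L = ν) :
    ∃ A R₀ : ℝ, 0 < A ∧ 1 ≤ R₀ ∧ ∀ (j : ℕ) (w : EuclideanSpace ℝ (Fin (n + 1))),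
      |‖w‖ - (2 * π * j + R₀)| ≤ 1 / 2 → A ≤ ‖w‖ ^ ((n : ℝ) / 2) * ∫ θ, cos ⟪θ, w⟫ ∂ν := by
  have hco : ∀ i : Fin (n + 1), ∀ᵐ θ ∂ν, |θ i| ≤ 1 := fun i => by
    filter_upwards [h1] with θ h
    exact abs_coord_le θ h i
  have hmeas : ∀ i : Fin (n + 1), Measurable fun θ : EuclideanSpace ℝ (Fin (n + 1)) => θ i := fun i => by
    fun_prop
  let e : Fin (n + 1) → EuclideanSpace ℝ (Fin (n + 1)) := fun i => EuclideanSpace.single i 1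
  have he : ∀ i θ, ⟪θ, e i⟫ = θ i := fun i θ => by simp [e, EuclideanSpace.inner_single_right]
  let Ψ : ℝ → ℝ := fun ρ => ∫ θ, cos (ρ * θ 0) ∂ν
  let Ψ₁ : ℝ → ℝ := fun ρ => ∫ θ, -(θ 0 * sin (ρ * θ 0)) ∂ν
  let Ψ₂ : ℝ → ℝ := fun ρ => ∫ θ, -(θ 0 * θ 0 * cos (ρ * θ 0)) ∂ν
  have hrad : ∀ w, ∫ θ, cos ⟪θ, w⟫ ∂ν = Ψ ‖w‖ := by
    intro w
    rw [sphere_radial hL (w := w) (w' := ‖w‖ • e 0) (by simp [e, norm_smul])]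
    simp only [inner_smul_right, he, Ψ]
  have hΨ : ∀ ρ, HasDerivAt Ψ (Ψ₁ ρ) ρ := by
    intro ρ
    have := deriv_param_cos (ν := ν) (a := fun _ => 0) (c := fun _ => 1) measurable_const (hmeas 0) measurable_const
      (hco 0) (by simp) ρ
    simpa [Ψ, Ψ₁] using this
  have hΨ₁ : ∀ ρ, HasDerivAt Ψ₁ (Ψ₂ ρ) ρ := by
    intro ρ
    have := (deriv_param_sin (ν := ν) (a := fun _ => 0) (c := fun θ => θ 0) measurable_const (hmeas 0) (hmeas 0)
      (hco 0) (hco 0) ρ).neg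
    simpa [Ψ₁, Ψ₂, integral_neg, Pi.neg_def] using this
  have hoff : ∀ ρ, 0 < ρ → ∀ i : Fin (n + 1), i ≠ 0 → 
      ∫ θ, -(θ i * θ i * cos (ρ * θ 0)) ∂ν = Ψ₁ ρ / ρ := by
    intro ρ hρ i hi
    have hsq : ∀ s : ℝ, 0 < ρ ^ 2 + s ^ 2 := fun s => by positivity
    have hroot : ∀ s : ℝ, HasDerivAt (fun s => √(ρ ^ 2 + s ^ 2)) (s / √(ρ ^ 2 + s ^ 2)) s := by
      intro s
      have h1 : HasDerivAt (fun s : ℝ => ρ ^ 2 + s ^ 2) (2 * s) s := by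
        simpa using (hasDerivAt_pow 2 s).const_add (ρ ^ 2)
      refine (h1.sqrt (hsq s).ne').congr_deriv ?_
      have := (Real.sqrt_pos.2 (hsq s)).ne'
      field_simp
    have hcomp : (fun s : ℝ => ∫ θ, cos (ρ * θ 0 + s * θ i) ∂ν) = fun s => Ψ √(ρ ^ 2 + s ^ 2) := by
      funext s
      have := hrad (ρ • e 0 + s • e i)
      have hn : ‖ρ • e 0 + s • e i‖ = √(ρ ^ 2 + s ^ 2) := by
        rw [eq_comm, Real.sqrt_eq_iff_mul_self_eq (hsq s).le (norm_nonneg _), ← sq, 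
          norm_add_sq_real]
        simp [e, norm_smul, inner_smul_left, inner_smul_right, EuclideanSpace.inner_single_left, hi, hi.symm]
      rw [hn] at this
      rw [← this]
      simp only [inner_add_right, inner_smul_right, he]
    have hd1 : ∀ s : ℝ, ∫ θ, -(θ i * sin (ρ * θ 0 + s * θ i)) ∂ν = Ψ₁ √(ρ ^ 2 + s ^ 2) * (s / √(ρ ^ 2 + s ^ 2)) := by
      intro s
      have a1 := deriv_param_cos (ν := ν) (a := fun θ => ρ * θ 0) (c := fun _ => 1) (by fun_prop) (hmeas i) measurable_const
        (hco i) (by simp) s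
      simp only [one_mul] at a1
      rw [hcomp] at a1
      exact a1.unique ((hΨ _).comp s (hroot s))
    have a2 := (deriv_param_sin (ν := ν) (a := fun θ => ρ * θ 0) (c := fun θ => θ i) (by fun_prop) (hmeas i) (hmeas i)
        (hco i) (hco i) 0).neg
    have a3 : (-fun s : ℝ => ∫ θ, θ i * sin (ρ * θ 0 + s * θ i) ∂ν) = fun s : ℝ => Ψ₁ √(ρ ^ 2 + s ^ 2) * (s / √(ρ ^ 2 + s ^ 2)) := by
      funext s
      rw [← hd1, integral_neg]; rfl
    rw [a3] at a2
    have a4 : HasDerivAt (fun s : ℝ => Ψ₁ √(ρ ^ 2 + s ^ 2) * (s / √(ρ ^ 2 + s ^ 2))) (Ψ₁ ρ / ρ) 0 := by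
      have b1 := ((hΨ₁ _).comp 0 (hroot 0)).mul ((hasDerivAt_id (0:ℝ)).div (hroot 0) (Real.sqrt_pos.2 (hsq 0)).ne')
      refine b1.congr_deriv ?_
      simp [Real.sqrt_sq hρ.le]
      field_simp
    have := a2.unique a4
    rw [← this, integral_neg]
    simp
  have hode : ∀ ρ, 0 < ρ → Ψ₂ ρ = -Ψ ρ - n * (Ψ₁ ρ / ρ) := by
    intro ρ hρ
    have s1 : ∑ i : Fin (n + 1), ∫ θ, -(θ i * θ i * cos (ρ * θ 0)) ∂ν = - Ψ ρ := by
      rw [← integral_finsetSum]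
      · simp only [Ψ]
        rw [← integral_neg]
        apply integral_congr_ae
        filter_upwards [h1] with θ hθ
        have : ∑ i, θ i * θ i = 1 := by
          have := EuclideanSpace.real_norm_sq_eq θ
          rw [hθ] at this
          simp only [← sq]
          linarith
        rw [Finset.sum_neg_distrib, ← Finset.sum_mul, this, one_mul]
      · intro i _
        refine Integrable.of_bound (by fun_prop : Measurable _).aestronglyMeasurable 1 ?_
        filter_upwards [hco i] with x hx
        rw [Real.norm_eq_abs, abs_neg, abs_mul, abs_mul]
        exact mul_le_one₀ (mul_le_one₀ hx (abs_nonneg _) hx) (abs_nonneg _) (abs_cos_le_one _)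
    rw [Fin.sum_univ_succ, Finset.sum_congr rfl (fun i _ => hoff ρ hρ i.succ (Fin.succ_ne_zero i))] at s1
    simp only [Finset.sum_const, Finset.card_univ, Fintype.card_fin, nsmul_eq_mul] at s1
    simp only [Ψ₂]
    linarith
  set α : ℝ := (n : ℝ) / 2 with hα
  have hrp : ∀ β ρ : ℝ, 0 < ρ → HasDerivAt (fun ρ : ℝ => ρ ^ β) (β * ρ ^ (β - 1)) ρ := fun β ρ hρ =>
    Real.hasDerivAt_rpow_const (Or.inl hρ.ne')
  have hu : ∀ ρ, 0 < ρ → HasDerivAt (fun ρ => ρ ^ α * Ψ ρ) (α * ρ ^ (α - 1) * Ψ ρ + ρ ^ α * Ψ₁ ρ) ρ :=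
    fun ρ hρ => (hrp α ρ hρ).mul (hΨ ρ)
  have hv : ∀ ρ, 0 < ρ → HasDerivAt (fun ρ => α * ρ ^ (α - 1) * Ψ ρ + ρ ^ α * Ψ₁ ρ) 
      (-(1 - α * (α - 1) / ρ ^ 2) * (ρ ^ α * Ψ ρ)) ρ := by
    intro ρ hρ
    have := ((((hrp (α - 1) ρ hρ).const_mul α).mul (hΨ ρ)).add ((hrp α ρ hρ).mul (hΨ₁ ρ)))
    refine this.congr_deriv ?_
    rw [hode ρ hρ, Real.rpow_sub_one hρ.ne', Real.rpow_sub_one hρ.ne']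
    have : (n : ℝ) = 2 * α := by rw [hα]; ring
    rw [this]
    field_simp
    ring
  have hΨ0 : ∃ ρ₀, 0 < ρ₀ ∧ Ψ ρ₀ ≠ 0 := by
    have h0 : Ψ 0 ≠ 0 := by simp [Ψ]
    have hc : ∀ᶠ x in nhds 0, Ψ x ≠ 0 := (hΨ 0).continuousAt.eventually_ne h0
    obtain ⟨ε, hε, hb⟩ := Metric.eventually_nhds_iff.1 hc
    refine ⟨ε / 2, by positivity, hb ?_⟩
    rw [Real.dist_eq, sub_zero, abs_of_pos (by positivity)]
    linarith
  obtain ⟨ρ₀, h0, hne⟩ := hΨ0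
  obtain ⟨A, R₀, hA, hR₀, hj⟩ := ode_asymp hu hv h0 (mul_ne_zero (Real.rpow_pos_of_pos h0 _).ne' hne)
  refine ⟨A, R₀, hA, hR₀, fun j w hw => ?_⟩
  rw [hrad]
  exact hj j _ hw

lemma hemisphere_finite (d : ℕ) {v : Rd (d + 1)} (hv : ‖v‖ = 1) :
    μH[(d : ℝ)] {x : Rd (d + 1) | ‖x‖ = 1 ∧ ⟪v, x⟫ ≤ 0} < ⊤ := by
  have hfact : Fact (Module.finrank ℝ (Rd (d + 1)) = d + 1) := ⟨by simp⟩
  have hv0 : v ≠ 0 := by rintro rfl; simp at hv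
  have hrank : Module.finrank ℝ (ℝ ∙ v)ᗮ = d := Submodule.finrank_orthogonal_span_singleton hv0
  have hsm : ContDiff ℝ 1 (fun w : (ℝ ∙ v)ᗮ => stereoInvFunAux v (w : Rd (d + 1))) :=
    contDiff_stereoInvFunAux.comp (ℝ ∙ v)ᗮ.subtypeL.contDiff
  obtain ⟨K, hK⟩ := hsm.contDiffOn.exists_lipschitzOnWith one_ne_zero
    (convex_closedBall (0 : (ℝ ∙ v)ᗮ) 2) (isCompact_closedBall _ _)
  have hfin : μH[(d : ℝ)] (Metric.closedBall (0 : (ℝ ∙ v)ᗮ) 2) < ⊤ := by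
    have := isAddHaarMeasure_hausdorffMeasure (E := (ℝ ∙ v)ᗮ)
    rw [hrank] at this
    exact (isCompact_closedBall _ _).measure_lt_top
  have hle := hK.hausdorffMeasure_image_le (d := d) (by positivity)
  refine lt_of_le_of_lt (measure_mono ?_) (lt_of_le_of_lt hle (ENNReal.mul_lt_top (by finiteness) hfin))
  rintro x ⟨hx1, hx2⟩
  have hxv : x ≠ v := by
    rintro rfl
    rw [real_inner_self_eq_norm_sq, hx1] at hx2
    norm_num at hx2
  refine ⟨stereoToFun v x, ?_, ?_⟩
  · rw [mem_closedBall_zero_iff, stereoToFun_apply, norm_smul]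
    have h1 : ‖(ℝ ∙ v)ᗮ.orthogonalProjectionOnto x‖ ≤ 1 := by
      rw [← hx1]; exact Submodule.norm_orthogonalProjectionOnto_apply_le _ x
    have h2 : ‖2 / ((1 : ℝ) - innerSL ℝ v x)‖ ≤ 2 := by
      rw [innerSL_apply_apply, Real.norm_eq_abs, abs_of_pos (by apply div_pos; norm_num; linarith), div_le_iff₀ (by linarith)]
      linarith
    calc _ ≤ 2 * (1 : ℝ) := by gcongr
      _ = 2 := by norm_num
  · have := stereo_left_inv hv (x := ⟨x, by simpa using hx1⟩) hxv
    exact congrArg Subtype.val this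

lemma sphere_finite (d : ℕ) : μH[(d : ℝ)] {x : Rd (d + 1) | ‖x‖ = 1} < ⊤ := by
  let v : Rd (d + 1) := EuclideanSpace.single 0 1
  have hv : ‖v‖ = 1 := by simp [v]
  refine lt_of_le_of_lt (measure_mono ?_) (lt_of_le_of_lt (measure_union_le _ _) (ENNReal.add_lt_top.2 
    ⟨hemisphere_finite d hv, hemisphere_finite d (v := -v) (by simpa using hv)⟩))
  intro x hx
  rcases le_total ⟪v, x⟫ 0 with h | h
  · exact Or.inl ⟨hx, h⟩
  · exact Or.inr ⟨hx, by simpa using h⟩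

lemma cap_lower (n k : ℕ) : ∃ c : ℝ, 0 < c ∧ ∀ δ ∈ Set.Ioo (0:ℝ) (1/2),
    ENNReal.ofReal (c * δ ^ n) ≤ μH[((n + k : ℕ) : ℝ)] (sphCap (n + (k + 1)) (k + 1) δ) := by
  set ε : ℝ := 1 / (n + k + 1) with hε
  have hε0 : 0 < ε := by positivity
  refine ⟨(2 * ε) ^ (n + k), by positivity, ?_⟩
  intro δ ⟨hδ0, hδ1⟩
  let a : Fin (n + k) → ℝ := fun i => if (i : ℕ) < n then ε * δ else ε
  have ha0 : ∀ i, 0 ≤ a i := fun i => by simp only [a]; split_ifs <;> positivity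
  let P : Rd (n + (k + 1)) → (Fin (n + k) → ℝ) := fun x i => x (Fin.castSucc i : Fin (n + k + 1))
  have hP : LipschitzWith 1 P := by
    rw [lipschitzWith_iff_dist_le_mul]
    intro x y
    rw [NNReal.coe_one, one_mul, dist_pi_le_iff dist_nonneg]
    intro i
    rw [dist_eq_norm, dist_eq_norm]
    exact PiLp.norm_apply_le (x - y) (Fin.castSucc i : Fin (n + k + 1))
  have h1 := hP.hausdorffMeasure_image_le (d := ((n + k : ℕ) : ℝ)) (by positivity) (sphCap (n + (k + 1)) (k + 1) δ)
  simp only [ENNReal.coe_one, ENNReal.one_rpow, one_mul] at h1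
  refine le_trans ?_ h1
  have h2 : (μH[((n + k : ℕ) : ℝ)] : Measure (Fin (n + k) → ℝ)) = volume := by
    have := hausdorffMeasure_pi_real (ι := Fin (n + k))
    rwa [Fintype.card_fin] at this
  rw [h2]
  have h3 : volume (Set.Icc (-a) a) = ENNReal.ofReal ((2 * ε) ^ (n + k) * δ ^ n) := by
    rw [Real.volume_Icc_pi, ← ENNReal.ofReal_prod_of_nonneg]
    · congr 1
      have : ∀ i, a i - (-a) i = 2 * a i := fun i => by simp; ring
      simp only [this]
      rw [Fin.prod_univ_add]
      simp [a]
      ring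
    · intro i _
      have := ha0 i
      simp; linarith
  rw [← h3]
  apply measure_mono
  intro w hw
  have hwa : ∀ i, w i ^ 2 ≤ a i ^ 2 := fun i => by
    rw [sq_le_sq, abs_of_nonneg (ha0 i), abs_le]
    exact ⟨hw.1 i, hw.2 i⟩
  have hN : (n + k : ℝ) * ε ^ 2 < 1 := by
    rw [hε]
    field_simp
    nlinarith [(Nat.cast_nonneg n : (0:ℝ) ≤ n), (Nat.cast_nonneg k : (0:ℝ) ≤ k)]
  have hS : ∑ i, w i ^ 2 ≤ 1 := by
    calc ∑ i, w i ^ 2 ≤ ∑ i : Fin (n + k), ε ^ 2 := by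
          apply Finset.sum_le_sum
          intro i _
          refine (hwa i).trans ?_
          gcongr
          simp only [a]; split_ifs
          · nlinarith
          · exact le_rfl
      _ = (n + k : ℝ) * ε ^ 2 := by simp
      _ ≤ 1 := hN.le
  let ω : Rd (n + k + 1) := WithLp.toLp 2 (Fin.snoc (α := fun _ => ℝ) w (√(1 - ∑ i, w i ^ 2)))
  refine ⟨ω, ⟨?_, ?_⟩, ?_⟩
  · have : ‖ω‖ ^ 2 = 1 := by
      rw [EuclideanSpace.real_norm_sq_eq, Fin.sum_univ_castSucc]
      simp only [ω, Fin.snoc_castSucc, Fin.snoc_last]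
      rw [Real.sq_sqrt (by linarith)]
      ring
    exact (pow_eq_one_iff_of_nonneg (norm_nonneg ω) two_ne_zero).1 this
  · have hb : blockSq (n + (k + 1)) (k + 1) ω = ∑ i : Fin n, w (Fin.castAdd k i) ^ 2 := by
      unfold blockSq
      change ∑ i : Fin (n + k + 1), (if (i : ℕ) < n + (k + 1) - (k + 1) then ω i ^ 2 else 0) = _
      rw [Fin.sum_univ_castSucc, Fin.sum_univ_add]
      simp [ω]
    rw [hb]
    calc ∑ i : Fin n, w (Fin.castAdd k i) ^ 2 ≤ ∑ i : Fin n, (ε * δ) ^ 2 := by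
          apply Finset.sum_le_sum
          intro i _
          refine (hwa _).trans ?_
          simp [a]
      _ = n * ε ^ 2 * δ ^ 2 := by simp; ring
      _ ≤ (n + k) * ε ^ 2 * δ ^ 2 := by gcongr; simp
      _ < 1 * δ ^ 2 := by gcongr
      _ = δ ^ 2 := one_mul _
  · funext i
    simp [P, ω]

/-- The isometric splitting `ℝ^{n+k} = ℝ^n × ℝ^k`. -/
def blk (n k : ℕ) : Rd (n + k) ≃ₗᵢ[ℝ] WithLp 2 (Rd n × Rd k) :=
  (LinearIsometryEquiv.piLpCongrLeft 2 ℝ ℝ finSumFinEquiv.symm).trans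
    (PiLp.sumPiLpEquivProdLpPiLp 2 _)

lemma blk_fst (n k : ℕ) (x : Rd (n + k)) (i : Fin n) : (blk n k x).fst i = x (Fin.castAdd k i) := by
  rfl

lemma blk_snd (n k : ℕ) (x : Rd (n + k)) (i : Fin k) : (blk n k x).snd i = x (Fin.natAdd n i) := by
  rfl

lemma blockSq_eq (n k : ℕ) (x : Rd (n + k)) : blockSq (n + k) k x = ‖(blk n k x).fst‖ ^ 2 := by
  rw [EuclideanSpace.real_norm_sq_eq]
  unfold blockSq
  rw [Fin.sum_univ_add]
  simp [blk_fst]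

lemma norm_sq_blk (n k : ℕ) (x : Rd (n + k)) : ‖x‖ ^ 2 = ‖(blk n k x).fst‖ ^ 2 + ‖(blk n k x).snd‖ ^ 2 := by
  rw [← WithLp.prod_norm_sq_eq_of_L2, LinearIsometryEquiv.norm_map]

lemma inner_blk (n k : ℕ) (x y : Rd (n + k)) : 
    ⟪x, y⟫ = ⟪(blk n k x).fst, (blk n k y).fst⟫ + ⟪(blk n k x).snd, (blk n k y).snd⟫ := by
  rw [← LinearIsometryEquiv.inner_map_map (blk n k) x y, WithLp.prod_inner_apply]
  rfl

lemma blk_fst_cont (n k : ℕ) : Continuous fun x : Rd (n + k) => (blk n k x).fst :=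
  continuous_fst.comp ((WithLp.prod_continuous_ofLp 2 _ _).comp (blk n k).continuous)

lemma blk_snd_cont (n k : ℕ) : Continuous fun x : Rd (n + k) => (blk n k x).snd :=
  continuous_snd.comp ((WithLp.prod_continuous_ofLp 2 _ _).comp (blk n k).continuous)

/-- The set of points whose blocks have norm at most `a`, resp. within `1/4` of `R`. -/
def Eset (n k : ℕ) (a R : ℝ) : Set (Rd (n + k)) :=
  {x | ‖(blk n k x).fst‖ ≤ a ∧ |‖(blk n k x).snd‖ - R| ≤ 1 / 4}

lemma Eset_meas (n k : ℕ) (a R : ℝ) : MeasurableSet (Eset n k a R) := by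
  apply IsClosed.measurableSet
  apply IsClosed.inter
  · exact isClosed_le (blk_fst_cont n k).norm continuous_const
  · exact isClosed_le ((blk_snd_cont n k).norm.sub continuous_const).abs continuous_const

lemma annulus_vol (k : ℕ) (hk : 1 ≤ k) (R : ℝ) (hR : 1 ≤ R) :
    ENNReal.ofReal ((1 / 2) * R ^ (k - 1)) * volume (Metric.ball (0 : Rd k) 1)
      ≤ volume {z : Rd k | |‖z‖ - R| ≤ 1 / 4} := by
  have : Nonempty (Fin k) := ⟨⟨0, hk⟩⟩
  have hsub : Metric.ball (0 : Rd k) (R + 1 / 4) \ Metric.ball (0 : Rd k) (R - 1 / 4) ⊆ {z : Rd k | |‖z‖ - R| ≤ 1 / 4} := by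
    rintro z ⟨h1, h2⟩
    simp only [mem_ball_zero_iff, not_lt] at h1 h2
    simp only [Set.mem_ofPred_eq, abs_le]
    constructor <;> linarith
  refine le_trans ?_ (measure_mono hsub)
  rw [measure_sdiff (Metric.ball_subset_ball (by linarith)) measurableSet_ball.nullMeasurableSet (by finiteness)]
  rw [Measure.addHaar_ball _ _ (by linarith : (0:ℝ) ≤ R + 1 / 4), Measure.addHaar_ball _ _ (by linarith : (0:ℝ) ≤ R - 1 / 4)]
  rw [← ENNReal.sub_mul (by intros; finiteness), finrank_euclideanSpace, Fintype.card_fin, 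
    ← ENNReal.ofReal_sub _ (by apply pow_nonneg; linarith)]
  gcongr
  obtain ⟨m, rfl⟩ : ∃ m, k = m + 1 := ⟨k - 1, by omega⟩
  simp only [Nat.add_sub_cancel]
  have h1 : (R - 1 / 4) ^ m ≤ R ^ m := by
    apply pow_le_pow_left₀ <;> linarith
  have h2 : R ^ m ≤ (R + 1 / 4) ^ m := by
    apply pow_le_pow_left₀ <;> linarith
  rw [pow_succ, pow_succ]
  nlinarith

lemma Eset_vol (n k : ℕ) (hk : 1 ≤ k) : ∃ c : ℝ, 0 < c ∧ ∀ a R : ℝ, 0 < a → 1 ≤ R → 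
    ENNReal.ofReal (c * a ^ n * R ^ (k - 1)) ≤ volume (Eset n k a R) := by
  set v1 := volume (Metric.ball (0 : Rd n) 1) with hv1
  set v2 := volume (Metric.ball (0 : Rd k) 1) with hv2
  have p1 : 0 < v1.toReal := ENNReal.toReal_pos (Metric.measure_ball_pos _ _ one_pos).ne' measure_ball_lt_top.ne
  have p2 : 0 < v2.toReal := ENNReal.toReal_pos (Metric.measure_ball_pos _ _ one_pos).ne' measure_ball_lt_top.ne
  refine ⟨v1.toReal * (1 / 2) * v2.toReal, by positivity, ?_⟩
  intro a R ha hR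
  have hpres : MeasurePreserving (fun x : Rd (n + k) => WithLp.ofLp (blk n k x)) volume volume :=
    (WithLp.volume_preserving_ofLp (U := Rd n) (V := Rd k)).comp (blk n k).measurePreserving
  have hE : Eset n k a R = (fun x : Rd (n + k) => WithLp.ofLp (blk n k x)) ⁻¹' 
      (Metric.closedBall (0 : Rd n) a ×ˢ {z : Rd k | |‖z‖ - R| ≤ 1 / 4}) := by
    ext x
    simp [Eset]
  have hm : MeasurableSet {z : Rd k | |‖z‖ - R| ≤ 1 / 4} := 
    (isClosed_le (by fun_prop) continuous_const).measurableSet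
  rw [hE, hpres.measure_preimage (measurableSet_closedBall.prod hm).nullMeasurableSet, Measure.volume_eq_prod, Measure.prod_prod]
  have e1 : ENNReal.ofReal (v1.toReal * (1 / 2) * v2.toReal * a ^ n * R ^ (k - 1)) 
      = (ENNReal.ofReal (a ^ n) * v1) * (ENNReal.ofReal ((1 / 2) * R ^ (k - 1)) * v2) := by
    rw [← ENNReal.ofReal_toReal (a := v1) measure_ball_lt_top.ne, ← ENNReal.ofReal_toReal (a := v2) measure_ball_lt_top.ne,
      ← ENNReal.ofReal_mul (by positivity), ← ENNReal.ofReal_mul (by positivity), ← ENNReal.ofReal_mul (by positivity)]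
    congr 1
    rw [ENNReal.toReal_ofReal p1.le, ENNReal.toReal_ofReal p2.le]
    ring
  rw [e1]
  gcongr
  · rw [Measure.addHaar_closedBall _ _ ha.le, finrank_euclideanSpace, Fintype.card_fin]
  · exact annulus_vol k hk R hR

lemma cap_eq (n k : ℕ) (δ : ℝ) : sphCap (n + k) k δ = {ω : Rd (n + k) | ‖ω‖ = 1} ∩
    {ω | ‖(blk n k ω).fst‖ ^ 2 < δ ^ 2} := by
  ext ω
  simp [sphCap, blockSq_eq]

lemma cap_meas (n k : ℕ) (δ : ℝ) : MeasurableSet (sphCap (n + k) k δ) := by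
  rw [cap_eq]
  refine MeasurableSet.inter (isClosed_eq continuous_norm continuous_const).measurableSet
    (isOpen_lt ((blk_fst_cont n k).norm.pow 2) continuous_const).measurableSet

lemma cap_finite (n k : ℕ) (δ : ℝ) : μH[((n + k : ℕ) : ℝ)] (sphCap (n + (k + 1)) (k + 1) δ) < ⊤ := by
  refine lt_of_le_of_lt (measure_mono ?_) (sphere_finite (n + k))
  intro ω hω
  exact hω.1

lemma cap_rot (n k : ℕ) (δ s : ℝ) (y : Rd n) {z z' : Rd k} (h : ‖z‖ = ‖z'‖) :
    ∫ ω in sphCap (n + k) k δ, cos (⟪y, (blk n k ω).fst⟫ + ⟪z, (blk n k ω).snd⟫) ∂μH[s] =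
    ∫ ω in sphCap (n + k) k δ, cos (⟪y, (blk n k ω).fst⟫ + ⟪z', (blk n k ω).snd⟫) ∂μH[s] := by
  let L : Rd k ≃ₗᵢ[ℝ] Rd k := (ℝ ∙ (z - z'))ᗮ.reflection
  have hL : L z = z' := Submodule.reflection_sub h
  let U : Rd (n + k) ≃ₗᵢ[ℝ] Rd (n + k) := 
    ((blk n k).trans (LinearIsometryEquiv.withLpProdCongr 2 (LinearIsometryEquiv.refl ℝ (Rd n)) L)).trans (blk n k).symm
  have hU1 : ∀ ω, (blk n k (U ω)).fst = (blk n k ω).fst := fun ω => by simp [U]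
  have hU2 : ∀ ω, (blk n k (U ω)).snd = L (blk n k ω).snd := fun ω => by simp [U]
  have hpre : U ⁻¹' (sphCap (n + k) k δ) = sphCap (n + k) k δ := by
    ext ω
    simp [cap_eq, hU1]
  have hmp := (U.toIsometryEquiv.measurePreserving_hausdorffMeasure s).restrict_preimage (cap_meas n k δ)
  have hpre' : (U.toIsometryEquiv) ⁻¹' (sphCap (n + k) k δ) = sphCap (n + k) k δ := hpre
  rw [hpre'] at hmp
  have := hmp.integral_comp U.toHomeomorph.measurableEmbedding (fun ω => cos (⟪y, (blk n k ω).fst⟫ + ⟪z', (blk n k ω).snd⟫))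
  rw [← this]
  congr 1
  funext ω
  have e : (U.toIsometryEquiv ω) = U ω := rfl
  rw [e, hU1, hU2, ← hL, LinearIsometryEquiv.inner_map_map]

lemma cap_avg (n k : ℕ) (δ : ℝ) {ν : Measure (Rd (k + 1))} [IsProbabilityMeasure ν]
    (h1 : ∀ᵐ θ ∂ν, ‖θ‖ = 1)
    (hL : ∀ L : Rd (k + 1) ≃ₗᵢ[ℝ] Rd (k + 1), ν.map L = ν) (y : Rd n) (z : Rd (k + 1)) :
    ∫ ω in sphCap (n + (k + 1)) (k + 1) δ, cos (⟪y, (blk n (k + 1) ω).fst⟫ + ⟪z, (blk n (k + 1) ω).snd⟫)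
      ∂μH[((n + k : ℕ) : ℝ)] =
    ∫ ω in sphCap (n + (k + 1)) (k + 1) δ, cos ⟪y, (blk n (k + 1) ω).fst⟫ * 
      ∫ θ, cos ⟪θ, ‖z‖ • (blk n (k + 1) ω).snd⟫ ∂ν ∂μH[((n + k : ℕ) : ℝ)] := by
  set μ := (μH[((n + k : ℕ) : ℝ)] : Measure (Rd (n + (k + 1)))).restrict (sphCap (n + (k + 1)) (k + 1) δ) with hμ
  have hfin : IsFiniteMeasure μ := ⟨by simpa [hμ] using cap_finite n k δ⟩
  have hc1 := blk_fst_cont n (k + 1)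
  have hc2 := blk_snd_cont n (k + 1)
  have s1 : ∫ ω, cos (⟪y, (blk n (k + 1) ω).fst⟫ + ⟪z, (blk n (k + 1) ω).snd⟫) ∂μ =
      ∫ θ, ∫ ω, cos (⟪y, (blk n (k + 1) ω).fst⟫ + ⟪‖z‖ • θ, (blk n (k + 1) ω).snd⟫) ∂μ ∂ν := by
    have : ∀ᵐ θ ∂ν, ∫ ω, cos (⟪y, (blk n (k + 1) ω).fst⟫ + ⟪‖z‖ • θ, (blk n (k + 1) ω).snd⟫) ∂μ =
        ∫ ω, cos (⟪y, (blk n (k + 1) ω).fst⟫ + ⟪z, (blk n (k + 1) ω).snd⟫) ∂μ := by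
      filter_upwards [h1] with θ hθ
      exact cap_rot n (k + 1) δ _ y (by simp [norm_smul, hθ])
    rw [integral_congr_ae this]
    simp
  have hcont : Continuous fun p : Rd (k + 1) × Rd (n + (k + 1)) => 
      cos (⟪y, (blk n (k + 1) p.2).fst⟫ + ⟪‖z‖ • p.1, (blk n (k + 1) p.2).snd⟫) := by
    apply Real.continuous_cos.comp
    apply Continuous.add
    · exact continuous_const.inner (hc1.comp continuous_snd)
    · have h3 : Continuous fun p : Rd (k + 1) × Rd (n + (k + 1)) => ‖z‖ • p.1 := by fun_prop
      exact h3.inner (hc2.comp continuous_snd)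
  rw [s1, integral_integral_swap]
  · congr 1
    funext ω
    have e : ∀ θ, cos (⟪y, (blk n (k + 1) ω).fst⟫ + ⟪‖z‖ • θ, (blk n (k + 1) ω).snd⟫) =
        cos ⟪y, (blk n (k + 1) ω).fst⟫ * cos ⟪θ, ‖z‖ • (blk n (k + 1) ω).snd⟫ - 
        sin ⟪y, (blk n (k + 1) ω).fst⟫ * sin ⟪θ, ‖z‖ • (blk n (k + 1) ω).snd⟫ := by
      intro θ
      rw [Real.cos_add, real_inner_smul_left, real_inner_smul_right]
    simp only [e]
    have hs : ∫ θ, sin ⟪θ, ‖z‖ • (blk n (k + 1) ω).snd⟫ ∂ν = 0 := by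
      have h2 := hL (LinearIsometryEquiv.neg ℝ)
      have h3 : ∫ θ, sin ⟪θ, ‖z‖ • (blk n (k + 1) ω).snd⟫ ∂ν = 
          - ∫ θ, sin ⟪θ, ‖z‖ • (blk n (k + 1) ω).snd⟫ ∂ν := by
        conv_lhs => rw [← h2]
        rw [integral_map (LinearIsometryEquiv.continuous _).measurable.aemeasurable 
          (by fun_prop)]
        simp [integral_neg]
      linarith
    rw [integral_sub, integral_const_mul, integral_const_mul, hs, mul_zero, sub_zero]
    · apply Integrable.const_mul
      exact Integrable.of_bound (by fun_prop) 1 (Eventually.of_forall fun _ => abs_cos_le_one _)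
    · apply Integrable.const_mul
      exact Integrable.of_bound (by fun_prop) 1 (Eventually.of_forall fun _ => abs_sin_le_one _)
  · exact Integrable.of_bound hcont.aestronglyMeasurable 1 (Eventually.of_forall fun _ => abs_cos_le_one _)

/-- Lower bound for the extension operator, given a pointwise lower bound of the averaged phase. -/
lemma cap_main (n k : ℕ) (δ : ℝ) (hδ : 0 < δ) {ν : Measure (Rd (k + 1))} [IsProbabilityMeasure ν]
    (h1 : ∀ᵐ θ ∂ν, ‖θ‖ = 1)
    (hL : ∀ L : Rd (k + 1) ≃ₗᵢ[ℝ] Rd (k + 1), ν.map L = ν) (x : Rd (n + (k + 1))) (r B : ℝ)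
    (hB : 0 ≤ B) (hr : |r| ≤ 3 / 2) (hx : ‖(blk n (k + 1) x).fst‖ ≤ 1 / (2 * δ))
    (hz : ∀ w : Rd (k + 1), √(1 - δ ^ 2) ≤ ‖w‖ → ‖w‖ ≤ 1 → 
      B ≤ ∫ θ, cos ⟪θ, ‖r • (blk n (k + 1) x).snd‖ • w⟫ ∂ν) :
    B / 2 * (μH[((n + k : ℕ) : ℝ)] (sphCap (n + (k + 1)) (k + 1) δ)).toReal ≤
      (∫ ω in sphCap (n + (k + 1)) (k + 1) δ,
        Complex.exp (Complex.I * ((r * ⟪x, ω⟫ : ℝ) : ℂ)) ∂ μH[((n + k : ℕ) : ℝ)]).re := by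
  set S := sphCap (n + (k + 1)) (k + 1) δ with hS
  set μ := (μH[((n + k : ℕ) : ℝ)] : Measure (Rd (n + (k + 1)))).restrict S with hμ
  have hfin : IsFiniteMeasure μ := ⟨by simpa [hμ] using cap_finite n k δ⟩
  have hre : (∫ ω, Complex.exp (Complex.I * ((r * ⟪x, ω⟫ : ℝ) : ℂ)) ∂μ).re = 
      ∫ ω, cos (⟪r • (blk n (k + 1) x).fst, (blk n (k + 1) ω).fst⟫ + 
        ⟪r • (blk n (k + 1) x).snd, (blk n (k + 1) ω).snd⟫) ∂μ := by
    have hi : Integrable (fun ω : Rd (n + (k + 1)) => Complex.exp (Complex.I * ((r * ⟪x, ω⟫ : ℝ) : ℂ))) μ := by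
      refine Integrable.of_bound (by fun_prop) 1 (Eventually.of_forall fun ω => ?_)
      rw [mul_comm, Complex.norm_exp_ofReal_mul_I]
    have := integral_re hi
    simp only [RCLike.re_to_complex] at this
    rw [← this]
    congr 1
    funext ω
    rw [mul_comm, Complex.exp_ofReal_mul_I_re, inner_blk n (k + 1) x ω, real_inner_smul_left, real_inner_smul_left, mul_add]
  rw [hre, cap_avg n k δ h1 hL]
  have hc1 := blk_fst_cont n (k + 1)
  have hc2 := blk_snd_cont n (k + 1)
  have hconst : B / 2 * (μH[((n + k : ℕ) : ℝ)] S).toReal = ∫ ω in S, B / 2 ∂μH[((n + k : ℕ) : ℝ)] := by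
    rw [setIntegral_const, smul_eq_mul, mul_comm, Measure.real]
  rw [hconst]
  refine setIntegral_mono_on (integrable_const _) ?_ (cap_meas n (k + 1) δ) ?_
  · refine Integrable.of_bound (C := 1) ?_ (Eventually.of_forall fun ω => ?_)
    · apply AEStronglyMeasurable.mul
      · exact (Real.continuous_cos.comp (continuous_const.inner hc1)).aestronglyMeasurable
      · have : Continuous fun p : Rd (n + (k + 1)) × Rd (k + 1) => 
            cos ⟪p.2, ‖r • (blk n (k + 1) x).snd‖ • (blk n (k + 1) p.1).snd⟫ := by
          apply Real.continuous_cos.comp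
          have h3 : Continuous fun p : Rd (n + (k + 1)) × Rd (k + 1) =>
              ‖r • (blk n (k + 1) x).snd‖ • (blk n (k + 1) p.1).snd :=
            (continuous_const_smul (‖r • (blk n (k + 1) x).snd‖ : ℝ)).comp (hc2.comp continuous_fst)
          exact continuous_snd.inner h3
        exact (this.stronglyMeasurable.integral_prod_right' (ν := ν)).aestronglyMeasurable
    · rw [norm_mul]
      refine mul_le_one₀ (abs_cos_le_one _) (norm_nonneg _) ?_
      have := norm_integral_le_of_norm_le_const (μ := ν) (C := 1) (f := fun θ => cos ⟪θ, ‖r • (blk n (k + 1) x).snd‖ • (blk n (k + 1) ω).snd⟫)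
        (Eventually.of_forall fun _ => abs_cos_le_one _)
      simpa using this
  · intro ω hω
    rw [hS, cap_eq] at hω
    have hω1 : ‖ω‖ = 1 := hω.1
    have hω2 : ‖(blk n (k + 1) ω).fst‖ ^ 2 < δ ^ 2 := hω.2
    have hn := norm_sq_blk n (k + 1) ω
    rw [hω1] at hn
    have hB1 := hz (blk n (k + 1) ω).snd (by
      rw [Real.sqrt_le_left (norm_nonneg _)]
      linarith) (by
      apply le_of_sq_le_sq _ zero_le_one
      nlinarith [sq_nonneg ‖(blk n (k + 1) ω).fst‖])
    have hω3 : ‖(blk n (k + 1) ω).fst‖ ≤ δ := le_of_sq_le_sq hω2.le hδ.le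
    have hcos : 1 / 2 ≤ cos ⟪r • (blk n (k + 1) x).fst, (blk n (k + 1) ω).fst⟫ := by
      have b1 : |⟪r • (blk n (k + 1) x).fst, (blk n (k + 1) ω).fst⟫| ≤ 3 / 4 := by
        refine (abs_real_inner_le_norm _ _).trans ?_
        rw [norm_smul, Real.norm_eq_abs]
        calc |r| * ‖(blk n (k + 1) x).fst‖ * ‖(blk n (k + 1) ω).fst‖ ≤ 3 / 2 * (1 / (2 * δ)) * δ := by gcongr
          _ = 3 / 4 := by field_simp; norm_num
      have b2 := Real.one_sub_sq_div_two_le_cos (x := ⟪r • (blk n (k + 1) x).fst, (blk n (k + 1) ω).fst⟫)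
      have b3 : ⟪r • (blk n (k + 1) x).fst, (blk n (k + 1) ω).fst⟫ ^ 2 ≤ (3 / 4) ^ 2 := by
        rw [← sq_abs]
        gcongr
      linarith
    calc B / 2 = 1 / 2 * B := by ring
      _ ≤ _ := by gcongr

/-- Lower bound of the averaged phase on the range of frequencies occurring on the cap. -/
lemma phase_lower {k : ℕ} {δ m A C R₀ r : ℝ} {j : ℕ} {ν : Measure (Rd (k + 1))} {v : Rd (k + 1)}
    (hδ0 : 0 < δ) (hδ1 : δ < 1 / 2) (hC0 : 0 < C + 1) (hA : 0 < A)
    (hj1 : (1 : ℝ) ≤ j) (hj2 : (j : ℝ) * (δ ^ 2 + m) * (C + 1) ≤ 1 / 4) (hR₀ : 1 ≤ R₀)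
    (hρ : 2 * π * j + R₀ ≤ C * j) (hr : |r - 1| ≤ m) (hr0 : 0 < r)
    (hx2 : |‖v‖ - (2 * π * j + R₀)| ≤ 1 / 4) (hZ1 : ‖v‖ ≤ (C + 1) * j)
    (hbes : ∀ (j : ℕ) (w : Rd (k + 1)), |‖w‖ - (2 * π * j + R₀)| ≤ 1 / 2 →
      A ≤ ‖w‖ ^ ((k : ℝ) / 2) * ∫ θ, cos ⟪θ, w⟫ ∂ν) :
    ∀ w : Rd (k + 1), √(1 - δ ^ 2) ≤ ‖w‖ → ‖w‖ ≤ 1 →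
      A * (C + 1) ^ (-((k : ℝ) / 2)) * (j : ℝ) ^ (-((k : ℝ) / 2)) ≤
        ∫ θ, cos ⟪θ, ‖r • v‖ • w⟫ ∂ν := by
  have hZ0 : 0 ≤ ‖v‖ := norm_nonneg _
  intro w hw1 hw2
  have hnorm : ‖‖r • v‖ • w‖ = r * ‖w‖ * ‖v‖ := by
    rw [norm_smul, norm_norm, norm_smul, Real.norm_eq_abs, abs_of_pos hr0]; ring
  have hw3 : 1 - δ ^ 2 ≤ ‖w‖ := by
    refine le_trans ?_ hw1
    apply Real.le_sqrt_of_sq_le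
    have hδ2 : δ ^ 2 ≤ 1 := by nlinarith
    nlinarith [mul_nonneg (sq_nonneg δ) (sub_nonneg.2 hδ2)]
  have hrw : |r * ‖w‖ - 1| ≤ δ ^ 2 + m := by
    have hw0 := norm_nonneg w
    have t0 : r * ‖w‖ - 1 = (r - 1) * ‖w‖ + (‖w‖ - 1) := by ring
    have t1 : |(r - 1) * ‖w‖| ≤ m := by
      rw [abs_mul, abs_norm]
      calc |r - 1| * ‖w‖ ≤ m * 1 := by gcongr; exact (abs_nonneg _).trans hr
        _ = m := mul_one m
    have t2 : |‖w‖ - 1| ≤ δ ^ 2 := by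
      rw [abs_le]; constructor
      · linarith
      · linarith [sq_nonneg δ]
    rw [t0]
    refine (abs_add_le _ _).trans ?_
    linarith
  have hdiff : |r * ‖w‖ * ‖v‖ - (2 * π * j + R₀)| ≤ 1 / 2 := by
    have t1 : r * ‖w‖ * ‖v‖ - (2 * π * j + R₀) = (r * ‖w‖ - 1) * ‖v‖ + (‖v‖ - (2 * π * j + R₀)) := by ring
    rw [t1]
    refine (abs_add_le _ _).trans ?_
    have t2 : |(r * ‖w‖ - 1) * ‖v‖| ≤ 1 / 4 := by
      rw [abs_mul, abs_of_nonneg hZ0]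
      calc |r * ‖w‖ - 1| * ‖v‖ ≤ (δ ^ 2 + m) * ((C + 1) * j) := by gcongr; exact (abs_nonneg _).trans hrw
        _ ≤ 1 / 4 := by linarith
    linarith
  have hb := hbes j (‖r • v‖ • w) (by rw [hnorm]; exact hdiff)
  rw [hnorm] at hb
  set s := r * ‖w‖ * ‖v‖ with hs
  have hd' := abs_le.1 hdiff
  have hs0 : 0 < s := by
    have : 0 ≤ 2 * π * j := by positivity
    linarith [hd'.1]
  have hs1 : s ≤ (C + 1) * j := by linarith [hd'.2]
  rw [mul_assoc, ← Real.mul_rpow hC0.le (by linarith), Real.rpow_neg (by positivity), ← div_eq_mul_inv,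
    div_le_iff₀ (by positivity)]
  have hI : 0 ≤ ∫ θ, cos ⟪θ, ‖r • v‖ • w⟫ ∂ν := by
    by_contra hneg
    have : 0 < s ^ ((k : ℝ) / 2) := by positivity
    nlinarith
  refine hb.trans ?_
  rw [mul_comm]
  gcongr


/-- Proposition 2.4: pointwise lower bounds for the extension operator
applied to `1_{C^k_δ}` on large disjoint sets `E_j`.  The surface measure on `S^{d-1}` is
realised as the `(d-1)`-dimensional Hausdorff measure. -/
theorem stmt7 (d k : ℕ) (hd : 2 ≤ d) (hk1 : 1 ≤ k) (hkd : k ≤ d - 1) :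
    ∃ c₀ c₁ c₂ : ℝ, 0 < c₀ ∧ 0 < c₁ ∧ 0 < c₂ ∧
      ∀ m δ : ℝ, m ∈ Set.Ioo (0:ℝ) (1/2) → δ ∈ Set.Ioo (0:ℝ) (1/2) →
        ∃ E : ℕ → Set (Rd d),
          (∀ j ∈ Finset.Icc 1 ⌊c₀ / (δ ^ 2 + m)⌋₊, MeasurableSet (E j)) ∧
          ((Finset.Icc 1 ⌊c₀ / (δ ^ 2 + m)⌋₊ : Set ℕ).PairwiseDisjoint E) ∧
          (∀ j ∈ Finset.Icc 1 ⌊c₀ / (δ ^ 2 + m)⌋₊,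
            ENNReal.ofReal (c₁ * δ ^ ((k : ℝ) - (d : ℝ)) * (j : ℝ) ^ ((k : ℝ) - 1))
              ≤ volume (E j)) ∧
          (∀ j ∈ Finset.Icc 1 ⌊c₀ / (δ ^ 2 + m)⌋₊, ∀ r : ℝ, |r - 1| ≤ m → ∀ x ∈ E j,
            c₂ * δ ^ ((d : ℝ) - (k : ℝ)) * (j : ℝ) ^ ((1 - (k : ℝ)) / 2)
              ≤ (∫ ω in sphCap d k δ,
                  Complex.exp (Complex.I * ((r * ⟪x, ω⟫ : ℝ) : ℂ))
                    ∂ μH[(d : ℝ) - 1]).re) := by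
  obtain ⟨n, rfl⟩ : ∃ n, d = n + k := ⟨d - k, by omega⟩
  obtain ⟨k, rfl⟩ : ∃ k', k = k' + 1 := ⟨k - 1, by omega⟩
  obtain ⟨ν, hν, hν1, hνL⟩ := exists_sphere_measure (k + 1) hk1
  obtain ⟨A, R₀, hA, hR₀, hbes⟩ := bessel_lower k hν1 hνL
  obtain ⟨cc, hcc, hcap⟩ := cap_lower n k
  obtain ⟨cv, hcv, hvol⟩ := Eset_vol n (k + 1) hk1
  set C : ℝ := 2 * π + R₀ with hC
  have hπ := Real.pi_gt_three
  have hC0 : 0 < C + 1 := by linarith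
  refine ⟨1 / (4 * (C + 1)), cv / 2 ^ n, A * (C + 1) ^ (-((k : ℝ) / 2)) / 2 * cc, by positivity,
    by positivity, by positivity, ?_⟩
  intro m δ hm hδ
  have hm0 := hm.1
  have hm1 := hm.2
  have hδ0 := hδ.1
  have hδ1 := hδ.2
  have hden : 0 < δ ^ 2 + m := by positivity
  have hjprop : ∀ j ∈ Finset.Icc 1 ⌊1 / (4 * (C + 1)) / (δ ^ 2 + m)⌋₊,
      (1 : ℝ) ≤ j ∧ (j : ℝ) * (δ ^ 2 + m) * (C + 1) ≤ 1 / 4 := by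
    intro j hj
    rw [Finset.mem_Icc] at hj
    refine ⟨by exact_mod_cast hj.1, ?_⟩
    have h2 := (Nat.le_floor_iff (by positivity)).1 hj.2
    rw [le_div_iff₀ hden, le_div_iff₀ (by positivity)] at h2
    linarith
  refine ⟨fun j => Eset n (k + 1) (1 / (2 * δ)) (2 * π * j + R₀), ?_, ?_, ?_, ?_⟩
  · intro j _
    exact Eset_meas _ _ _ _
  · intro i _ j _ hij
    rw [Function.onFun, Set.disjoint_left]
    rintro x ⟨_, hx1⟩ ⟨_, hx2⟩
    apply hij
    rw [abs_le] at hx1 hx2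
    by_contra hne
    rcases Nat.lt_or_gt_of_ne hne with h | h
    · have : (i : ℝ) + 1 ≤ j := by exact_mod_cast h
      nlinarith
    · have : (j : ℝ) + 1 ≤ i := by exact_mod_cast h
      nlinarith
  · intro j hj
    obtain ⟨hj1, _⟩ := hjprop j hj
    refine le_trans (ENNReal.ofReal_le_ofReal ?_) (hvol (1 / (2 * δ)) (2 * π * j + R₀) (by positivity)
      (by have : 0 ≤ 2 * π * j := by positivity
          linarith))
    have e1 : (((k + 1 : ℕ) : ℝ) - ((n + (k + 1) : ℕ) : ℝ)) = -(n : ℝ) := by push_cast; ring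
    have e2 : (((k + 1 : ℕ) : ℝ) - 1) = (k : ℝ) := by push_cast; ring
    rw [e1, e2, Real.rpow_neg hδ0.le, Real.rpow_natCast, Real.rpow_natCast, Nat.add_sub_cancel]
    have e3 : cv / 2 ^ n * (δ ^ n)⁻¹ = cv * (1 / (2 * δ)) ^ n := by
      rw [div_pow, mul_pow]; field_simp; simp
    rw [e3]
    gcongr
    nlinarith
  · intro j hj r hr x hx
    obtain ⟨hj1, hj2⟩ := hjprop j hj
    obtain ⟨hx1, hx2⟩ := hx
    have hr' := abs_le.1 hr
    have hr0 : 0 < r := by linarith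
    have e0 : ((n + (k + 1) : ℕ) : ℝ) - 1 = ((n + k : ℕ) : ℝ) := by push_cast; ring
    have e1 : ((n + (k + 1) : ℕ) : ℝ) - ((k + 1 : ℕ) : ℝ) = (n : ℝ) := by push_cast; ring
    have e2 : (1 - ((k + 1 : ℕ) : ℝ)) / 2 = -((k : ℝ) / 2) := by push_cast; ring
    rw [e0, e1, e2, Real.rpow_natCast]
    set Z := ‖(blk n (k + 1) x).snd‖ with hZ
    have hρ : 2 * π * j + R₀ ≤ C * j := by rw [hC]; nlinarith
    have hx2' := abs_le.1 hx2
    have hZ1 : Z ≤ (C + 1) * j := by linarith [hx2'.2]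
    have hZ0 : 0 ≤ Z := norm_nonneg _
    have key := cap_main n k δ hδ0 hν1 hνL x r (A * (C + 1) ^ (-((k : ℝ) / 2)) * (j : ℝ) ^ (-((k : ℝ) / 2)))
      (by positivity) (by rw [abs_of_pos hr0]; linarith) hx1
      (phase_lower hδ0 hδ1 hC0 hA hj1 hj2 hR₀ hρ hr hr0 hx2 hZ1 hbes)
    refine le_trans ?_ key
    have hm' : cc * δ ^ n ≤ (μH[((n + k : ℕ) : ℝ)] (sphCap (n + (k + 1)) (k + 1) δ)).toReal :=
      (ENNReal.ofReal_le_iff_le_toReal (cap_finite n k δ).ne).1 (hcap δ hδ)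
    calc A * (C + 1) ^ (-((k : ℝ) / 2)) / 2 * cc * δ ^ n * (j : ℝ) ^ (-((k : ℝ) / 2))
        = A * (C + 1) ^ (-((k : ℝ) / 2)) * (j : ℝ) ^ (-((k : ℝ) / 2)) / 2 * (cc * δ ^ n) := by ring
      _ ≤ _ := by gcongr
end
end
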